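/- Let f ∈ ℤ[X] be a monic cubic polynomial and let R = ℤ[X]/(f). Let m be the number of irreducible factors of f in ℤ[X], counted with multiplicity. Then the Dirichlet series Z(s) = Σ_{k≥1} a_R(k) k^{−s} converges for Re(s) > 1, and there exist δ > 0 and a function g holomorphic on {s ∈ ℂ : Re(s) > 1 − δ} with g(1) ≠ 0 such that Z(s) = g(s)·(s−1)^{−m} for all s with Re(s) > 1. -/

import Mathlib

/-- `idealCount R k` is the number of ideals `I` of `R` such that `R ⧸ I` is finite
with exactly `k` elements. -/
noncomputable def idealCount (R : Type) [CommRing R] (k : ℕ) : ℕ :=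
  Set.ncard {I : Ideal R | Nat.card (R ⧸ I) = k}

/-!
Let `N` be the index of `ℤ[X] / (f)` in the overring `O` that is the product, over the prime powers
`g ^ e` exactly dividing `f`, of the ring of integers of `ℚ[X] / (g)` when `e = 1` and of
`ℤ[X] / (X - a) ^ e` when `g = X - a`. Ideals of index prime to `N` correspond in the two rings,
with equal indices, while ideals whose index is composed of primes dividing `N` contribute a factor
that converges, without a zero at `1`, in a larger half-plane. So the order of the pole at `1` can
be computed in `O`, and pole orders add up over the factors of a product.

The ring `ℤ[X] / (X - a) ^ e` is an `e`-fold extension of `ℤ`. An ideal of such a ring is described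
by the generator `n` of its image in `ℤ`, an ideal `J` of the smaller ring and one of finitely many
lifts of `n`, and summing over `n` multiplies the series for `J` by one of the form
`∑ q, q ^ a * q ^ (-(a + 1) * s)`, which has a simple pole at `1`.

For a ring of integers the zeta function continues to the left of `Re s = 1` because the ideals in
a class are counted with a power saving: a partition of unity under the units replaces a
fundamental domain in Minkowski space by a Lipschitz weight, its sums over a lattice are compared
with integrals, and the Mellin transform turns the error term into a continuation.
-/

namespace IdealZeta

/-! ### Riemann sums of Lipschitz functions over a lattice -/

section RiemannSum

open MeasureTheory Module Metric ZSpan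
open scoped Pointwise NNReal

theorem abs_setIntegral_sub_measureReal_mul_le {α : Type*} [MeasurableSpace α] {μ : Measure α}
    {s : Set α} (hμs : μ s ≠ ⊤) {f : α → ℝ} (hf : IntegrableOn f s μ) {a ε : ℝ}
    (hfa : ∀ x ∈ s, |f x - a| ≤ ε) : |∫ x in s, f x ∂μ - μ.real s * a| ≤ ε * μ.real s := by
  have hconst : μ.real s * a = ∫ _ in s, a ∂μ := by rw [setIntegral_const, smul_eq_mul]
  rw [hconst, ← integral_sub hf (integrableOn_const hμs)]
  simpa only [Real.norm_eq_abs] using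
    norm_setIntegral_le_of_norm_le_const (f := fun x => f x - a) hμs.lt_top hfa

variable {E : Type*} [NormedAddCommGroup E] [NormedSpace ℝ E] [MeasurableSpace E] [BorelSpace E]
  {ι : Type*} (b : Basis ι ℝ E) (μ : Measure E) [μ.IsAddHaarMeasure]

theorem vaddInvariantMeasure_span : VAddInvariantMeasure (Submodule.span ℤ (Set.range b)) E μ :=
  ⟨fun l s _ => measure_preimage_add μ (l : E) s⟩

variable [FiniteDimensional ℝ E] [Finite ι]

theorem card_mul_measureReal_fundamentalDomain_le
    (T : Finset (Submodule.span ℤ (Set.range b))) {r D : ℝ} (hT : ∀ l ∈ T, ‖(l : E)‖ ≤ r)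
    (hD : ∀ x ∈ fundamentalDomain b, ‖x‖ ≤ D) :
    T.card * μ.real (fundamentalDomain b) ≤ μ.real (closedBall 0 (r + D)) := by
  have := vaddInvariantMeasure_span b μ
  have := FiniteDimensional.proper_real E
  have hcell (l) (hl : l ∈ T) : μ (fundamentalDomain b)
      ≤ μ (closedBall 0 (r + D) ∩ (l +ᵥ fundamentalDomain b)) := by
    rw [← measure_vadd μ l (fundamentalDomain b)]
    refine measure_mono (Set.subset_inter ?_ subset_rfl)
    rintro _ ⟨x, hx, rfl⟩
    rw [mem_closedBall_zero_iff]
    exact (norm_add_le _ _).trans (add_le_add (hT l hl) (hD x hx))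
  have hsum : ∑ _ ∈ T, μ (fundamentalDomain b) ≤ μ (closedBall 0 (r + D)) := by
    rw [(ZSpan.isAddFundamentalDomain b μ).measure_eq_tsum' (closedBall 0 (r + D))]
    exact (Finset.sum_le_sum hcell).trans (ENNReal.sum_le_tsum T)
  rw [Finset.sum_const, nsmul_eq_mul] at hsum
  simpa [Measure.real] using ENNReal.toReal_mono measure_closedBall_lt_top.ne hsum

theorem abs_setIntegral_vadd_fundamentalDomain_sub_le {G : E → ℝ} {K : ℝ≥0}
    (hG : LipschitzWith K G) (hG_int : Integrable G μ) {D : ℝ}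
    (hD : ∀ x ∈ fundamentalDomain b, ‖x‖ ≤ D) (l : Submodule.span ℤ (Set.range b)) :
    |∫ x in l +ᵥ fundamentalDomain b, G x ∂μ - μ.real (fundamentalDomain b) * G l| ≤
      K * D * μ.real (fundamentalDomain b) := by
  have := vaddInvariantMeasure_span b μ
  have := FiniteDimensional.proper_real E
  have hvadd : μ (l +ᵥ fundamentalDomain b) = μ (fundamentalDomain b) := measure_vadd μ l _
  have hfinite : μ (fundamentalDomain b) ≠ ⊤ := (fundamentalDomain_isBounded b).measure_lt_top.ne
  have h := abs_setIntegral_sub_measureReal_mul_le (by rwa [hvadd]) hG_int.integrableOn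
    (s := l +ᵥ fundamentalDomain b) (a := G l) (ε := K * D) ?_
  · rwa [Measure.real, hvadd] at h
  · rintro _ ⟨x, hx, rfl⟩
    refine (hG.dist_le_mul (l + x) l).trans ?_
    rw [dist_self_add_left]
    gcongr
    exact hD x hx

theorem abs_integral_sub_tsum_span_le {G : E → ℝ} {K : ℝ≥0}
    (hG : LipschitzWith K G) {r D : ℝ} (hr : ∀ x, r < ‖x‖ → G x = 0)
    (hD : ∀ x ∈ fundamentalDomain b, ‖x‖ ≤ D) :
    |∫ x, G x ∂μ - μ.real (fundamentalDomain b) * ∑' l : Submodule.span ℤ (Set.range b), G l| ≤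
      K * D * μ.real (closedBall 0 (r + 2 * D)) := by
  have := vaddInvariantMeasure_span b μ
  have := FiniteDimensional.proper_real E
  have hD₀ : 0 ≤ D := (norm_nonneg _).trans (hD 0 (by simp [mem_fundamentalDomain]))
  set P := fundamentalDomain b
  have hsupp : HasCompactSupport G := .of_support_subset_isCompact (isCompact_closedBall 0 r)
    fun x hx => mem_closedBall_zero_iff.2 (not_lt.1 fun h => hx (hr x h))
  have hG_int : Integrable G μ := hG.continuous.integrable_of_hasCompactSupport hsupp
  have hfin : {l : Submodule.span ℤ (Set.range b) | ‖(l : E)‖ ≤ r + D}.Finite := by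
    refine Set.Finite.of_finite_image (f := Subtype.val) ?_ Subtype.val_injective.injOn
    refine (setFinite_inter b (isBounded_closedBall (x := 0) (r := r + D))).subset ?_
    rintro _ ⟨l, hl, rfl⟩
    exact ⟨mem_closedBall_zero_iff.2 hl, l.2⟩
  set T := hfin.toFinset
  have hG_far (l) (hl : l ∉ T) (x : E) (hx : ‖x‖ ≤ D) : G (l + x) = 0 := by
    have hl' : r + D < ‖(l : E)‖ := by simpa [T] using hl
    refine hr _ ?_
    linarith [norm_le_add_norm_add (l : E) x]
  have hintegral : ∫ x, G x ∂μ = ∑ l ∈ T, ∫ x in l +ᵥ P, G x ∂μ := by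
    rw [(ZSpan.isAddFundamentalDomain b μ).integral_eq_tsum _ hG_int]
    refine tsum_eq_sum fun l hl => setIntegral_eq_zero_of_forall_eq_zero ?_
    rintro _ ⟨x, hx, rfl⟩
    exact hG_far l hl x (hD x hx)
  have htsum : ∑' l : Submodule.span ℤ (Set.range b), G l = ∑ l ∈ T, G l :=
    tsum_eq_sum fun l hl => by simpa using hG_far l hl 0 (by simpa using hD₀)
  calc |∫ x, G x ∂μ - μ.real P * ∑' l : Submodule.span ℤ (Set.range b), G l|
      = |∑ l ∈ T, (∫ x in l +ᵥ P, G x ∂μ - μ.real P * G l)| := by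
        rw [hintegral, htsum, Finset.mul_sum, Finset.sum_sub_distrib]
    _ ≤ ∑ _ ∈ T, K * D * μ.real P :=
        (Finset.abs_sum_le_sum_abs _ _).trans (Finset.sum_le_sum fun l _ =>
          abs_setIntegral_vadd_fundamentalDomain_sub_le b μ hG hG_int hD l)
    _ = K * D * (T.card * μ.real P) := by rw [Finset.sum_const, nsmul_eq_mul]; ring
    _ ≤ K * D * μ.real (closedBall 0 (r + D + D)) := by
        gcongr
        exact card_mul_measureReal_fundamentalDomain_le b μ T (fun l hl => by simpa [T] using hl) hD
    _ = K * D * μ.real (closedBall 0 (r + 2 * D)) := by rw [add_assoc, ← two_mul]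

theorem measureReal_closedBall_div_add_le {r a h : ℝ} (hr : 0 ≤ r) (ha : 0 ≤ a) (hh : 0 < h)
    (hh1 : h ≤ 1) :
    μ.real (closedBall (0 : E) (r / h + a)) ≤
      (h ^ finrank ℝ E)⁻¹ * ((r + a) ^ finrank ℝ E * μ.real (closedBall (0 : E) 1)) := by
  have := FiniteDimensional.proper_real E
  have hle : r / h + a ≤ (r + a) / h := by
    rw [add_div]
    gcongr
    exact le_div_self ha hh hh1
  calc μ.real (closedBall (0 : E) (r / h + a))
      ≤ μ.real (closedBall (0 : E) ((r + a) / h)) :=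
        measureReal_mono (closedBall_subset_closedBall hle) measure_closedBall_lt_top.ne
    _ = (h ^ finrank ℝ E)⁻¹ * ((r + a) ^ finrank ℝ E * μ.real (closedBall (0 : E) 1)) := by
        rw [Measure.addHaar_real_closedBall' μ _ (by positivity), div_pow]
        ring

theorem exists_abs_tsum_span_smul_sub_le {G : E → ℝ} {K : ℝ≥0}
    (hG : LipschitzWith K G) {r : ℝ} (hr : ∀ x, r < ‖x‖ → G x = 0) :
    ∃ C : ℝ, ∀ h : ℝ, 0 < h → h ≤ 1 →
      |h ^ finrank ℝ E * ∑' l : Submodule.span ℤ (Set.range b), G (h • (l : E)) -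
        (μ.real (fundamentalDomain b))⁻¹ * ∫ x, G x ∂μ| ≤ C * h := by
  obtain ⟨D, hD⟩ := (fundamentalDomain_isBounded b).exists_norm_le
  have hD₀ : 0 ≤ D := (norm_nonneg _).trans (hD 0 (by simp [mem_fundamentalDomain]))
  set n := finrank ℝ E
  set V := μ.real (fundamentalDomain b)
  set B := μ.real (closedBall (0 : E) 1)
  have hV : 0 < V := ENNReal.toReal_pos (measure_fundamentalDomain_ne_zero b)
    (fundamentalDomain_isBounded b).measure_lt_top.ne
  have hR : 0 ≤ max r 0 := le_max_right r 0
  set R := max r 0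
  refine ⟨V⁻¹ * (K * D * ((R + 2 * D) ^ n * B)), fun h hh hh1 => ?_⟩
  have hlip : LipschitzWith (K * h.toNNReal) fun x => G (h • x) := by
    refine hG.comp (LipschitzWith.of_dist_le_mul fun x y => ?_)
    rw [dist_smul₀, Real.norm_of_nonneg hh.le, Real.coe_toNNReal h hh.le]
  have hsupp (x : E) (hx : R / h < ‖x‖) : G (h • x) = 0 := by
    refine hr _ ((le_max_left r 0).trans_lt ?_)
    rwa [norm_smul, Real.norm_of_nonneg hh.le, ← div_lt_iff₀' hh]
  have hball : μ.real (closedBall (0 : E) (R / h + 2 * D)) ≤ (h ^ n)⁻¹ * ((R + 2 * D) ^ n * B) :=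
    measureReal_closedBall_div_add_le μ hR (by positivity) hh hh1
  have hhV : 0 < h ^ n * V⁻¹ := by positivity
  have hscale : ∫ x, G (h • x) ∂μ = (h ^ n)⁻¹ * ∫ x, G x ∂μ := by
    rw [Measure.integral_comp_smul, abs_of_pos (by positivity), smul_eq_mul]
  calc |h ^ n * ∑' l : Submodule.span ℤ (Set.range b), G (h • (l : E)) - V⁻¹ * ∫ x, G x ∂μ|
      = h ^ n * V⁻¹ * |∫ x, G (h • x) ∂μ -
          V * ∑' l : Submodule.span ℤ (Set.range b), G (h • (l : E))| := by
        rw [hscale, abs_sub_comm]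
        conv_rhs => rw [← abs_of_pos hhV, ← abs_mul]
        congr 1
        field_simp
    _ ≤ h ^ n * V⁻¹ * (K * h * D * ((h ^ n)⁻¹ * ((R + 2 * D) ^ n * B))) := by
        gcongr
        refine (abs_integral_sub_tsum_span_le b μ hlip hsupp hD).trans ?_
        rw [NNReal.coe_mul, Real.coe_toNNReal h hh.le]
        gcongr
    _ = V⁻¹ * (K * D * ((R + 2 * D) ^ n * B)) * h := by field_simp

end RiemannSum

/-! ### Continuation of a Dirichlet series from its smoothed partial sums -/

section Mellin

open MeasureTheory Set Filter Topology

theorem cpow_smul_mul_comp_mul_left_eq (a : ℕ → ℂ) {f : ℝ → ℂ} (hf₀ : f 0 = 0) (s : ℂ) (k : ℕ)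
    {t : ℝ} (ht : 0 ≤ t) :
    (t : ℂ) ^ (s - 1) • (a k * f (k * t)) =
      LSeries.term a s k * k * (((k * t : ℝ) : ℂ) ^ (s - 1) • f (k * t)) := by
  rcases eq_or_ne k 0 with rfl | hk
  · simp [hf₀]
  have hk₀ : (k : ℂ) ≠ 0 := Nat.cast_ne_zero.2 hk
  have hcpow : ((k * t : ℝ) : ℂ) ^ (s - 1) = (k : ℂ) ^ s / k * (t : ℂ) ^ (s - 1) := by
    rw [Complex.ofReal_mul, Complex.mul_cpow_ofReal_nonneg k.cast_nonneg ht,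
      Complex.ofReal_natCast, Complex.cpow_sub _ _ hk₀, Complex.cpow_one]
  have hks : (k : ℂ) ^ s ≠ 0 := by simp [Complex.cpow_eq_zero_iff, hk₀]
  simp only [smul_eq_mul, LSeries.term_of_ne_zero hk, hcpow]
  field_simp

theorem mellin_tsum_mul_comp_mul_left {a : ℕ → ℂ} {f : ℝ → ℂ} (hf₀ : f 0 = 0) {s : ℂ}
    (hf : MellinConvergent f s) (ha : LSeriesSummable a s) :
    mellin (fun t => ∑' k : ℕ, a k * f (k * t)) s = LSeries a s * mellin f s := by
  set G : ℝ → ℂ := fun t => (t : ℂ) ^ (s - 1) • f t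
  set F : ℕ → ℝ → ℂ := fun k t => (t : ℂ) ^ (s - 1) • (a k * f (k * t))
  have hF (k : ℕ) : EqOn (F k) (fun t => LSeries.term a s k * k * G (k * t)) (Ioi 0) :=
    fun t ht => cpow_smul_mul_comp_mul_left_eq a hf₀ s k (le_of_lt ht)
  have hF_int (k : ℕ) : IntegrableOn (F k) (Ioi 0) := by
    rw [integrableOn_congr_fun (hF k) measurableSet_Ioi]
    rcases eq_or_ne k 0 with rfl | hk
    · simp
    · have hk' : (0 : ℝ) < k := by positivity
      have hG : IntegrableOn G (Ioi (k * 0)) := by rwa [mul_zero]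
      exact ((integrableOn_Ioi_comp_mul_left_iff G 0 hk').2 hG).const_mul _
  have hF_val (k : ℕ) : ∫ t in Ioi 0, F k t = LSeries.term a s k * ∫ t in Ioi 0, G t := by
    rw [setIntegral_congr_fun measurableSet_Ioi (hF k), integral_const_mul]
    rcases eq_or_ne k 0 with rfl | hk
    · simp
    · have hk' : (0 : ℝ) < k := by positivity
      rw [integral_comp_mul_left_Ioi G 0 hk', mul_zero, Complex.real_smul]
      simp only [Complex.ofReal_inv, Complex.ofReal_natCast]
      field_simp
  have hF_norm (k : ℕ) :
      ∫ t in Ioi 0, ‖F k t‖ = ‖LSeries.term a s k‖ * ∫ t in Ioi 0, ‖G t‖ := by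
    rw [setIntegral_congr_fun measurableSet_Ioi fun t ht => congrArg norm (hF k ht)]
    simp only [norm_mul, integral_const_mul]
    rcases eq_or_ne k 0 with rfl | hk
    · simp
    · have hk' : (0 : ℝ) < k := by positivity
      rw [integral_comp_mul_left_Ioi (fun t => ‖G t‖) 0 hk', mul_zero, smul_eq_mul,
        Complex.norm_natCast]
      field_simp
  have hsummable : Summable fun k => ∫ t in Ioi 0, ‖F k t‖ := by
    simp_rw [hF_norm]
    exact ha.norm.mul_right _
  have hsum := hasSum_integral_of_summable_integral_norm hF_int hsummable
  simp_rw [hF_val] at hsum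
  change _ = LSeries a s * ∫ t in Ioi 0, G t
  rw [LSeries, ← tsum_mul_right, hsum.tsum_eq, mellin]
  simp only [F, smul_eq_mul, tsum_mul_left]

/-- The tent function supported on `[1/4, 1]` with peak `1` at `1/2`. It vanishes near `0`, and its
Mellin transform has no zeros in the right half-plane. -/
noncomputable def cutoff (v : ℝ) : ℝ := max 0 (min (4 * v - 1) (2 - 2 * v))

theorem cutoff_nonneg (v : ℝ) : 0 ≤ cutoff v := le_max_left _ _

theorem cutoff_of_one_le {v : ℝ} (h : 1 ≤ v) : cutoff v = 0 :=
  max_eq_left ((min_le_right _ _).trans (by linarith))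

theorem cutoff_of_le_quarter {v : ℝ} (h : v ≤ 1 / 4) : cutoff v = 0 :=
  max_eq_left ((min_le_left _ _).trans (by linarith))

theorem continuous_cutoff : Continuous cutoff := by
  unfold cutoff
  fun_prop

theorem cutoff_eq_dilates (v : ℝ) :
    cutoff v = 2 * max 0 (1 - v) - 3 * max 0 (1 - 2 * v) + max 0 (1 - 4 * v) := by
  unfold cutoff
  grind

theorem hasMellin_max_zero_one_sub {s : ℂ} (hs : 0 < s.re) :
    HasMellin (fun t => ((max 0 (1 - t) : ℝ) : ℂ)) s (1 / (s * (s + 1))) := by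
  have h₀ := hasMellin_one_Ioc hs
  have h₁ := hasMellin_cpow_Ioc 1 (s := s) (by simp; linarith)
  have hsub := hasMellin_sub h₀.1 h₁.1
  have hs₀ : s ≠ 0 := fun h => by simp [h] at hs
  have hs₁ : s + 1 ≠ 0 := fun h => by
    rw [eq_neg_of_add_eq_zero_left h] at hs
    norm_num at hs
  have hval : 1 / s - 1 / (s + 1) = 1 / (s * (s + 1)) := by
    field_simp
    ring
  rw [h₀.2, h₁.2, hval] at hsub
  have hmax : EqOn (fun t : ℝ => ((max 0 (1 - t) : ℝ) : ℂ))
      (fun t => (Ioc 0 1).indicator (fun _ => 1) t -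
        (Ioc 0 1).indicator (fun t : ℝ => (t : ℂ) ^ (1 : ℂ)) t) (Ioi 0) := by
    intro t ht
    rcases le_or_gt t 1 with h1 | h1
    · simp [indicator_of_mem (show t ∈ Ioc 0 1 from ⟨ht, h1⟩), h1]
    · simp [indicator_of_notMem (show t ∉ Ioc 0 1 from fun h => h1.not_ge h.2), h1.le]
  refine ⟨hsub.1.congr_fun (fun t ht => by simp only [hmax ht]) measurableSet_Ioi, ?_⟩
  rw [← hsub.2]
  exact setIntegral_congr_fun measurableSet_Ioi fun t ht => by simp only [hmax ht]

theorem hasMellin_cutoff {s : ℂ} (hs : 0 < s.re) :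
    HasMellin (fun t => (cutoff t : ℂ)) s ((1 - 2 ^ (-s)) * (2 - 2 ^ (-s)) / (s * (s + 1))) := by
  have hmax := hasMellin_max_zero_one_sub hs
  have hdilate (r : ℝ) (hr : 0 < r) :
      HasMellin (fun t => ((max 0 (1 - r * t) : ℝ) : ℂ)) s (r ^ (-s) * (1 / (s * (s + 1)))) := by
    refine ⟨(MellinConvergent.comp_mul_left (f := fun t : ℝ => ((max 0 (1 - t) : ℝ) : ℂ)) hr).2
      hmax.1, ?_⟩
    rw [← hmax.2, ← smul_eq_mul]
    exact mellin_comp_mul_left (fun t : ℝ => ((max 0 (1 - t) : ℝ) : ℂ)) s hr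
  have h₂ := hdilate 2 two_pos
  have h₄ := hdilate 4 four_pos
  have hcomb := hasMellin_add (hasMellin_sub (hmax.1.const_smul (2 : ℂ))
    (h₂.1.const_smul (3 : ℂ))).1 h₄.1
  have hval := hcomb.2
  rw [(hasMellin_sub (hmax.1.const_smul (2 : ℂ)) (h₂.1.const_smul (3 : ℂ))).2,
    mellin_const_smul, mellin_const_smul, hmax.2, h₂.2, h₄.2] at hval
  have hfour : ((4 : ℝ) : ℂ) ^ (-s) = (2 ^ (-s)) ^ 2 := by
    rw [show (4 : ℝ) = 2 * 2 by norm_num, Complex.ofReal_mul,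
      Complex.mul_cpow_ofReal_nonneg zero_le_two zero_le_two, sq, Complex.ofReal_ofNat]
  have hfun : (fun t => (cutoff t : ℂ)) = fun t : ℝ => (2 : ℂ) • ((max 0 (1 - t) : ℝ) : ℂ) -
      (3 : ℂ) • ((max 0 (1 - 2 * t) : ℝ) : ℂ) + ((max 0 (1 - 4 * t) : ℝ) : ℂ) := by
    ext t
    rw [cutoff_eq_dilates]
    push_cast [smul_eq_mul]
    rfl
  rw [hfun]
  refine ⟨hcomb.1, hval.trans ?_⟩
  rw [hfour, smul_eq_mul, smul_eq_mul, Complex.ofReal_ofNat]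
  ring

theorem sub_two_cpow_neg_ne_zero {s : ℂ} (hs : 0 < s.re) {r : ℝ} (hr : 1 ≤ r) :
    (r : ℂ) - 2 ^ (-s) ≠ 0 := by
  intro h
  have hlt : ‖(2 : ℂ) ^ (-s)‖ < 1 := by
    simpa using (Complex.norm_natCast_cpow_of_pos two_pos (-s)).trans_lt
      (Real.rpow_lt_one_of_one_lt_of_neg one_lt_two (neg_neg_of_pos hs))
  rw [← sub_eq_zero.1 h, Complex.norm_real, Real.norm_of_nonneg (by linarith)] at hlt
  linarith

/-- The smoothed partial sum `∑ₖ aₖ φ(t k)` of the coefficients `aₖ` over `k < 1 / t`, where `φ`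
is `cutoff`. -/
noncomputable def smoothedSum (a : ℕ → ℂ) (t : ℝ) : ℂ := ∑' k : ℕ, a k * cutoff (k * t)

theorem cutoff_mul_of_notMem_range {t x : ℝ} (hx : 0 < x) (hxt : x ≤ t) {k : ℕ}
    (hk : k ∉ Finset.range ⌈x⁻¹⌉₊) : cutoff (k * t) = 0 := by
  have hk' : x⁻¹ ≤ k := Nat.ceil_le.1 (not_lt.1 fun h => hk (Finset.mem_range.2 h))
  refine cutoff_of_one_le ?_
  calc 1 = x⁻¹ * x := (inv_mul_cancel₀ hx.ne').symm
    _ ≤ k * t := by gcongr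

theorem smoothedSum_eq_sum_range (a : ℕ → ℂ) {t x : ℝ} (hx : 0 < x) (hxt : x ≤ t) :
    smoothedSum a t = ∑ k ∈ Finset.range ⌈x⁻¹⌉₊, a k * cutoff (k * t) :=
  tsum_eq_sum fun k hk => by
    rw [cutoff_mul_of_notMem_range hx hxt hk, Complex.ofReal_zero, mul_zero]

theorem smoothedSum_of_one_le (a : ℕ → ℂ) {t : ℝ} (ht : 1 ≤ t) : smoothedSum a t = 0 := by
  simp [smoothedSum_eq_sum_range a one_pos ht, cutoff_of_le_quarter]

theorem continuousOn_smoothedSum (a : ℕ → ℂ) : ContinuousOn (smoothedSum a) (Ioi 0) := by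
  intro t ht
  have ht : 0 < t := ht
  have hfinite : Continuous fun u : ℝ =>
      ∑ k ∈ Finset.range ⌈(t / 2)⁻¹⌉₊, a k * (cutoff (k * u) : ℂ) :=
    continuous_finsetSum _ fun k _ => continuous_const.mul
      (Complex.continuous_ofReal.comp (continuous_cutoff.comp (continuous_const.mul continuous_id)))
  refine (hfinite.continuousAt.congr ?_).continuousWithinAt
  filter_upwards [lt_mem_nhds (half_lt_self ht)] with u hu
  exact (smoothedSum_eq_sum_range a (half_pos ht) hu.le).symm

theorem mellin_smoothedSum {a : ℕ → ℂ} {s : ℂ} (hs : 0 < s.re) (ha : LSeriesSummable a s) :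
    mellin (smoothedSum a) s = 
      LSeries a s * ((1 - 2 ^ (-s)) * (2 - 2 ^ (-s)) / (s * (s + 1))) := by
  rw [← (hasMellin_cutoff hs).2]
  exact mellin_tsum_mul_comp_mul_left (by simp [cutoff_of_le_quarter]) (hasMellin_cutoff hs).1 ha

/-- The error term `∑ₖ aₖ φ(t k) - c / t` for `t ≤ 1`, extended by `0` to `t > 1`. -/
noncomputable def smoothedSumError (a : ℕ → ℂ) (c : ℂ) : ℝ → ℂ :=
  (Ioc (0 : ℝ) 1).indicator fun t => smoothedSum a t - c / t

variable {a : ℕ → ℂ} {c : ℂ} {C ε : ℝ}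

theorem mellinConvergent_and_differentiableAt_smoothedSumError
    (herror : ∀ t : ℝ, 0 < t → t ≤ 1 → ‖smoothedSum a t - c / t‖ ≤ C * t ^ (ε - 1))
    {s : ℂ} (hs : 1 - ε < s.re) :
    MellinConvergent (smoothedSumError a c) s ∧
      DifferentiableAt ℂ (mellin (smoothedSumError a c)) s := by
  have hloc : LocallyIntegrableOn (smoothedSumError a c) (Ioi 0) volume := by
    rw [locallyIntegrableOn_iff isOpen_Ioi.isLocallyClosed]
    intro k hk hkc
    refine IntegrableOn.indicator (ContinuousOn.integrableOn_compact hkc ?_) measurableSet_Ioc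
    refine ((continuousOn_smoothedSum a).mono hk).sub ?_
    refine continuousOn_const.div Complex.continuous_ofReal.continuousOn fun x hx => ?_
    exact Complex.ofReal_ne_zero.2 (ne_of_gt (hk hx))
  have htop : smoothedSumError a c =O[atTop] fun x => x ^ (-(s.re + 1)) := by
    refine Asymptotics.IsBigO.of_bound 0 ?_
    filter_upwards [eventually_gt_atTop 1] with x hx
    simp [smoothedSumError, hx]
  have hzero : smoothedSumError a c =O[𝓝[>] 0] fun x => x ^ (-(1 - ε)) := by
    refine Asymptotics.IsBigO.of_bound C ?_
    filter_upwards [Ioc_mem_nhdsGT (zero_lt_one' ℝ)] with x hx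
    rw [smoothedSumError, indicator_of_mem hx, Real.norm_of_nonneg (Real.rpow_nonneg hx.1.le _),
      neg_sub]
    exact herror x hx.1 hx.2
  exact ⟨mellinConvergent_of_isBigO_rpow hloc htop (by linarith) hzero hs,
    mellin_differentiableAt_of_isBigO_rpow hloc htop (by linarith) hzero hs⟩

theorem mellin_smoothedSum_eq_mellin_smoothedSumError_add {s : ℂ} (hs : 1 < s.re)
    (hconv : MellinConvergent (smoothedSumError a c) s) :
    mellin (smoothedSum a) s = mellin (smoothedSumError a c) s + c / (s - 1) := by
  have hinv := hasMellin_cpow_Ioc (-1) (s := s) (by simp; linarith)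
  have hmain := mellin_const_smul
    ((Ioc (0 : ℝ) 1).indicator fun t : ℝ => (t : ℂ) ^ (-1 : ℂ)) s c
  rw [hinv.2, smul_eq_mul, mul_one_div, ← sub_eq_add_neg] at hmain
  rw [← hmain, ← (hasMellin_add hconv (hinv.1.const_smul c)).2]
  refine setIntegral_congr_fun measurableSet_Ioi fun t ht => ?_
  have ht : 0 < t := ht
  rcases le_or_gt t 1 with h1 | h1
  · simp [smoothedSumError, indicator_of_mem (show t ∈ Ioc 0 1 from ⟨ht, h1⟩),
      Complex.cpow_neg_one, div_eq_mul_inv]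
  · simp [smoothedSumError, indicator_of_notMem (show t ∉ Ioc 0 1 from fun h => h1.not_ge h.2),
      smoothedSum_of_one_le a h1.le]

theorem exists_differentiableOn_LSeries_eq_div_sub_one
    (ha : ∀ s : ℂ, 1 < s.re → LSeriesSummable a s) (hε₀ : 0 < ε) (hε₁ : ε ≤ 1)
    (herror : ∀ t : ℝ, 0 < t → t ≤ 1 → ‖smoothedSum a t - c / t‖ ≤ C * t ^ (ε - 1)) :
    ∃ g : ℂ → ℂ, DifferentiableOn ℂ g {s : ℂ | 1 - ε < s.re} ∧
      ∀ s : ℂ, 1 < s.re → LSeries a s = g s / (s - 1) := by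
  have hmellin {s : ℂ} (hs : 1 - ε < s.re) :=
    mellinConvergent_and_differentiableAt_smoothedSumError herror hs
  refine ⟨fun s => s * (s + 1) * (c + (s - 1) * mellin (smoothedSumError a c) s) /
    ((1 - 2 ^ (-s)) * (2 - 2 ^ (-s))), fun s hs => ?_, fun s hs => ?_⟩
  · have hs₀ : 0 < s.re := lt_of_le_of_lt (by linarith) (show 1 - ε < s.re from hs)
    have hM := (hmellin hs).2
    have _ : DifferentiableAt ℂ (fun s : ℂ => (2 : ℂ) ^ (-s)) s :=
      differentiableAt_id.neg.const_cpow (.inl two_ne_zero)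
    refine DifferentiableAt.differentiableWithinAt (DifferentiableAt.div (by fun_prop)
      (by fun_prop) (mul_ne_zero ?_ ?_))
    · simpa using sub_two_cpow_neg_ne_zero hs₀ le_rfl
    · simpa using sub_two_cpow_neg_ne_zero hs₀ one_le_two
  · have hs₀ : 0 < s.re := by linarith
    have hne (r : ℝ) (hr : r ≤ 1) : s - r ≠ 0 := sub_ne_zero.2 <| by
      rintro rfl
      exact hs.not_ge hr
    have hne₀ : s ≠ 0 := by simpa using hne 0 zero_le_one
    have hne₁ : s - 1 ≠ 0 := by simpa using hne 1 le_rfl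
    have hne₂ : s + 1 ≠ 0 := by simpa using hne (-1) (by norm_num)
    have hne₃ : (1 : ℂ) - 2 ^ (-s) ≠ 0 := by simpa using sub_two_cpow_neg_ne_zero hs₀ le_rfl
    have hne₄ : (2 : ℂ) - 2 ^ (-s) ≠ 0 := by simpa using sub_two_cpow_neg_ne_zero hs₀ one_le_two
    have hL := mellin_smoothedSum hs₀ (ha s hs)
    rw [mellin_smoothedSum_eq_mellin_smoothedSumError_add hs (hmellin (by linarith)).1] at hL
    field_simp at hL ⊢
    linear_combination -hL

end Mellin

/-! ### A Lipschitz partition of unity under the action of the units -/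

section LocallyLipschitz

open Metric
open scoped NNReal

variable {α : Type*} [PseudoMetricSpace α]

theorem locallyLipschitz_fun_mul {f g : α → ℝ} (hf : LocallyLipschitz f)
    (hg : LocallyLipschitz g) : LocallyLipschitz fun x => f x * g x :=
  (contDiff_mul (𝕜 := ℝ) (n := 1)).locallyLipschitz.comp (hf.prodMk hg)

theorem locallyLipschitz_finset_prod {ι : Type*} (s : Finset ι) {f : ι → α → ℝ}
    (hf : ∀ i ∈ s, LocallyLipschitz (f i)) : LocallyLipschitz fun x => ∏ i ∈ s, f i x := by
  classical
  induction s using Finset.induction_on with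
  | empty => simpa using LocallyLipschitz.const 1
  | insert i s hi ih =>
    simp only [Finset.prod_insert hi]
    exact locallyLipschitz_fun_mul (hf i (Finset.mem_insert_self i s))
      (ih fun j hj => hf j (Finset.mem_insert_of_mem hj))

theorem exists_lipschitzWith_of_hasCompactSupport [ProperSpace α] {E : Type*}
    [SeminormedAddCommGroup E] {f : α → E} (hf : LocallyLipschitz f)
    (hsupp : HasCompactSupport f) : ∃ C, LipschitzWith C f := by
  obtain ⟨C, hC⟩ := (hf.locallyLipschitzOn (s := cthickening 1 (tsupport f))
    ).exists_lipschitzOnWith_of_compact hsupp.isCompact.cthickening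
  obtain ⟨M, hM⟩ := hsupp.exists_bound_of_continuous hf.continuous
  obtain ⟨L, hCL, hML⟩ : ∃ L : ℝ≥0, C ≤ L ∧ 2 * M ≤ L :=
    ⟨max C (2 * M).toNNReal, le_max_left _ _, by simp⟩
  refine ⟨L, LipschitzWith.of_dist_le_mul fun x y => ?_⟩
  rcases le_or_gt 1 (dist x y) with hxy | hxy
  · calc dist (f x) (f y) ≤ ‖f x‖ + ‖f y‖ := dist_le_norm_add_norm _ _
      _ ≤ L := by linarith [hM x, hM y]
      _ ≤ L * dist x y := le_mul_of_one_le_right L.2 hxy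
  have hnear {x y : α} (hxy : dist x y < 1) (hx : x ∈ tsupport f) :
      dist (f x) (f y) ≤ L * dist x y := by
    have hy : y ∈ cthickening 1 (tsupport f) :=
      mem_cthickening_of_dist_le y x _ _ hx (by rw [dist_comm]; exact hxy.le)
    exact ((hC.weaken hCL).dist_le_mul x (self_subset_cthickening _ hx) y hy)
  by_cases hx : x ∈ tsupport f
  · exact hnear hxy hx
  by_cases hy : y ∈ tsupport f
  · rw [dist_comm, dist_comm x]
    exact hnear (by rwa [dist_comm]) hy
  · rw [image_eq_zero_of_notMem_tsupport hx, image_eq_zero_of_notMem_tsupport hy, dist_self]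
    positivity

end LocallyLipschitz

section Tent

/-- The hat function on `[-1, 1]`. Its integral translates form a partition of unity on the line. -/
noncomputable def tent (t : ℝ) : ℝ := max 0 (1 - |t|)

theorem tent_nonneg (t : ℝ) : 0 ≤ tent t := le_max_left _ _

theorem locallyLipschitz_tent : LocallyLipschitz tent := by
  have hsub : LipschitzWith 1 fun t : ℝ => 1 - |t| :=
    LipschitzWith.of_dist_le_mul fun x y => by
      simpa only [dist_sub_left, Real.dist_eq, NNReal.coe_one, one_mul] using
        abs_abs_sub_abs_le x y
  exact hsub.locallyLipschitz.const_max 0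

theorem locallyLipschitz_cutoff : LocallyLipschitz cutoff := by
  have hleft : ContDiff ℝ 1 fun v : ℝ => 4 * v - 1 := by fun_prop
  have hright : ContDiff ℝ 1 fun v : ℝ => 2 - 2 * v := by fun_prop
  exact (hleft.locallyLipschitz.min hright.locallyLipschitz).const_max 0

theorem exists_finset_sum_tent_add_intCast_eq_one (t : ℝ) :
    ∃ s : Finset ℤ, ∑ m ∈ s, tent (t + m) = 1 ∧ ∀ m : ℤ, m ∉ s → tent (t + m) = 0 := by
  have hnonneg := Int.fract_nonneg t
  have hlt := Int.fract_lt_one t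
  have hfloor := Int.floor_add_fract t
  refine ⟨{-⌊t⌋, -⌊t⌋ - 1}, ?_, fun m hm => max_eq_left ?_⟩
  · have hleft : t + (-⌊t⌋ : ℤ) = Int.fract t := by
      push_cast
      linarith
    have hright : t + (-⌊t⌋ - 1 : ℤ) = Int.fract t - 1 := by
      push_cast
      linarith
    rw [Finset.sum_pair (by lia), hleft, hright, tent, tent, abs_of_nonneg hnonneg,
      abs_of_nonpos (by linarith), max_eq_right (by linarith), max_eq_right (by linarith)]
    ring
  · simp only [Finset.mem_insert, Finset.mem_singleton, not_or] at hm
    rcases lt_or_gt_of_ne hm.1 with h | h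
    · have hm' : (m : ℝ) ≤ -⌊t⌋ - 2 := by exact_mod_cast (by lia : m ≤ -⌊t⌋ - 2)
      linarith [neg_abs_le (t + m)]
    · have hm' : (-⌊t⌋ + 1 : ℝ) ≤ m := by exact_mod_cast (by lia : -⌊t⌋ + 1 ≤ m)
      linarith [le_abs_self (t + m)]

theorem tsum_ofReal_prod_tent_add_intCast {ι : Type*} [Fintype ι] (t : ι → ℝ) :
    ∑' m : ι → ℤ, ENNReal.ofReal (∏ i, tent (t i + m i)) = 1 := by
  classical
  choose s hsum hzero using fun i => exists_finset_sum_tent_add_intCast_eq_one (t i)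
  rw [tsum_eq_sum (s := Fintype.piFinset s)]
  · rw [← ENNReal.ofReal_sum_of_nonneg fun _ _ => Finset.prod_nonneg fun _ _ => tent_nonneg _,
      ← Finset.prod_univ_sum s fun i m => tent (t i + m)]
    simp only [hsum, Finset.prod_const_one, ENNReal.ofReal_one]
  · intro m hm
    obtain ⟨i, hi⟩ := not_forall.1 (mt Fintype.mem_piFinset.2 hm)
    rw [Finset.prod_eq_zero (Finset.mem_univ i) (hzero i _ hi), ENNReal.ofReal_zero]

end Tent

section UnitWeight

open NumberField NumberField.mixedEmbedding NumberField.Units NumberField.InfinitePlace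
  NumberField.Units.dirichletUnitTheorem Module
open scoped Classical Topology

variable (K : Type*) [Field K] [NumberField K]

variable {K} in
/-- The coordinates of the logarithm of `x` in the basis of the unit lattice. Units act on them by
integral translations. -/
noncomputable def logCoord (x : mixedSpace K) (i : Fin (rank K)) : ℝ :=
  ((basisUnitLattice K).ofZLatticeBasis ℝ _).repr (logMap x) i

/-- The unit with prescribed torsion part and exponents in the fundamental system of units. -/
noncomputable def torsionProdEquivUnits : torsion K × (Fin (rank K) → ℤ) ≃ (𝓞 K)ˣ :=
  Equiv.ofBijective (fun p => p.1 * ∏ i, fundSystem K i ^ p.2 i) <|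
    Function.bijective_iff_existsUnique _ |>.2 fun u => by
      simpa only [eq_comm] using exist_unique_eq_mul_prod K u

variable {K}

theorem logCoord_real_smul {x : mixedSpace K} (hx : mixedEmbedding.norm x ≠ 0) {r : ℝ}
    (hr : r ≠ 0) : logCoord (r • x) = logCoord x := by
  ext i
  rw [logCoord, logMap_real_smul hx hr, logCoord]

theorem logCoord_torsionProdEquivUnits_smul {x : mixedSpace K} (hx : mixedEmbedding.norm x ≠ 0)
    (p : torsion K × (Fin (rank K) → ℤ)) (i : Fin (rank K)) :
    logCoord (torsionProdEquivUnits K p • x) i = logCoord x i + p.2 i := by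
  have hlog : logEmbedding K (Additive.ofMul (torsionProdEquivUnits K p)) =
      ∑ i, (p.2 i : ℝ) • (basisUnitLattice K).ofZLatticeBasis ℝ _ i := by
    change logEmbedding K (Additive.ofMul (p.1 * ∏ i, fundSystem K i ^ p.2 i : (𝓞 K)ˣ)) = _
    rw [ofMul_mul, map_add, ofMul_prod, map_sum, logEmbedding_eq_zero_iff.2 p.1.2, zero_add]
    refine Finset.sum_congr rfl fun i _ => ?_
    rw [ofMul_zpow, map_zsmul, logEmbedding_fundSystem, Basis.ofZLatticeBasis_apply,
      Int.cast_smul_eq_zsmul]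
  rw [logCoord, logMap_unit_smul _ hx, hlog, map_add, Finsupp.add_apply, Basis.repr_sum_self,
    add_comm, logCoord]

theorem contDiffAt_normAtPlace {x : mixedSpace K} {w : InfinitePlace K}
    (hx : normAtPlace w x ≠ 0) {n : WithTop ℕ∞} : ContDiffAt ℝ n (normAtPlace w) x := by
  obtain hw | hw := w.isReal_or_isComplex
  · have hw' : ⇑(normAtPlace w) = fun y : mixedSpace K => ‖y.1 ⟨w, hw⟩‖ :=
      funext fun y => normAtPlace_apply_of_isReal hw y
    rw [hw'] at hx ⊢
    exact ContDiffAt.norm ℝ (by fun_prop) (norm_ne_zero_iff.1 hx)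
  · have hw' : ⇑(normAtPlace w) = fun y : mixedSpace K => ‖y.2 ⟨w, hw⟩‖ :=
      funext fun y => normAtPlace_apply_of_isComplex hw y
    rw [hw'] at hx ⊢
    exact ContDiffAt.norm ℝ (by fun_prop) (norm_ne_zero_iff.1 hx)

theorem contDiffAt_mixedEmbedding_norm {x : mixedSpace K} (hx : mixedEmbedding.norm x ≠ 0)
    {n : WithTop ℕ∞} : ContDiffAt ℝ n (mixedEmbedding.norm (K := K)) x := by
  have hnorm : ⇑(mixedEmbedding.norm (K := K)) = fun y => ∏ w, normAtPlace w y ^ mult w :=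
    funext mixedEmbedding.norm_apply
  rw [hnorm]
  exact contDiffAt_prod fun w _ =>
    (contDiffAt_normAtPlace (mixedEmbedding.norm_ne_zero_iff.1 hx w)).pow _

theorem contDiffAt_logCoord {x : mixedSpace K} (hx : mixedEmbedding.norm x ≠ 0)
    {n : WithTop ℕ∞} : ContDiffAt ℝ n (logCoord (K := K)) x := by
  have hlogMap : ContDiffAt ℝ n (logMap (K := K)) x := by
    refine contDiffAt_pi.2 fun w => contDiffAt_const.mul (ContDiffAt.sub ?_ (ContDiffAt.mul ?_
      contDiffAt_const))
    · have hw := mixedEmbedding.norm_ne_zero_iff.1 hx w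
      exact (contDiffAt_normAtPlace hw).log hw
    · exact (contDiffAt_mixedEmbedding_norm hx).log hx
  have hrepr := (LinearMap.toContinuousLinearMap
    ((basisUnitLattice K).ofZLatticeBasis ℝ (unitLattice K)).equivFun.toLinearMap).contDiff (n := n)
  exact hrepr.contDiffAt.comp x hlogMap

variable (K) in
/-- A product of tent functions in the logarithmic coordinates. Its translates under the units form
a partition of unity, see `tsum_ofReal_unitWeight_units_smul`. -/
noncomputable def unitWeight (x : mixedSpace K) : ℝ := ∏ i, tent (logCoord x i)

theorem unitWeight_nonneg (x : mixedSpace K) : 0 ≤ unitWeight K x :=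
  Finset.prod_nonneg fun _ _ => tent_nonneg _

theorem unitWeight_real_smul {x : mixedSpace K} (hx : mixedEmbedding.norm x ≠ 0) {r : ℝ}
    (hr : r ≠ 0) : unitWeight K (r • x) = unitWeight K x := by
  simp only [unitWeight, logCoord_real_smul hx hr]

theorem abs_logCoord_le_one_of_unitWeight_ne_zero {x : mixedSpace K} (hx : unitWeight K x ≠ 0)
    (i : Fin (rank K)) : |logCoord x i| ≤ 1 := by
  by_contra! hi
  exact hx (Finset.prod_eq_zero (Finset.mem_univ i) (max_eq_left (by linarith)))

theorem tsum_ofReal_unitWeight_units_smul {x : mixedSpace K} (hx : mixedEmbedding.norm x ≠ 0) :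
    ∑' u : (𝓞 K)ˣ, ENNReal.ofReal (unitWeight K (u • x)) = torsionOrder K := by
  rw [← (torsionProdEquivUnits K).tsum_eq]
  simp only [unitWeight, logCoord_torsionProdEquivUnits_smul hx]
  rw [ENNReal.tsum_prod' (f := fun p : torsion K × (Fin (rank K) → ℤ) =>
    ENNReal.ofReal (∏ i, tent (logCoord x i + p.2 i)))]
  simp only [tsum_ofReal_prod_tent_add_intCast, ENNReal.tsum_const, mul_one, torsionOrder,
    ENat.card_eq_coe_natCard, ENat.toENNReal_coe]

variable (K) in
theorem exists_norm_le_of_unitWeight_ne_zero : ∃ R, ∀ x : mixedSpace K,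
    mixedEmbedding.norm x ≠ 0 → mixedEmbedding.norm x ≤ 1 → unitWeight K x ≠ 0 → ‖x‖ ≤ R := by
  obtain ⟨R, hR⟩ := (fundamentalCone.isBounded_normLeOne K).exists_norm_le
  set T : Finset (Fin (rank K) → ℤ) := Fintype.piFinset fun _ => Finset.Icc (-1) 1
  let U (e : Fin (rank K) → ℤ) : (𝓞 K)ˣ := torsionProdEquivUnits K (1, e)
  obtain ⟨M, hM⟩ := (T.image fun e => ‖mixedEmbedding K ((U e)⁻¹ : (𝓞 K)ˣ)‖).exists_le
  refine ⟨M * R, fun x hx₀ hx₁ hx => ?_⟩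
  set e : Fin (rank K) → ℤ := fun i => -⌊logCoord x i⌋
  have heT : e ∈ T := by
    refine Fintype.mem_piFinset.2 fun i => ?_
    have hi := abs_le.1 (abs_logCoord_le_one_of_unitWeight_ne_zero hx i)
    have hlower : -1 ≤ ⌊logCoord x i⌋ := Int.le_floor.2 (by simpa using hi.1)
    have hupper : ⌊logCoord x i⌋ ≤ 1 := by exact_mod_cast (Int.floor_le _).trans hi.2
    exact Finset.mem_Icc.2 ⟨by lia, by lia⟩
  have hmem : U e • x ∈ fundamentalCone.normLeOne K := by
    refine fundamentalCone.mem_normLeOne.2 ⟨⟨fun i => ?_, ?_⟩, ?_⟩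
    · change logCoord (U e • x) i ∈ _
      rw [logCoord_torsionProdEquivUnits_smul hx₀]
      have := Int.floor_le (logCoord x i)
      have := Int.lt_floor_add_one (logCoord x i)
      refine ⟨?_, ?_⟩ <;> push_cast [e] <;> linarith
    · simpa using hx₀
    · simpa using hx₁
  have hxU : x = mixedEmbedding K ((U e)⁻¹ : (𝓞 K)ˣ) * U e • x := by
    rw [← unitSMul_smul, inv_smul_smul]
  rw [hxU]
  have hU := hM _ (Finset.mem_image_of_mem _ heT)
  exact (norm_mul_le _ _).trans
    (mul_le_mul hU (hR _ hmem) (norm_nonneg _) ((norm_nonneg _).trans hU))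

variable (K) in
/-- The test function on the mixed space whose sum over a lattice counts, with the weights
`cutoff (N x)`, the points of the lattice up to units. -/
noncomputable def latticeWeight (x : mixedSpace K) : ℝ :=
  cutoff (mixedEmbedding.norm x) * unitWeight K x

theorem latticeWeight_nonneg (x : mixedSpace K) : 0 ≤ latticeWeight K x :=
  mul_nonneg (cutoff_nonneg _) (unitWeight_nonneg x)

variable (K) in
theorem exists_latticeWeight_eq_zero : ∃ R, ∀ x : mixedSpace K,
    R < ‖x‖ → latticeWeight K x = 0 := by
  obtain ⟨R, hR⟩ := exists_norm_le_of_unitWeight_ne_zero K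
  refine ⟨R, fun x hx => ?_⟩
  by_contra! h
  refine hx.not_ge (hR x (fun h₀ => h ?_) ?_ (right_ne_zero_of_mul h))
  · rw [latticeWeight, h₀, cutoff_of_le_quarter (by norm_num), zero_mul]
  · by_contra! h₁
    exact h (by rw [latticeWeight, cutoff_of_one_le h₁.le, zero_mul])

theorem locallyLipschitz_latticeWeight : LocallyLipschitz (latticeWeight K) := by
  have hH : LocallyLipschitz fun p : ℝ × (Fin (rank K) → ℝ) => cutoff p.1 * ∏ i, tent (p.2 i) :=
    locallyLipschitz_fun_mul
      (locallyLipschitz_cutoff.comp LipschitzWith.prod_fst.locallyLipschitz)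
      (locallyLipschitz_finset_prod _ fun i _ => locallyLipschitz_tent.comp
        ((LipschitzWith.eval i).comp LipschitzWith.prod_snd).locallyLipschitz)
  intro x
  by_cases hx : mixedEmbedding.norm x = 0
  · have hnear : ∀ᶠ y in 𝓝 x, mixedEmbedding.norm y < 1 / 4 :=
      (mixedEmbedding.continuous_norm K).continuousAt.eventually_lt_const (by rw [hx]; norm_num)
    refine ⟨0, _, hnear, fun y hy z hz => ?_⟩
    simp only [latticeWeight, cutoff_of_le_quarter (le_of_lt hy),
      cutoff_of_le_quarter (le_of_lt hz), zero_mul, edist_self]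
    positivity
  · let coord (y : mixedSpace K) : ℝ × (Fin (rank K) → ℝ) := (mixedEmbedding.norm y, logCoord y)
    have hcoord : ContDiffAt ℝ 1 coord x :=
      (contDiffAt_mixedEmbedding_norm hx).prodMk (contDiffAt_logCoord hx)
    obtain ⟨C, U, hU, hC⟩ := hH (coord x)
    obtain ⟨C', V, hV, hC'⟩ := hcoord.exists_lipschitzOnWith
    have hcomp := hC.comp (hC'.mono Set.inter_subset_left) fun y (hy : y ∈ V ∩ coord ⁻¹' U) => hy.2
    exact ⟨_, _, Filter.inter_mem hV (hcoord.continuousAt.preimage_mem_nhds hU), hcomp⟩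

variable (K) in
theorem exists_lipschitzWith_latticeWeight : ∃ C, LipschitzWith C (latticeWeight K) := by
  obtain ⟨R, hR⟩ := exists_latticeWeight_eq_zero K
  refine exists_lipschitzWith_of_hasCompactSupport locallyLipschitz_latticeWeight ?_
  refine HasCompactSupport.intro (isCompact_closedBall 0 R) fun x hx => hR x ?_
  simpa using hx

end UnitWeight

/-! ### Smoothed counting of ideals -/

section Fibers

variable {ι κ : Type*} {ν : ι → κ}

theorem tsum_natCard_fiber_mul (hν : ∀ k, Finite {i // ν i = k}) (F : κ → ENNReal) :
    ∑' k, (Nat.card {i // ν i = k} : ENNReal) * F k = ∑' i, F (ν i) := by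
  rw [← (Equiv.sigmaFiberEquiv ν).tsum_eq, ENNReal.tsum_sigma']
  refine tsum_congr fun k => ?_
  have hfiber (i : {i // ν i = k}) : F (ν (Equiv.sigmaFiberEquiv ν ⟨k, i⟩)) = F k :=
    congrArg F i.2
  simp only [hfiber, ENNReal.tsum_const, ENat.card_eq_coe_natCard, ENat.toENNReal_coe]

end Fibers

section Generators

open Ideal nonZeroDivisors

theorem isPrincipal_mul_iff_mk0_eq {R : Type*} [CommRing R] [IsDedekindDomain R]
    {J : (Ideal R)⁰} {D : ClassGroup R} (hJ : ClassGroup.mk0 J = D⁻¹) (I : (Ideal R)⁰) :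
    (J * I : Ideal R).IsPrincipal ↔ ClassGroup.mk0 I = D := by
  have hmul := ClassGroup.mk0_eq_one_iff (mul_mem J.2 I.2)
  rw [← hmul, show (⟨J * I, mul_mem J.2 I.2⟩ : (Ideal R)⁰) = J * I from rfl, map_mul, hJ,
    inv_mul_eq_one, eq_comm]

theorem tsum_ideal_eq_tsum_classGroup_units {R : Type*} [CommRing R] [IsDedekindDomain R]
    {J : (Ideal R)⁰} {D : ClassGroup R} (hJ : ClassGroup.mk0 J = D⁻¹)
    {gen : {I : (Ideal R)⁰ // ClassGroup.mk0 I = D} → R}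
    (hgen : ∀ I, span {gen I} = (J * I : Ideal R)) {F : R → ENNReal} (hF : F 0 = 0) :
    ∑' α : (J : Ideal R), F α = ∑' I, ∑' u : Rˣ, F (u * gen I) := by
  have hJ₀ : (J : Ideal R) ≠ 0 := nonZeroDivisors.coe_ne_zero J
  have hgen₀ (I) : gen I ≠ 0 := by
    intro h
    refine mul_ne_zero hJ₀ (nonZeroDivisors.coe_ne_zero I.1) ?_
    rw [← hgen, h, span_singleton_zero, Ideal.zero_eq_bot]
  have hmem (I) : gen I ∈ (J : Ideal R) :=
    (hgen I ▸ Ideal.mul_le_left : span {gen I} ≤ J) (mem_span_singleton_self _)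
  let g (p : {I : (Ideal R)⁰ // ClassGroup.mk0 I = D} × Rˣ) : (J : Ideal R) :=
    ⟨p.2 * gen p.1, Ideal.mul_mem_left _ _ (hmem p.1)⟩
  have hinj : Function.Injective g := by
    rintro ⟨I, u⟩ ⟨I', u'⟩ h
    have hmul : (u : R) * gen I = u' * gen I' := Subtype.ext_iff.1 h
    have hspan : span {gen I} = span {gen I'} := by
      rw [← span_singleton_mul_left_unit u.isUnit, hmul, span_singleton_mul_left_unit u'.isUnit]
    rw [hgen, hgen] at hspan
    obtain rfl : I = I' := Subtype.ext (Subtype.ext (mul_left_cancel₀ hJ₀ hspan))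
    rw [Units.ext (mul_right_cancel₀ (hgen₀ I) hmul)]
  have hsupp : Function.support (fun α : (J : Ideal R) => F α) ⊆ Set.range g := by
    intro α hα
    have hα₀ : (α : R) ≠ 0 := fun h => hα (by simp only [h, hF])
    obtain ⟨I, hI⟩ := dvd_span_singleton.2 α.2
    have hI₀ : I ≠ 0 := by
      rintro rfl
      exact hα₀ (span_singleton_eq_bot.1 (hI.trans (mul_zero _)))
    let I' : (Ideal R)⁰ := ⟨I, mem_nonZeroDivisors_of_ne_zero hI₀⟩
    have hI' : ClassGroup.mk0 I' = D := (isPrincipal_mul_iff_mk0_eq hJ I').1 ⟨⟨α, hI.symm⟩⟩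
    obtain ⟨u, hu⟩ := span_singleton_eq_span_singleton.1 ((hgen ⟨I', hI'⟩).trans hI.symm)
    exact ⟨(⟨I', hI'⟩, u), Subtype.ext ((mul_comm _ _).trans hu)⟩
  rw [← hinj.tsum_eq hsupp, ENNReal.tsum_prod']

end Generators

section ClassSum

open NumberField NumberField.mixedEmbedding NumberField.Units NumberField.InfinitePlace
  NumberField.Units.dirichletUnitTheorem Module Ideal
open scoped Classical nonZeroDivisors

variable {K : Type*} [Field K] [NumberField K]

theorem norm_mixedEmbedding_coe (α : 𝓞 K) :
    mixedEmbedding.norm (mixedEmbedding K α) = absNorm (span {α}) := by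
  rw [norm_eq_norm, absNorm_span_singleton, ← Algebra.coe_norm_int]
  simp [Nat.cast_natAbs]

/-- Elements of the ideal `J` as points of the lattice it spans in the mixed space. -/
noncomputable def idealEquivLattice (J : (Ideal (𝓞 K))⁰) : (J : Ideal (𝓞 K)) ≃
    Submodule.span ℤ (Set.range (fractionalIdealLatticeBasis K (FractionalIdeal.mk0 K J))) :=
  Equiv.ofBijective (fun α => ⟨mixedEmbedding K (α : 𝓞 K), by
      rw [mem_span_fractionalIdealLatticeBasis]
      exact ⟨_, by simp, rfl⟩⟩) <| by
    constructor
    · intro α β h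
      exact Subtype.ext (RingOfIntegers.ext (mixedEmbedding_injective K (Subtype.ext_iff.1 h)))
    · rintro ⟨x, hx⟩
      rw [mem_span_fractionalIdealLatticeBasis] at hx
      obtain ⟨y, hy, rfl⟩ := hx
      have hy' : y ∈ ((J : Ideal (𝓞 K)) : FractionalIdeal (𝓞 K)⁰ K) := hy
      obtain ⟨α, hα, rfl⟩ := (FractionalIdeal.mem_coeIdeal _).1 hy'
      exact ⟨⟨α, hα⟩, rfl⟩

/-- The sum of `cutoff (t * N I)` over the nonzero ideals `I` in the class `D`. -/
noncomputable def smoothedClassSum (D : ClassGroup (𝓞 K)) (t : ℝ) : ENNReal :=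
  ∑' I : {I : (Ideal (𝓞 K))⁰ // ClassGroup.mk0 I = D},
    ENNReal.ofReal (cutoff (absNorm (I : Ideal (𝓞 K)) * t))

theorem tsum_ofReal_latticeWeight_units {α : 𝓞 K} (hα : α ≠ 0) {h : ℝ} (hh : 0 < h) :
    ∑' u : (𝓞 K)ˣ, ENNReal.ofReal (latticeWeight K (h • mixedEmbedding K (u * α : 𝓞 K))) =
      torsionOrder K * ENNReal.ofReal (cutoff (h ^ finrank ℚ K * absNorm (span {α}))) := by
  set x := mixedEmbedding K (α : K)
  have hx : mixedEmbedding.norm x ≠ 0 := by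
    rw [norm_mixedEmbedding_coe]
    simpa [absNorm_eq_zero_iff] using hα
  have hterm (u : (𝓞 K)ˣ) : latticeWeight K (h • mixedEmbedding K (u * α : 𝓞 K)) =
      cutoff (h ^ finrank ℚ K * absNorm (span {α})) * unitWeight K (u • x) := by
    have hux : mixedEmbedding K (u * α : 𝓞 K) = u • x := by
      rw [unitSMul_smul, ← map_mul]
      rfl
    rw [hux, latticeWeight, unitWeight_real_smul (by rwa [norm_unit_smul]) hh.ne',
      mixedEmbedding.norm_smul, norm_unit_smul, norm_mixedEmbedding_coe, abs_of_pos hh]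
  simp only [hterm, ENNReal.ofReal_mul (cutoff_nonneg _)]
  rw [ENNReal.tsum_mul_left, tsum_ofReal_unitWeight_units_smul hx, mul_comm]

theorem tsum_ofReal_latticeWeight {J : (Ideal (𝓞 K))⁰} {D : ClassGroup (𝓞 K)}
    (hJ : ClassGroup.mk0 J = D⁻¹) {h : ℝ} (hh : 0 < h) :
    ∑' l : Submodule.span ℤ (Set.range (fractionalIdealLatticeBasis K (FractionalIdeal.mk0 K J))),
      ENNReal.ofReal (latticeWeight K (h • (l : mixedSpace K))) =
    torsionOrder K * smoothedClassSum D (h ^ finrank ℚ K * absNorm (J : Ideal (𝓞 K))) := by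
  choose gen hgen using fun I : {I : (Ideal (𝓞 K))⁰ // ClassGroup.mk0 I = D} =>
    ((isPrincipal_mul_iff_mk0_eq hJ I.1).2 I.2).principal
  have hgen₀ (I) : gen I ≠ 0 := by
    intro h₀
    have hJI := nonZeroDivisors.coe_ne_zero (J * I.1)
    exact hJI ((hgen I).trans (by rw [h₀]; exact span_singleton_zero))
  have hzero : latticeWeight K (h • mixedEmbedding K ((0 : 𝓞 K) : K)) = 0 := by
    simp [latticeWeight, cutoff_of_le_quarter]
  rw [← (idealEquivLattice J).tsum_eq]
  refine (tsum_ideal_eq_tsum_classGroup_units hJ (fun I => (hgen I).symm)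
    (F := fun α => ENNReal.ofReal (latticeWeight K (h • mixedEmbedding K (α : K))))
    (by rw [hzero, ENNReal.ofReal_zero])).trans ?_
  simp only [tsum_ofReal_latticeWeight_units (hgen₀ _) hh]
  rw [smoothedClassSum, ← ENNReal.tsum_mul_left]
  refine tsum_congr fun I => ?_
  rw [← submodule_span_eq, ← hgen I, map_mul]
  push_cast
  ring_nf

theorem summable_latticeWeight {ι : Type*} [Finite ι] (b : Basis ι ℝ (mixedSpace K)) {h : ℝ}
    (hh : 0 < h) :
    Summable fun l : Submodule.span ℤ (Set.range b) =>
      latticeWeight K (h • (l : mixedSpace K)) := by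
  obtain ⟨R, hR⟩ := exists_latticeWeight_eq_zero K
  have hfin := ZSpan.setFinite_inter b (Metric.isBounded_closedBall (x := 0) (r := R / h))
  refine summable_of_hasFiniteSupport <| (hfin.preimage Subtype.val_injective.injOn).subset
    fun l hl => ⟨?_, l.2⟩
  rw [mem_closedBall_zero_iff, le_div_iff₀ hh]
  by_contra! hlt
  refine hl (hR _ ?_)
  rwa [_root_.norm_smul, Real.norm_of_nonneg hh.le, mul_comm]

theorem smoothedClassSum_ne_top_and_tsum_latticeWeight_eq {J : (Ideal (𝓞 K))⁰}
    {D : ClassGroup (𝓞 K)} (hJ : ClassGroup.mk0 J = D⁻¹) {h : ℝ} (hh : 0 < h) :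
    smoothedClassSum D (h ^ finrank ℚ K * absNorm (J : Ideal (𝓞 K))) ≠ ⊤ ∧
    ∑' l : Submodule.span ℤ (Set.range (fractionalIdealLatticeBasis K (FractionalIdeal.mk0 K J))),
      latticeWeight K (h • (l : mixedSpace K)) = torsionOrder K *
        (smoothedClassSum D (h ^ finrank ℚ K * absNorm (J : Ideal (𝓞 K)))).toReal := by
  have hsum := tsum_ofReal_latticeWeight hJ hh
  rw [← ENNReal.ofReal_tsum_of_nonneg (fun _ => latticeWeight_nonneg _)
    (summable_latticeWeight _ hh)] at hsum
  refine ⟨fun htop => ?_, ?_⟩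
  · rw [htop, ENNReal.mul_top (Nat.cast_ne_zero.2 (torsionOrder_ne_zero K))] at hsum
    exact ENNReal.ofReal_ne_top hsum
  · simpa [tsum_nonneg fun _ => latticeWeight_nonneg _] using congrArg ENNReal.toReal hsum

theorem exists_smoothedClassSum_bound (D : ClassGroup (𝓞 K)) : ∃ c C : ℝ, ∀ t, 0 < t → t ≤ 1 →
    smoothedClassSum D t ≠ ⊤ ∧
      |(smoothedClassSum D t).toReal - c / t| ≤ C * t ^ ((finrank ℚ K : ℝ)⁻¹ - 1) := by
  obtain ⟨J, hJ⟩ := ClassGroup.mk0_surjective D⁻¹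
  obtain ⟨L, hL⟩ := exists_lipschitzWith_latticeWeight K
  obtain ⟨R, hR⟩ := exists_latticeWeight_eq_zero K
  set b := fractionalIdealLatticeBasis K (FractionalIdeal.mk0 K J)
  obtain ⟨C, hC⟩ := exists_abs_tsum_span_smul_sub_le b MeasureTheory.Measure.addHaar hL hR
  set V := (MeasureTheory.Measure.addHaar.real (ZSpan.fundamentalDomain b))⁻¹ *
    ∫ x, latticeWeight K x ∂MeasureTheory.Measure.addHaar
  set n := finrank ℚ K
  set N : ℝ := (absNorm (J : Ideal (𝓞 K)) : ℝ)
  set w : ℝ := (torsionOrder K : ℝ)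
  have hn : n ≠ 0 := finrank_pos.ne'
  have hN : 1 ≤ N := Nat.one_le_cast.2 (absNorm_pos_of_nonZeroDivisors J)
  have hw : 0 < w := Nat.cast_pos.2 (torsionOrder_pos K)
  have hC₀ : 0 ≤ C := by simpa using (abs_nonneg _).trans (hC 1 one_pos le_rfl)
  refine ⟨V * N / w, C * N / w, fun t ht ht₁ => ?_⟩
  set h : ℝ := (t / N) ^ (n : ℝ)⁻¹
  have hh : 0 < h := by positivity
  have hhn : h ^ n = t / N := Real.rpow_inv_natCast_pow (by positivity) hn
  have hht : h ≤ t ^ (n : ℝ)⁻¹ :=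
    Real.rpow_le_rpow (by positivity) (div_le_self ht.le hN) (by positivity)
  have hh₁ : h ≤ 1 := hht.trans (Real.rpow_le_one ht.le ht₁ (by positivity))
  obtain ⟨hfinite, hsum⟩ := smoothedClassSum_ne_top_and_tsum_latticeWeight_eq hJ hh
  have hbound := hC h hh hh₁
  rw [hhn, div_mul_cancel₀ t (by positivity)] at hfinite hsum
  rw [mixedEmbedding.finrank, hhn, hsum] at hbound
  refine ⟨hfinite, ?_⟩
  calc |(smoothedClassSum D t).toReal - V * N / w / t|
      = N / (w * t) * |t / N * (w * (smoothedClassSum D t).toReal) - V| := by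
        rw [← abs_of_pos (by positivity : 0 < N / (w * t)), ← abs_mul]
        congr 1
        field_simp
    _ ≤ N / (w * t) * (C * t ^ (n : ℝ)⁻¹) := by
        gcongr
        exact hbound.trans (by gcongr)
    _ = C * N / w * t ^ ((n : ℝ)⁻¹ - 1) := by
        rw [Real.rpow_sub ht, Real.rpow_one]
        field_simp

variable (K) in
/-- The coefficients of the Dedekind zeta function. -/
noncomputable def dedekindCoeff (k : ℕ) : ℕ := Nat.card {I : Ideal (𝓞 K) // absNorm I = k}

theorem ofReal_sum_dedekindCoeff_mul_cutoff {t : ℝ} (ht : 0 < t) :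
    ENNReal.ofReal (∑ k ∈ Finset.range ⌈t⁻¹⌉₊, dedekindCoeff K k * cutoff (k * t)) =
      ∑ D : ClassGroup (𝓞 K), smoothedClassSum D t := by
  have hideal (F : ℕ → ENNReal) (hF : F 0 = 0) : ∑' I : Ideal (𝓞 K), F (absNorm I) =
      ∑' I : (Ideal (𝓞 K))⁰, F (absNorm (I : Ideal (𝓞 K))) := by
    refine (Subtype.val_injective.tsum_eq fun I hI => ?_).symm
    refine ⟨⟨I, mem_nonZeroDivisors_of_ne_zero ?_⟩, rfl⟩
    rintro rfl
    exact hI (by simp only [map_zero, hF])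
  set F : ℕ → ENNReal := fun k => ENNReal.ofReal (cutoff (k * t))
  calc ENNReal.ofReal (∑ k ∈ Finset.range ⌈t⁻¹⌉₊, dedekindCoeff K k * cutoff (k * t))
      = ∑ k ∈ Finset.range ⌈t⁻¹⌉₊, dedekindCoeff K k * F k := by
        rw [ENNReal.ofReal_sum_of_nonneg fun k _ =>
          mul_nonneg (Nat.cast_nonneg _) (cutoff_nonneg _)]
        simp only [ENNReal.ofReal_mul (Nat.cast_nonneg _), ENNReal.ofReal_natCast, F]
    _ = ∑' k, dedekindCoeff K k * F k := by
        refine (tsum_eq_sum fun k hk => ?_).symm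
        simp only [F, cutoff_mul_of_notMem_range ht le_rfl hk, ENNReal.ofReal_zero, mul_zero]
    _ = ∑' I : (Ideal (𝓞 K))⁰, F (absNorm (I : Ideal (𝓞 K))) := by
        rw [← hideal F (by simp [F, cutoff_of_le_quarter])]
        exact tsum_natCard_fiber_mul Ideal.finite_setOfPred_absNorm_eq F
    _ = ∑ D : ClassGroup (𝓞 K), smoothedClassSum D t := by
        rw [← (Equiv.sigmaFiberEquiv ClassGroup.mk0).tsum_eq, ENNReal.tsum_sigma', tsum_fintype]
        rfl

variable (K) in
theorem exists_smoothedSum_dedekindCoeff_bound : ∃ c C : ℝ, ∀ t : ℝ, 0 < t → t ≤ 1 →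
    ‖smoothedSum (fun k => dedekindCoeff K k) t - c / t‖ ≤
      C * t ^ ((finrank ℚ K : ℝ)⁻¹ - 1) := by
  choose c C hC using exists_smoothedClassSum_bound (K := K)
  refine ⟨∑ D, c D, ∑ D, C D, fun t ht ht₁ => ?_⟩
  have hsum : smoothedSum (fun k => dedekindCoeff K k) t =
      (∑ D : ClassGroup (𝓞 K), (smoothedClassSum D t).toReal : ℝ) := by
    rw [← ENNReal.toReal_sum fun D _ => (hC D t ht ht₁).1, ← ofReal_sum_dedekindCoeff_mul_cutoff ht,
      ENNReal.toReal_ofReal, smoothedSum_eq_sum_range _ ht le_rfl]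
    · push_cast
      rfl
    · exact Finset.sum_nonneg fun k _ => mul_nonneg (Nat.cast_nonneg _) (cutoff_nonneg _)
  rw [hsum, ← Complex.ofReal_div, ← Complex.ofReal_sub, Complex.norm_real, Real.norm_eq_abs,
    Finset.sum_div, ← Finset.sum_sub_distrib, Finset.sum_mul]
  exact (Finset.abs_sum_le_sum_abs _ _).trans (Finset.sum_le_sum fun D _ => (hC D t ht ht₁).2)

end ClassSum

/-! ### Dirichlet series indexed by arbitrary types -/

section ComplexFibers

variable {ι κ : Type*} {ν : ι → κ}

theorem summable_comp_iff_natCard_fiber_mul (hν : ∀ k, Finite {i // ν i = k}) (F : κ → ℂ) :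
    Summable (fun i => F (ν i)) ↔ Summable fun k => (Nat.card {i // ν i = k} : ℂ) * F k := by
  rw [← summable_norm_iff, ← tsum_enorm_ne_top_iff_summable_norm, ← summable_norm_iff,
    ← tsum_enorm_ne_top_iff_summable_norm, ← tsum_natCard_fiber_mul hν (fun k => ‖F k‖ₑ)]
  have hcard (k : κ) : ‖(Nat.card {i // ν i = k} : ℂ)‖ₑ = Nat.card {i // ν i = k} := by
    rw [← ofReal_norm, Complex.norm_natCast, ENNReal.ofReal_natCast]
  simp only [enorm_mul, hcard]

theorem hasSum_natCard_fiber_mul (hν : ∀ k, Finite {i // ν i = k}) {F : κ → ℂ} {z : ℂ}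
    (h : HasSum (fun i => F (ν i)) z) :
    HasSum (fun k => (Nat.card {i // ν i = k} : ℂ) * F k) z := by
  refine ((Equiv.sigmaFiberEquiv ν).hasSum_iff.mpr h).sigma fun k => ?_
  have := hν k
  have hfiber (i : {i // ν i = k}) : F (ν (Equiv.sigmaFiberEquiv ν ⟨k, i⟩)) = F k :=
    congrArg F i.2
  have := Fintype.ofFinite {i // ν i = k}
  rw [Nat.card_eq_fintype_card, ← nsmul_eq_mul, ← Finset.card_univ, ← Finset.sum_const]
  exact (hasSum_fintype _).congr_fun hfiber

theorem hasSum_comp_iff_natCard_fiber_mul (hν : ∀ k, Finite {i // ν i = k}) {F : κ → ℂ} {z : ℂ} :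
    HasSum (fun i => F (ν i)) z ↔ HasSum (fun k => (Nat.card {i // ν i = k} : ℂ) * F k) z := by
  refine ⟨hasSum_natCard_fiber_mul hν, fun h => ?_⟩
  have hsum := ((summable_comp_iff_natCard_fiber_mul hν F).mpr h.summable).hasSum
  rwa [← (hasSum_natCard_fiber_mul hν hsum).unique h]

end ComplexFibers

section PoleOrder

variable {ι κ : Type*}

/-- The series `∑ i, F i s` converges for `1 < s.re` to a function which, up to a holomorphic factor
on a half-plane containing `1` that does not vanish at `1`, is `(s - 1)⁻ᵐ`. -/
def HasPoleAtOne (F : ι → ℂ → ℂ) (m : ℕ) : Prop :=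
  ∃ δ > (0 : ℝ), ∃ g : ℂ → ℂ, DifferentiableOn ℂ g {s | 1 - δ < s.re} ∧ g 1 ≠ 0 ∧
    ∀ s : ℂ, 1 < s.re → HasSum (fun i => F i s) (g s / (s - 1) ^ m)

/-- The series `∑ i, F i σ` converges for all real `σ` exceeding some bound smaller than `1`. -/
def SummableLeftOfOne (F : ι → ℂ → ℂ) : Prop :=
  ∃ δ > (0 : ℝ), ∀ σ : ℝ, 1 - δ < σ → Summable fun i => F i σ

theorem HasPoleAtOne.mul {F : ι → ℂ → ℂ} {G : κ → ℂ → ℂ} {m n : ℕ} (hF : HasPoleAtOne F m)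
    (hG : HasPoleAtOne G n) :
    HasPoleAtOne (fun (x : ι × κ) s => F x.1 s * G x.2 s) (m + n) := by
  obtain ⟨δ, hδ, g, hg, hg₁, hFg⟩ := hF
  obtain ⟨ε, hε, h, hh, hh₁, hGh⟩ := hG
  refine ⟨min δ ε, lt_min hδ hε, g * h, ?_, mul_ne_zero hg₁ hh₁, fun s hs => ?_⟩
  · exact (hg.mono fun s (hs : 1 - min δ ε < s.re) =>
      show 1 - δ < s.re by linarith [min_le_left δ ε]).mul
      (hh.mono fun s (hs : 1 - min δ ε < s.re) =>
      show 1 - ε < s.re by linarith [min_le_right δ ε])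
  · rw [Pi.mul_apply, pow_add, mul_div_mul_comm]
    have hsum := summable_mul_of_summable_norm (f := (F · s)) (g := (G · s))
      (hFg s hs).summable.norm (hGh s hs).summable.norm
    exact HasSum.mul (f := (F · s)) (g := (G · s)) (hFg s hs) (hGh s hs) hsum

theorem SummableLeftOfOne.mul {F : ι → ℂ → ℂ} {G : κ → ℂ → ℂ} (hF : SummableLeftOfOne F)
    (hG : SummableLeftOfOne G) : SummableLeftOfOne fun (x : ι × κ) s => F x.1 s * G x.2 s := by
  obtain ⟨δ, hδ, hF⟩ := hF
  obtain ⟨ε, hε, hG⟩ := hG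
  refine ⟨min δ ε, lt_min hδ hε, fun σ hσ => ?_⟩
  have hFσ := hF σ (by linarith [min_le_left δ ε])
  have hGσ := hG σ (by linarith [min_le_right δ ε])
  exact summable_mul_of_summable_norm (f := (F · σ)) (g := (G · σ)) hFσ.norm hGσ.norm

theorem HasPoleAtOne.comp_affine {F : ι → ℂ → ℂ} {m : ℕ} (hF : HasPoleAtOne F m) {c : ℝ}
    (hc : 0 < c) : HasPoleAtOne (fun i s => F i (1 + c * (s - 1))) m := by
  obtain ⟨δ, hδ, g, hg, hg₁, hFg⟩ := hF
  have hre (s : ℂ) : (1 + c * (s - 1)).re = 1 + c * (s.re - 1) := by simp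
  refine ⟨δ / c, div_pos hδ hc, fun s => g (1 + c * (s - 1)) / c ^ m,
    (hg.comp (by fun_prop) fun s hs => ?_).div_const _, ?_, fun s hs => ?_⟩
  · have hs : δ / c > 1 - s.re := sub_lt_comm.mp hs
    rw [gt_iff_lt, lt_div_iff₀ hc] at hs
    change 1 - δ < (1 + c * (s - 1)).re
    rw [hre]
    linarith
  · simpa using ⟨hg₁, fun h : c = 0 => absurd h hc.ne'⟩
  · have hsum := hFg (1 + c * (s - 1)) (by
      rw [hre]
      linarith [mul_pos hc (sub_pos.mpr hs)])
    rwa [add_sub_cancel_left, mul_pow, ← div_div] at hsum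

theorem SummableLeftOfOne.comp_affine {F : ι → ℂ → ℂ} (hF : SummableLeftOfOne F) {c : ℝ}
    (hc : 0 < c) : SummableLeftOfOne fun i s => F i (1 + c * (s - 1)) := by
  obtain ⟨δ, hδ, hF⟩ := hF
  refine ⟨δ / c, div_pos hδ hc, fun σ hσ => ?_⟩
  have hσ : 1 - σ < δ / c := sub_lt_comm.mp hσ
  rw [lt_div_iff₀ hc] at hσ
  have hsum := hF (1 + c * (σ - 1)) (by linarith)
  push_cast at hsum
  exact hsum

theorem hasPoleAtOne_comp_equiv (e : ι ≃ κ) {F : κ → ℂ → ℂ} {m : ℕ} :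
    HasPoleAtOne (fun i => F (e i)) m ↔ HasPoleAtOne F m := by
  simp only [HasPoleAtOne, ← e.hasSum_iff (f := fun k => F k _), Function.comp_def]

theorem hasPoleAtOne_comp_iff {F : κ → ℂ → ℂ} {ν : ι → κ} (hν : ∀ k, Finite {i // ν i = k})
    {m : ℕ} : HasPoleAtOne (fun i => F (ν i)) m ↔
      HasPoleAtOne (fun k s => (Nat.card {i // ν i = k} : ℂ) * F k s) m := by
  simp only [HasPoleAtOne]
  simp_rw [fun s z => hasSum_comp_iff_natCard_fiber_mul hν (F := fun k => F k s) (z := z)]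

theorem summableLeftOfOne_comp_iff {F : κ → ℂ → ℂ} {ν : ι → κ} (hν : ∀ k, Finite {i // ν i = k}) :
    SummableLeftOfOne (fun i => F (ν i)) ↔
      SummableLeftOfOne fun k s => (Nat.card {i // ν i = k} : ℂ) * F k s := by
  simp only [SummableLeftOfOne]
  simp_rw [fun s => summable_comp_iff_natCard_fiber_mul hν (fun k => F k s)]

theorem indicator_eval (A : Set ι) (F : ι → ℂ → ℂ) (s : ℂ) :
    (fun i => A.indicator F i s) = A.indicator fun i => F i s := by
  ext i
  by_cases hi : i ∈ A <;> simp [hi]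

theorem hasPoleAtOne_indicator_iff (A : Set ι) {F : ι → ℂ → ℂ} {m : ℕ} :
    HasPoleAtOne (A.indicator F) m ↔ HasPoleAtOne (fun i : A => F i) m := by
  simp only [HasPoleAtOne, indicator_eval, ← hasSum_subtype_iff_indicator, Function.comp_def]

theorem summableLeftOfOne_indicator_iff (A : Set ι) {F : ι → ℂ → ℂ} :
    SummableLeftOfOne (A.indicator F) ↔ SummableLeftOfOne fun i : A => F i := by
  simp only [SummableLeftOfOne, indicator_eval, ← summable_subtype_iff_indicator, Function.comp_def]

/-- The terms `w i ^ (-s)` of the Dirichlet series attached to positive integers `w i`. -/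
noncomputable def zetaTerm (w : ι → ℕ+) (i : ι) (s : ℂ) : ℂ := ((w i : ℕ) : ℂ) ^ (-s)

theorem norm_zetaTerm (w : ι → ℕ+) (i : ι) (s : ℂ) :
    ‖zetaTerm w i s‖ = ((w i : ℕ) : ℝ) ^ (-s.re) := by
  rw [zetaTerm, Complex.norm_natCast_cpow_of_pos (w i).pos, Complex.neg_re]

theorem zetaTerm_ofReal (w : ι → ℕ+) (i : ι) (σ : ℝ) :
    zetaTerm w i σ = (((w i : ℕ) : ℝ) ^ (-σ) : ℝ) := by
  rw [zetaTerm, Complex.ofReal_cpow (Nat.cast_nonneg _), Complex.ofReal_neg, Complex.ofReal_natCast]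

theorem differentiable_zetaTerm (w : ι → ℕ+) (i : ι) : Differentiable ℂ (zetaTerm w i) :=
  fun _ => (differentiableAt_id.neg).const_cpow (Or.inl (Nat.cast_ne_zero.mpr (w i).ne_zero))

theorem SummableLeftOfOne.hasPoleAtOne_zetaTerm [Nonempty ι] {w : ι → ℕ+}
    (hw : SummableLeftOfOne (zetaTerm w)) : HasPoleAtOne (zetaTerm w) 0 := by
  obtain ⟨δ, hδ, hsum⟩ := hw
  have hbound (σ : ℝ) (hσ : 1 - δ < σ) : Summable fun i => ((w i : ℕ) : ℝ) ^ (-σ) :=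
    Complex.summable_ofReal.mp ((hsum σ hσ).congr fun i => zetaTerm_ofReal w i σ)
  have hle (s : ℂ) (hs : 1 - δ / 2 < s.re) (i : ι) :
      ‖zetaTerm w i s‖ ≤ ((w i : ℕ) : ℝ) ^ (-(1 - δ / 2)) := by
    rw [norm_zetaTerm]
    exact Real.rpow_le_rpow_of_exponent_le (Nat.one_le_cast.mpr (w i).pos) (by linarith)
  have hopen : IsOpen {s : ℂ | 1 - δ / 2 < s.re} := isOpen_lt continuous_const Complex.continuous_re
  refine ⟨δ / 2, half_pos hδ, fun s => ∑' i, zetaTerm w i s, ?_, ?_, fun s hs => ?_⟩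
  · exact Complex.differentiableOn_tsum_of_summable_norm (hbound _ (by linarith))
      (fun i => (differentiable_zetaTerm w i).differentiableOn) hopen fun i s hs => hle s hs i
  · have hval : ∑' i, zetaTerm w i 1 = ((∑' i, ((w i : ℕ) : ℝ) ^ (-1 : ℝ) : ℝ) : ℂ) := by
      rw [Complex.ofReal_tsum]
      exact tsum_congr fun i => mod_cast zetaTerm_ofReal w i 1
    change ∑' i, zetaTerm w i 1 ≠ 0
    rw [hval, Complex.ofReal_ne_zero]
    have hpos (i : ι) : 0 < ((w i : ℕ) : ℝ) ^ (-1 : ℝ) :=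
      Real.rpow_pos_of_pos (Nat.cast_pos.mpr (w i).pos) _
    exact ((hbound 1 (by linarith)).tsum_pos (fun i => (hpos i).le) (Classical.arbitrary ι)
      (hpos _)).ne'
  · rw [pow_zero, div_one]
    exact (Summable.of_norm_bounded (hbound _ (by linarith))
      (hle s (by linarith))).hasSum

end PoleOrder

section SplitPole

variable {ι κ : Type*} {N m n : ℕ}

/-- A family `F` of terms with indices weighted by `w` splits at `N` with a pole of order `m`: the
indices whose weight is prime to `N` contribute a pole of order `m` at `1`, those whose weight is
composed of primes dividing `N` a series converging to the left of `1`. -/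
def HasSplitPole (N : ℕ) (w : ι → ℕ+) (F : ι → ℂ → ℂ) (m : ℕ) : Prop :=
  HasPoleAtOne (fun i : {i // Disjoint (w i : ℕ).primeFactors N.primeFactors} => F i) m ∧
    SummableLeftOfOne fun i : {i // (w i : ℕ).primeFactors ⊆ N.primeFactors} => F i

theorem hasSplitPole_iff_indicator {w : ι → ℕ+} {F : ι → ℂ → ℂ} : HasSplitPole N w F m ↔
    HasPoleAtOne ({i | Disjoint (w i : ℕ).primeFactors N.primeFactors}.indicator F) m ∧
      SummableLeftOfOne ({i | (w i : ℕ).primeFactors ⊆ N.primeFactors}.indicator F) := by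
  rw [hasPoleAtOne_indicator_iff, summableLeftOfOne_indicator_iff]
  rfl

theorem indicator_mul_indicator_prod (A : Set ι) (B : Set κ) (F : ι → ℂ → ℂ) (G : κ → ℂ → ℂ) :
    (fun (x : ι × κ) s => A.indicator F x.1 s * B.indicator G x.2 s) =
      (A ×ˢ B).indicator fun x s => F x.1 s * G x.2 s := by
  ext x s
  by_cases hA : x.1 ∈ A <;> by_cases hB : x.2 ∈ B <;> simp [hA, hB]

theorem HasSplitPole.mul {v : ι → ℕ+} {w : κ → ℕ+} {F : ι → ℂ → ℂ} {G : κ → ℂ → ℂ}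
    (hF : HasSplitPole N v F m) (hG : HasSplitPole N w G n) :
    HasSplitPole N (fun x : ι × κ => v x.1 * w x.2) (fun x s => F x.1 s * G x.2 s) (m + n) := by
  have hprime (x : ι × κ) : ((v x.1 * w x.2 : ℕ+) : ℕ).primeFactors =
      (v x.1 : ℕ).primeFactors ∪ (w x.2 : ℕ).primeFactors := by
    rw [PNat.mul_coe, Nat.primeFactors_mul (v x.1).ne_zero (w x.2).ne_zero]
  rw [hasSplitPole_iff_indicator] at hF hG ⊢
  have hpole := hF.1.mul hG.1
  have hsummable := hF.2.mul hG.2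
  rw [indicator_mul_indicator_prod] at hpole hsummable
  simp only [hprime, Finset.disjoint_union_left, Finset.union_subset_iff]
  exact ⟨hpole, hsummable⟩

theorem HasSplitPole.comp_affine {w : ι → ℕ+} {F : ι → ℂ → ℂ} (h : HasSplitPole N w F m) {c : ℝ}
    (hc : 0 < c) : HasSplitPole N w (fun i s => F i (1 + c * (s - 1))) m :=
  ⟨h.1.comp_affine hc, h.2.comp_affine hc⟩

theorem HasSplitPole.of_fiber {w : ι → ℕ+} {w' : κ → ℕ+} {ν : ι → κ}
    (hν : ∀ k, Finite {i // ν i = k})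
    (hw : ∀ i, (w i : ℕ).primeFactors = (w' (ν i) : ℕ).primeFactors) {F : κ → ℂ → ℂ}
    (h : HasSplitPole N w' (fun k s => (Nat.card {i // ν i = k} : ℂ) * F k s) m) :
    HasSplitPole N w (fun i => F (ν i)) m := by
  have hmul (A : Set κ) : A.indicator (fun k s => (Nat.card {i // ν i = k} : ℂ) * F k s) =
      fun k s => (Nat.card {i // ν i = k} : ℂ) * A.indicator F k s := by
    ext k s
    by_cases hk : k ∈ A <;> simp [hk]
  rw [hasSplitPole_iff_indicator, hmul, hmul, ← hasPoleAtOne_comp_iff hν,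
    ← summableLeftOfOne_comp_iff hν] at h
  rw [hasSplitPole_iff_indicator]
  simp only [hw]
  exact h

theorem HasSplitPole.of_equiv {w : ι → ℕ+} {w' : κ → ℕ+} (e : ι ≃ κ)
    (hw : ∀ i, w i = w' (e i)) {F : κ → ℂ → ℂ} (h : HasSplitPole N w' F m) :
    HasSplitPole N w (fun i => F (e i)) m := by
  have hfiber (k : κ) : Unique {i // e i = k} :=
    { default := ⟨e.symm k, e.apply_symm_apply k⟩
      uniq := fun i => Subtype.ext (e.eq_symm_apply.mpr i.2) }
  refine of_fiber (fun k => inferInstance) (fun i => by rw [hw i]) ?_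
  simpa only [Nat.card_unique, Nat.cast_one, one_mul] using h

end SplitPole

/-! ### Ideals of finite index -/

section CardQuot

open Submodule

variable {R S : Type*} [CommRing R] [CommRing S]

theorem natCast_cardQuot_mem (I : Ideal R) : (cardQuot I : R) ∈ I := by
  rw [← Ideal.Quotient.eq_zero_iff_mem, map_natCast, ← nsmul_one]
  exact card_nsmul_eq_zero'

theorem dvd_of_prime_dvd_cardQuot {I : Ideal R} (hI : cardQuot I ≠ 0) {p : ℕ} (hp : p.Prime)
    (hpI : p ∣ cardQuot I) {n : ℕ} (hn : (n : R) ∈ I) : p ∣ n := by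
  have : Finite (R ⧸ I) := Nat.finite_of_card_ne_zero hI
  have := Fact.mk hp
  obtain ⟨x, hx⟩ := exists_prime_addOrderOf_dvd_card' (G := R ⧸ I) p hpI
  rw [← hx, addOrderOf_dvd_iff_nsmul_eq_zero, nsmul_eq_mul, ← map_natCast (Ideal.Quotient.mk I),
    Ideal.Quotient.eq_zero_iff_mem.mpr hn, zero_mul]

theorem cardQuot_primeFactors_subset {I : Ideal R} {n : ℕ} (hn₀ : n ≠ 0) (hn : (n : R) ∈ I) :
    (cardQuot I).primeFactors ⊆ n.primeFactors := fun p hp => by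
  obtain ⟨hp, hpI, hI⟩ := Nat.mem_primeFactors.mp hp
  exact Nat.mem_primeFactors.mpr ⟨hp, dvd_of_prime_dvd_cardQuot hI hp hpI hn, hn₀⟩

theorem isCoprime_of_coprime_cardQuot {I J : Ideal R} (h : (cardQuot I).Coprime (cardQuot J)) :
    IsCoprime I J := by
  obtain ⟨u, v, huv⟩ := h.cast (R := R)
  exact Ideal.isCoprime_iff_exists.mpr ⟨_, I.mul_mem_left u (natCast_cardQuot_mem I), _,
    J.mul_mem_left v (natCast_cardQuot_mem J), huv⟩

theorem cardQuot_ne_zero (I : Ideal R) [Finite (R ⧸ I)] : cardQuot I ≠ 0 :=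
  (Nat.card_pos (α := R ⧸ I)).ne'

theorem cardQuot_ne_zero_of_le {I J : Ideal R} (hI : cardQuot I ≠ 0) (hIJ : I ≤ J) :
    cardQuot J ≠ 0 := by
  have : Finite (R ⧸ I) := Nat.finite_of_card_ne_zero hI
  have : Finite (R ⧸ J) := Finite.of_surjective _ (Ideal.Quotient.factor_surjective hIJ)
  exact cardQuot_ne_zero J

theorem cardQuot_ideal_prod (I : Ideal R) (J : Ideal S) :
    cardQuot (I.prod J) = cardQuot I * cardQuot J := by
  let φ : R × S →+* (R ⧸ I) × (S ⧸ J) := (Ideal.Quotient.mk I).prodMap (Ideal.Quotient.mk J)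
  have hker : RingHom.ker φ = I.prod J := by
    ext x
    simp [φ, Ideal.mem_prod]
  rw [← hker, cardQuot_apply, cardQuot_apply, cardQuot_apply, ← Nat.card_prod]
  exact Nat.card_congr (RingHom.quotientKerEquivOfSurjective
    (Ideal.Quotient.mk_surjective.prodMap Ideal.Quotient.mk_surjective)).toEquiv

theorem le_of_inf_le_of_isCoprime {I J K : Ideal R} (hJK : IsCoprime J K) (h : I ⊓ J ≤ K) :
    I ≤ K := calc
  I = I * J ⊔ I * K := by
    rw [← Ideal.mul_sup, Ideal.isCoprime_iff_sup_eq.mp hJK, Ideal.mul_top]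
  _ ≤ K := sup_le (Ideal.mul_le_inf.trans h) Ideal.mul_le_right

end CardQuot

section FiniteIndexIdeal

variable {R S : Type*} [CommRing R] [CommRing S] {N m n : ℕ}

variable (R) in
/-- The ideals with finite quotient; `Submodule.cardQuot` assigns `0` to the remaining ideals. -/
abbrev FiniteIndexIdeal : Type _ := {I : Ideal R // Submodule.cardQuot I ≠ 0}

/-- The number of elements of the quotient by an ideal of finite index. -/
noncomputable def FiniteIndexIdeal.index (I : FiniteIndexIdeal R) : ℕ+ :=
  ⟨Submodule.cardQuot I.1, Nat.pos_of_ne_zero I.2⟩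

open FiniteIndexIdeal (index)

theorem natCast_index_mem (I : FiniteIndexIdeal R) : (((index I : ℕ+) : ℕ) : R) ∈ I.1 :=
  natCast_cardQuot_mem I.1

variable (R N) in
/-- The ideals whose finite index is prime to `N`. -/
abbrev CoprimeIdeal : Type _ :=
  {I : FiniteIndexIdeal R // Disjoint (index I : ℕ).primeFactors N.primeFactors}

variable (R N) in
/-- The ideals whose finite index is composed of primes dividing `N`. -/
abbrev FactoredIdeal : Type _ :=
  {I : FiniteIndexIdeal R // (index I : ℕ).primeFactors ⊆ N.primeFactors}

theorem coprime_index (I : CoprimeIdeal R N) (J : FactoredIdeal R N) :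
    (index I.1 : ℕ).Coprime (index J.1) :=
  (Nat.disjoint_primeFactors (index I.1).ne_zero (index J.1).ne_zero).mp (I.2.mono_right J.2)

theorem exists_eq_mul_disjoint_primeFactors (N : ℕ) {n : ℕ} (hn : n ≠ 0) :
    ∃ a b, a * b = n ∧ Disjoint a.primeFactors N.primeFactors ∧
      b.primeFactors ⊆ N.primeFactors := by
  induction n using induction_on_primes with
  | zero => exact absurd rfl hn
  | one => exact ⟨1, 1, by simp⟩
  | prime_mul p c hp ih =>
    obtain ⟨a, b, rfl, ha, hb⟩ := ih (right_ne_zero_of_mul hn)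
    have ⟨ha₀, hb₀⟩ := mul_ne_zero_iff.mp (right_ne_zero_of_mul hn)
    by_cases hpN : p ∈ N.primeFactors
    · refine ⟨a, p * b, mul_left_comm a p b, ha, ?_⟩
      rw [Nat.primeFactors_mul hp.ne_zero hb₀, hp.primeFactors]
      exact Finset.union_subset (Finset.singleton_subset_iff.mpr hpN) hb
    · refine ⟨p * a, b, mul_assoc p a b, ?_, hb⟩
      rw [Nat.primeFactors_mul hp.ne_zero ha₀, hp.primeFactors]
      exact Finset.disjoint_union_left.mpr ⟨Finset.disjoint_singleton_left.mpr hpN, ha⟩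

theorem cardQuot_inf (I : CoprimeIdeal R N) (J : FactoredIdeal R N) :
    Submodule.cardQuot (I.1.1 ⊓ J.1.1) = index I.1 * index J.1 := by
  have hcop := isCoprime_of_coprime_cardQuot (coprime_index I J)
  rw [← Ideal.mul_eq_inf_of_coprime (Ideal.isCoprime_iff_sup_eq.mp hcop)]
  exact cardQuot_mul_of_coprime hcop

/-- The intersection of an ideal of index prime to `N` with one of index composed of primes
dividing `N`. -/
noncomputable def coprimeInfFactored (N : ℕ) (x : CoprimeIdeal R N × FactoredIdeal R N) :
    FiniteIndexIdeal R :=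
  ⟨x.1.1.1 ⊓ x.2.1.1, by
    rw [cardQuot_inf]
    exact mul_ne_zero (index x.1.1).ne_zero (index x.2.1).ne_zero⟩

theorem coprimeInfFactored_injective (N : ℕ) :
    Function.Injective (coprimeInfFactored (R := R) N) := by
  rintro ⟨I, J⟩ ⟨I', J'⟩ h
  have h : I.1.1 ⊓ J.1.1 = I'.1.1 ⊓ J'.1.1 := congrArg Subtype.val h
  have hcop (I : CoprimeIdeal R N) (J : FactoredIdeal R N) : IsCoprime I.1.1 J.1.1 :=
    isCoprime_of_coprime_cardQuot (coprime_index I J)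
  have hI : I.1.1 = I'.1.1 := le_antisymm
    (le_of_inf_le_of_isCoprime (hcop I' J).symm (h.trans_le inf_le_left))
    (le_of_inf_le_of_isCoprime (hcop I J').symm (h.symm.trans_le inf_le_left))
  rw [inf_comm, inf_comm I'.1.1] at h
  have hJ : J.1.1 = J'.1.1 := le_antisymm
    (le_of_inf_le_of_isCoprime (hcop I J') (h.trans_le inf_le_left))
    (le_of_inf_le_of_isCoprime (hcop I' J) (h.symm.trans_le inf_le_left))
  exact Prod.ext (Subtype.ext (Subtype.ext hI)) (Subtype.ext (Subtype.ext hJ))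

theorem coprimeInfFactored_surjective (N : ℕ) :
    Function.Surjective (coprimeInfFactored (R := R) N) := by
  intro I
  obtain ⟨a, b, hab, ha, hb⟩ := exists_eq_mul_disjoint_primeFactors N (index I).ne_zero
  have ⟨ha₀, hb₀⟩ := mul_ne_zero_iff.mp (hab ▸ (index I).ne_zero)
  let extend (n : ℕ) : FiniteIndexIdeal R :=
    ⟨I.1 ⊔ Ideal.span {(n : R)}, cardQuot_ne_zero_of_le I.2 le_sup_left⟩
  have hextend {n : ℕ} (hn : n ≠ 0) : (index (extend n) : ℕ).primeFactors ⊆ n.primeFactors :=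
    cardQuot_primeFactors_subset hn (Ideal.mem_sup_right (Ideal.mem_span_singleton_self _))
  let A : CoprimeIdeal R N := ⟨extend a, ha.mono_left (hextend ha₀)⟩
  let B : FactoredIdeal R N := ⟨extend b, (hextend hb₀).trans hb⟩
  refine ⟨(A, B), Subtype.ext (le_antisymm ?_ (le_inf le_sup_left le_sup_left))⟩
  have hcop := isCoprime_of_coprime_cardQuot (coprime_index A B)
  change A.1.1 ⊓ B.1.1 ≤ I.1
  rw [← Ideal.mul_eq_inf_of_coprime (Ideal.isCoprime_iff_sup_eq.mp hcop)]
  change (I.1 ⊔ Ideal.span {(a : R)}) * (I.1 ⊔ Ideal.span {(b : R)}) ≤ I.1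
  rw [Ideal.sup_mul, Ideal.mul_sup (Ideal.span {(a : R)}),
    Ideal.span_singleton_mul_span_singleton, ← Nat.cast_mul, hab]
  refine sup_le Ideal.mul_le_left (sup_le Ideal.mul_le_right ?_)
  exact (Ideal.span_singleton_le_iff_mem _).mpr (natCast_index_mem I)

variable (R) in
/-- Every ideal of finite index is uniquely the intersection of one of index prime to `N` with one
of index composed of primes dividing `N`. -/
noncomputable def coprimeProdFactoredEquiv (N : ℕ) :
    CoprimeIdeal R N × FactoredIdeal R N ≃ FiniteIndexIdeal R :=
  Equiv.ofBijective (coprimeInfFactored N)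
    ⟨coprimeInfFactored_injective N, coprimeInfFactored_surjective N⟩

theorem zetaTerm_coprimeProdFactoredEquiv (x : CoprimeIdeal R N × FactoredIdeal R N) (s : ℂ) :
    zetaTerm index (coprimeProdFactoredEquiv R N x) s =
      zetaTerm index x.1.1 s * zetaTerm index x.2.1 s := by
  rw [zetaTerm, show ((index (coprimeProdFactoredEquiv R N x) : ℕ+) : ℕ) = _ from
    cardQuot_inf x.1 x.2, Nat.cast_mul, Complex.natCast_mul_natCast_cpow]
  rfl

theorem HasSplitPole.hasPoleAtOne_index (h : HasSplitPole N (index (R := R)) (zetaTerm index) m) :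
    HasPoleAtOne (zetaTerm (index (R := R))) m := by
  have : Nonempty (FactoredIdeal R N) := ⟨⟨⟨⊤, by simp⟩, by simp [index]⟩⟩
  have hfactored : HasPoleAtOne (zetaTerm fun I : FactoredIdeal R N => index I.1) 0 :=
    SummableLeftOfOne.hasPoleAtOne_zetaTerm h.2
  rw [← hasPoleAtOne_comp_equiv (coprimeProdFactoredEquiv R N), ← add_zero m]
  convert h.1.mul hfactored using 3 with x s
  exact zetaTerm_coprimeProdFactoredEquiv x s

theorem finite_cardQuot_eq {k : ℕ} (hk : Finite (R ⧸ Ideal.span {(k : R)})) :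
    {I : Ideal R | Submodule.cardQuot I = k}.Finite := by
  have hle : {I : Ideal R | Ideal.span {(k : R)} ≤ I}.Finite := by
    have e := (Ideal.relIsoOfSurjective (Ideal.Quotient.mk (Ideal.span {(k : R)}))
      Ideal.Quotient.mk_surjective).toEquiv
    rw [← RingHom.ker_eq_comap_bot, Ideal.mk_ker] at e
    exact Finite.of_equiv _ e
  refine hle.subset fun I hI => ?_
  obtain rfl := hI
  exact (Ideal.span_singleton_le_iff_mem _).mpr (natCast_cardQuot_mem I)

variable (R) in
/-- The ideals of finite index `k`, regarded as ideals with a quotient of cardinality `k`. -/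
def indexFiberEquiv (k : ℕ+) :
    {I : FiniteIndexIdeal R // index I = k} ≃ {I : Ideal R // Submodule.cardQuot I = k} where
  toFun I := ⟨I.1.1, congrArg PNat.val I.2⟩
  invFun I := ⟨⟨I.1, I.2.trans_ne k.ne_zero⟩, PNat.eq I.2⟩
  left_inv _ := rfl
  right_inv _ := rfl

theorem HasPoleAtOne.idealCount {R : Type} [CommRing R]
    (hfin : ∀ k : ℕ+, Finite (R ⧸ Ideal.span {((k : ℕ) : R)}))
    (h : HasPoleAtOne (zetaTerm (index (R := R))) m) :
    HasPoleAtOne (fun (k : ℕ+) s => (idealCount R k : ℂ) / (k : ℂ) ^ s) m := by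
  have hfiber (k : ℕ+) : Finite {I : FiniteIndexIdeal R // index I = k} :=
    have : Finite {I : Ideal R // Submodule.cardQuot I = k} :=
      (finite_cardQuot_eq (hfin k)).to_subtype
    Finite.of_equiv _ (indexFiberEquiv R k).symm
  have hcount :=
    (hasPoleAtOne_comp_iff (F := fun (k : ℕ+) s => ((k : ℕ) : ℂ) ^ (-s)) hfiber).mp h
  convert hcount using 3 with k s
  rw [Complex.cpow_neg, div_eq_mul_inv, Nat.card_congr (indexFiberEquiv R k)]
  rfl

variable (R) in
/-- For every `N ≠ 0` the zeta function of the ideals of `R` of finite index splits at `N`, with a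
pole of order `m` at `1`. -/
def HasIdealZetaPole (m : ℕ) : Prop :=
  ∀ N ≠ 0, HasSplitPole N (index (R := R)) (zetaTerm index) m

theorem HasIdealZetaPole.of_subsingleton [Subsingleton R] : HasIdealZetaPole R 0 := by
  have hsummable {ι : Type _} [Finite ι] (w : ι → ℕ+) : SummableLeftOfOne (zetaTerm w) :=
    ⟨1, one_pos, fun _ _ => Summable.of_finite⟩
  have hindex (I : FiniteIndexIdeal R) : (index I : ℕ) = 1 := Nat.card_unique (α := R ⧸ I.1)
  intro N _
  have : Nonempty (CoprimeIdeal R N) := ⟨⟨⟨⊤, by simp⟩, by simp [hindex]⟩⟩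
  exact ⟨(hsummable fun I : CoprimeIdeal R N => index I.1).hasPoleAtOne_zetaTerm,
    hsummable fun I : FactoredIdeal R N => index I.1⟩

/-- The ideals of finite index of a product are the products of ideals of finite index. -/
def finiteIndexIdealProdEquiv :
    FiniteIndexIdeal (R × S) ≃ FiniteIndexIdeal R × FiniteIndexIdeal S :=
  ((Ideal.idealProdEquiv (R := R) (S := S)).toEquiv.subtypeEquiv
    (q := fun x : Ideal R × Ideal S => Submodule.cardQuot x.1 ≠ 0 ∧ Submodule.cardQuot x.2 ≠ 0)
    fun I => by
      conv_lhs => rw [Ideal.ideal_prod_eq I, cardQuot_ideal_prod]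
      exact mul_ne_zero_iff).trans
    (Equiv.subtypeProdEquivProd (p := fun I : Ideal R => Submodule.cardQuot I ≠ 0)
      (q := fun J : Ideal S => Submodule.cardQuot J ≠ 0))

theorem index_finiteIndexIdealProdEquiv (I : FiniteIndexIdeal (R × S)) :
    index I = index (finiteIndexIdealProdEquiv I).1 * index (finiteIndexIdealProdEquiv I).2 := by
  refine PNat.eq ?_
  change Submodule.cardQuot I.1 = _
  rw [Ideal.ideal_prod_eq I.1, cardQuot_ideal_prod]
  rfl

theorem HasIdealZetaPole.prod (hR : HasIdealZetaPole R m) (hS : HasIdealZetaPole S n) :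
    HasIdealZetaPole (R × S) (m + n) := by
  intro N hN
  convert ((hR N hN).mul (hS N hN)).of_equiv finiteIndexIdealProdEquiv
    index_finiteIndexIdealProdEquiv using 2 with I
  ext s
  rw [zetaTerm, index_finiteIndexIdealProdEquiv, PNat.mul_coe, Nat.cast_mul,
    Complex.natCast_mul_natCast_cpow]
  rfl

end FiniteIndexIdeal

/-! ### Dedekind zeta functions -/

section EulerProduct

variable {α : Type*} [CommMonoidWithZero α]

/-- The nonzero elements all of whose prime divisors lie in `S`. -/
def factoredElements (S : Set α) : Set α := {a | a ≠ 0 ∧ ∀ p, Prime p → p ∣ a → p ∈ S}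

theorem not_dvd_of_mem_factoredElements {S : Set α} {p a : α} (hp : Prime p) (hpS : p ∉ S)
    (ha : a ∈ factoredElements S) : ¬p ∣ a := fun h => hpS (ha.2 p hp h)

variable [UniqueFactorizationMonoid α] [Subsingleton αˣ]

theorem factoredElements_empty [Nontrivial α] : factoredElements (∅ : Set α) = {1} := by
  ext a
  refine ⟨fun ha => ?_, ?_⟩
  · by_contra ha₁
    obtain ⟨p, hp, hpa⟩ := WfDvdMonoid.exists_irreducible_factor
      (fun h => ha₁ (isUnit_iff_eq_one.mp h)) ha.1
    exact ha.2 p hp.prime hpa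
  · rintro rfl
    exact ⟨one_ne_zero, fun p hp hpa => hp.not_dvd_one hpa⟩

theorem pow_mul_mem_factoredElements_insert {S : Set α} {p a : α} (hp : Prime p)
    (ha : a ∈ factoredElements S) (n : ℕ) : p ^ n * a ∈ factoredElements (insert p S) := by
  refine ⟨mul_ne_zero (pow_ne_zero n hp.ne_zero) ha.1, fun q hq hqa => ?_⟩
  rcases hq.dvd_or_dvd hqa with hqp | hqa
  · exact Or.inl (associated_iff_eq.mp
      ((hq.dvd_prime_iff_associated hp).mp (hq.dvd_of_dvd_pow hqp)))
  · exact Or.inr (ha.2 q hq hqa)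

theorem bijective_pow_mul_factoredElements {S : Set α} {p : α} (hp : Prime p)
    (hpS : p ∉ S) : Function.Bijective fun x : ℕ × factoredElements S =>
      (⟨p ^ x.1 * x.2, pow_mul_mem_factoredElements_insert hp x.2.2 x.1⟩ :
        factoredElements (insert p S)) := by
  constructor
  · rintro ⟨n, a⟩ ⟨m, b⟩ h
    have h : p ^ n * a.1 = p ^ m * b.1 := congrArg Subtype.val h
    have hmult (n : ℕ) (a : factoredElements S) : multiplicity p (p ^ n * a.1) = n := by
      refine multiplicity_eq_of_dvd_of_not_dvd (dvd_mul_right _ _) ?_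
      rw [pow_succ, mul_dvd_mul_iff_left (pow_ne_zero n hp.ne_zero)]
      exact not_dvd_of_mem_factoredElements hp hpS a.2
    obtain rfl : n = m := by rw [← hmult n a, h, hmult]
    exact Prod.ext rfl (Subtype.ext (mul_left_cancel₀ (pow_ne_zero n hp.ne_zero) h))
  · rintro ⟨b, hb₀, hb⟩
    obtain ⟨a, hab, hpa⟩ := (FiniteMultiplicity.of_not_isUnit hp.not_isUnit
      hb₀).exists_eq_pow_mul_and_not_dvd
    have ha : a ∈ factoredElements S := by
      refine ⟨right_ne_zero_of_mul (hab ▸ hb₀), fun q hq hqa => ?_⟩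
      refine (hb q hq (hab ▸ hqa.mul_left _)).resolve_left ?_
      rintro rfl
      exact hpa hqa
    exact ⟨(_, ⟨a, ha⟩), Subtype.ext hab.symm⟩

theorem hasSum_factoredElements [Nontrivial α] (c : α →* ℂ) (S : Finset α) (hS : ∀ p ∈ S, Prime p)
    (hc : ∀ p ∈ S, ‖c p‖ < 1) :
    HasSum (fun a : factoredElements (S : Set α) => c a) (∏ p ∈ S, (1 - c p)⁻¹) := by
  classical
  induction S using Finset.induction_on with
  | empty =>
    rw [Finset.coe_empty, factoredElements_empty, Finset.prod_empty, ← map_one c]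
    exact hasSum_unique (fun a : ({1} : Set α) => c a)
  | insert p S hpS ih =>
    rw [Finset.forall_mem_insert] at hS hc
    obtain ⟨⟨hp, hS⟩, hcp, hc⟩ := And.intro hS hc
    have hgeom := hasSum_geometric_of_norm_lt_one hcp
    let d (a : factoredElements (S : Set α)) : ℂ := c a
    have hmul := HasSum.mul (f := (c p ^ ·)) (g := d) hgeom (ih hS hc)
      (summable_mul_of_summable_norm (f := (c p ^ ·)) (g := d) hgeom.summable.norm
        (ih hS hc).summable.norm)
    rw [Finset.prod_insert hpS, Finset.coe_insert,
      ← (Equiv.ofBijective _ (bijective_pow_mul_factoredElements hp hpS)).hasSum_iff]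
    simpa [Function.comp_def, d] using hmul

end EulerProduct

section

variable {R : Type*} [CommRing R] {N : ℕ}

open FiniteIndexIdeal (index)

theorem primeFactors_index_subset_iff (hN : N ≠ 0) (I : FiniteIndexIdeal R) :
    (index I : ℕ).primeFactors ⊆ N.primeFactors ↔ (N : R) ∈ I.1.radical := by
  constructor
  · intro h
    obtain ⟨k, hk⟩ := (Nat.exists_dvd_pow_iff (index I).ne_zero hN).mpr h
    refine ⟨k, ?_⟩
    rw [← Nat.cast_pow]
    exact I.1.mem_of_dvd (Nat.cast_dvd_cast hk) (natCast_index_mem I)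
  · rintro ⟨k, hk⟩
    rw [← Nat.cast_pow] at hk
    refine (cardQuot_primeFactors_subset (pow_ne_zero k hN) hk).trans ?_
    rcases eq_or_ne k 0 with rfl | hk₀
    · simp
    · rw [Nat.primeFactors_pow N hk₀]

end

section Dedekind

open NumberField Ideal Module Filter Topology
open scoped nonZeroDivisors
open FiniteIndexIdeal (index)

variable {K : Type*} [Field K] [NumberField K] {N : ℕ}

theorem sum_dedekindCoeff_Icc (n : ℕ) : ∑ k ∈ Finset.Icc 1 n, dedekindCoeff K k =
    Nat.card {I : (Ideal (𝓞 K))⁰ // absNorm (I : Ideal (𝓞 K)) ≤ n} := by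
  let norm (I : {I : (Ideal (𝓞 K))⁰ // absNorm (I : Ideal (𝓞 K)) ≤ n}) : Finset.Icc 1 n :=
    ⟨absNorm (I.1 : Ideal (𝓞 K)), Finset.mem_Icc.mpr ⟨absNorm_pos_of_nonZeroDivisors I.1, I.2⟩⟩
  have hfiber (k : Finset.Icc 1 n) :
      {I // norm I = k} ≃ {I : Ideal (𝓞 K) // absNorm I = k} := {
    toFun I := ⟨I.1.1.1, congrArg Subtype.val I.2⟩
    invFun I := ⟨⟨⟨I.1, absNorm_pos_iff_mem_nonZeroDivisors.mp
      (I.2.symm ▸ (Finset.mem_Icc.mp k.2).1)⟩, I.2.trans_le (Finset.mem_Icc.mp k.2).2⟩,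
      Subtype.ext I.2⟩
    left_inv _ := rfl
    right_inv _ := rfl }
  have (k : Finset.Icc 1 n) : Finite {I // norm I = k} :=
    have : Finite {I : Ideal (𝓞 K) // absNorm I = k} := finite_setOfPred_absNorm_eq (k : ℕ)
    Finite.of_equiv _ (hfiber k).symm
  rw [← Nat.card_congr (Equiv.sigmaFiberEquiv norm), Nat.card_sigma, ← Finset.sum_coe_sort]
  exact Finset.sum_congr rfl fun k _ => (Nat.card_congr (hfiber k)).symm

theorem lseriesSummable_dedekindCoeff {s : ℂ} (hs : 1 < s.re) :
    LSeriesSummable (fun k => dedekindCoeff K k) s := by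
  have hcount := (tendsto_norm_le_div_atTop₀ K).comp tendsto_natCast_atTop_atTop
  have hpartial : (fun n : ℕ => ∑ k ∈ Finset.Icc 1 n, (dedekindCoeff K k : ℝ)) =O[atTop]
      fun n => (n : ℝ) ^ (1 : ℝ) := by
    refine Asymptotics.isBigO_atTop_natCast_rpow_of_tendsto_div_rpow (hcount.congr fun n => ?_)
    simp [← Nat.cast_sum, sum_dedekindCoeff_Icc]
  exact mod_cast LSeriesSummable_of_sum_norm_bigO_and_nonneg hpartial
    (fun _ => Nat.cast_nonneg _) zero_le_one hs

variable (K) in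
theorem exists_differentiableOn_dedekindZeta_eq_div_sub_one :
    ∃ δ > (0 : ℝ), ∃ g : ℂ → ℂ, DifferentiableOn ℂ g {s | 1 - δ < s.re} ∧ g 1 ≠ 0 ∧
      ∀ s : ℂ, 1 < s.re → dedekindZeta K s = g s / (s - 1) := by
  obtain ⟨c, C, herror⟩ := exists_smoothedSum_dedekindCoeff_bound K
  have hn : 1 ≤ (finrank ℚ K : ℝ) := Nat.one_le_cast.mpr finrank_pos
  have hδ : 0 < (finrank ℚ K : ℝ)⁻¹ := inv_pos.mpr (by linarith)
  obtain ⟨g, hg, hgs⟩ := exists_differentiableOn_LSeries_eq_div_sub_one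
    (fun s hs => lseriesSummable_dedekindCoeff hs) hδ (inv_le_one_of_one_le₀ hn) herror
  refine ⟨_, hδ, g, hg, ?_, hgs⟩
  have hopen : IsOpen {s : ℂ | 1 - (finrank ℚ K : ℝ)⁻¹ < s.re} :=
    isOpen_lt continuous_const Complex.continuous_re
  have hmem : (1 : ℂ) ∈ {s : ℂ | 1 - (finrank ℚ K : ℝ)⁻¹ < s.re} := sub_lt_self _ hδ
  have hcont : ContinuousAt g 1 := (hg.differentiableAt (hopen.mem_nhds hmem)).continuousAt
  have hofReal : Tendsto (fun s : ℝ => (s : ℂ)) (𝓝[>] 1) (𝓝 1) :=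
    (Complex.continuous_ofReal.tendsto 1).mono_left nhdsWithin_le_nhds
  have hlim : Tendsto (fun s : ℝ => (s - 1) * dedekindZeta K s) (𝓝[>] 1) (𝓝 (g 1)) := by
    refine (hcont.tendsto.comp hofReal).congr' ?_
    filter_upwards [self_mem_nhdsWithin] with s hs
    have hs₁ : (s : ℂ) - 1 ≠ 0 := sub_ne_zero.mpr (Complex.ofReal_ne_one.mpr (ne_of_gt hs))
    rw [show dedekindZeta K s = g s / (s - 1) from hgs s hs, mul_div_cancel₀ _ hs₁]
    rfl
  rw [tendsto_nhds_unique hlim (tendsto_sub_one_mul_dedekindZeta_nhdsGT K)]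
  exact Complex.ofReal_ne_zero.mpr (dedekindZeta_residue_ne_zero K)

theorem finite_index_fiber (k : ℕ+) : Finite {I : FiniteIndexIdeal (𝓞 K) // index I = k} :=
  have : Finite {I : Ideal (𝓞 K) // Submodule.cardQuot I = k} :=
    finite_setOfPred_absNorm_eq (k : ℕ)
  Finite.of_equiv _ (indexFiberEquiv (𝓞 K) k).symm

variable (K) in
theorem hasPoleAtOne_index_ringOfIntegers : HasPoleAtOne (zetaTerm (index (R := 𝓞 K))) 1 := by
  obtain ⟨δ, hδ, g, hg, hg₁, hgs⟩ := exists_differentiableOn_dedekindZeta_eq_div_sub_one K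
  refine (hasPoleAtOne_comp_iff (F := fun (k : ℕ+) s => ((k : ℕ) : ℂ) ^ (-s))
    finite_index_fiber).mpr ⟨δ, hδ, g, hg, hg₁, fun s hs => ?_⟩
  rw [pow_one, ← hgs s hs]
  have hseries := (lseriesSummable_dedekindCoeff (K := K) hs).hasSum
  rw [← PNat.coe_injective.hasSum_iff] at hseries
  · refine hseries.congr_fun fun k => ?_
    beta_reduce
    rw [Function.comp_apply, LSeries.term_of_ne_zero k.ne_zero, Complex.cpow_neg, div_eq_mul_inv,
      Nat.card_congr (indexFiberEquiv (𝓞 K) k)]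
    rfl
  · intro k hk
    obtain rfl : k = 0 := by
      by_contra hk₀
      exact hk ⟨⟨k, Nat.pos_of_ne_zero hk₀⟩, rfl⟩
    exact LSeries.term_zero _ s

theorem one_lt_absNorm_of_prime {P : Ideal (𝓞 K)} (hP : Prime P) : 1 < absNorm P := by
  have h₀ : absNorm P ≠ 0 := absNorm_eq_zero_iff.not.mpr hP.ne_zero
  have h₁ : absNorm P ≠ 1 := absNorm_eq_one_iff.not.mpr (isPrime_of_prime hP).ne_top
  lia

/-- The completely multiplicative function `I ↦ absNorm I ^ (-s)`. -/
noncomputable def absNormCpow (s : ℂ) : Ideal (𝓞 K) →* ℂ where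
  toFun I := (absNorm I : ℂ) ^ (-s)
  map_one' := by simp
  map_mul' I J := by rw [map_mul, Nat.cast_mul, Complex.natCast_mul_natCast_cpow]

theorem norm_absNormCpow_lt_one {P : Ideal (𝓞 K)} (hP : Prime P) {s : ℂ} (hs : 0 < s.re) :
    ‖absNormCpow s P‖ < 1 := by
  have hP₁ := one_lt_absNorm_of_prime hP
  change ‖(absNorm P : ℂ) ^ (-s)‖ < 1
  rw [Complex.norm_natCast_cpow_of_pos (by lia)]
  exact Real.rpow_lt_one_of_one_lt_of_neg (Nat.one_lt_cast.mpr hP₁) (neg_neg_of_pos hs)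

theorem differentiable_absNormCpow {I : Ideal (𝓞 K)} (hI : I ≠ 0) :
    Differentiable ℂ fun s => absNormCpow s I :=
  fun _ => (differentiableAt_id.neg).const_cpow
    (Or.inl (Nat.cast_ne_zero.mpr (absNorm_eq_zero_iff.not.mpr hI)))

variable (K) in
/-- The prime ideals dividing `N`. -/
noncomputable def primeIdealsDividing (N : ℕ) : Finset (Ideal (𝓞 K)) := by
  classical
  exact (UniqueFactorizationMonoid.normalizedFactors (span {(N : 𝓞 K)})).toFinset

theorem mem_primeIdealsDividing (hN : N ≠ 0) {P : Ideal (𝓞 K)} :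
    P ∈ primeIdealsDividing K N ↔ Prime P ∧ (N : 𝓞 K) ∈ P := by
  have hspan : span {(N : 𝓞 K)} ≠ ⊥ := by
    rwa [Ne, span_singleton_eq_bot, Nat.cast_eq_zero]
  rw [primeIdealsDividing, Multiset.mem_toFinset, mem_normalizedFactors_iff hspan,
    span_singleton_le_iff_mem]
  refine and_congr_left fun hNP => ⟨fun hP => prime_of_isPrime ?_ hP, isPrime_of_prime⟩
  rintro rfl
  exact hN (Nat.cast_eq_zero.mp (mem_bot.mp hNP))

theorem mem_factoredElements_primeIdealsDividing (hN : N ≠ 0) {I : Ideal (𝓞 K)} (hI : I ≠ ⊥) :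
    I ∈ factoredElements (primeIdealsDividing K N : Set (Ideal (𝓞 K))) ↔
      (N : 𝓞 K) ∈ I.radical := by
  simp only [factoredElements, Set.mem_ofPred_eq, Finset.mem_coe, mem_primeIdealsDividing hN,
    radical_eq_sInf, Submodule.mem_sInf]
  constructor
  · rintro ⟨-, h⟩ P ⟨hIP, hP⟩
    have hP₀ : P ≠ ⊥ := fun hP₀ => hI (le_bot_iff.mp (hP₀ ▸ hIP))
    exact (h P (prime_of_isPrime hP₀ hP) (dvd_iff_le.mpr hIP)).2
  · exact fun h => ⟨hI, fun P hP hPI => ⟨hP, h P ⟨dvd_iff_le.mp hPI, isPrime_of_prime hP⟩⟩⟩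

variable (K) in
/-- The ideals whose index is composed of primes dividing `N` are the products of prime ideals
dividing `N`. -/
noncomputable def factoredIdealEquiv (hN : N ≠ 0) : FactoredIdeal (𝓞 K) N ≃
    factoredElements (primeIdealsDividing K N : Set (Ideal (𝓞 K))) where
  toFun I := ⟨I.1.1, (mem_factoredElements_primeIdealsDividing hN
    (absNorm_eq_zero_iff.not.mp I.1.2)).mpr ((primeFactors_index_subset_iff hN I.1).mp I.2)⟩
  invFun I := ⟨⟨I.1, absNorm_eq_zero_iff.not.mpr I.2.1⟩, (primeFactors_index_subset_iff hN _).mpr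
    ((mem_factoredElements_primeIdealsDividing hN I.2.1).mp I.2)⟩
  left_inv _ := rfl
  right_inv _ := rfl

theorem hasSum_factoredIdeal (hN : N ≠ 0) {s : ℂ} (hs : 0 < s.re) :
    HasSum (fun I : FactoredIdeal (𝓞 K) N => zetaTerm index I.1 s)
      (∏ P ∈ primeIdealsDividing K N, (1 - absNormCpow s P)⁻¹) :=
  (factoredIdealEquiv K hN).hasSum_iff.mpr (hasSum_factoredElements (absNormCpow s) _
    (fun _ hP => ((mem_primeIdealsDividing hN).mp hP).1)
    fun _ hP => norm_absNormCpow_lt_one ((mem_primeIdealsDividing hN).mp hP).1 hs)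

theorem prod_one_sub_absNormCpow_ne_zero (hN : N ≠ 0) {s : ℂ} (hs : 0 < s.re) :
    ∏ P ∈ primeIdealsDividing K N, (1 - absNormCpow s P) ≠ 0 := by
  refine Finset.prod_ne_zero_iff.mpr fun P hP h => ?_
  have hlt := norm_absNormCpow_lt_one ((mem_primeIdealsDividing hN).mp hP).1 hs
  rw [← sub_eq_zero.mp h, norm_one] at hlt
  exact lt_irrefl _ hlt

theorem hasSum_coprimeIdeal (hN : N ≠ 0) {s z : ℂ} (hs : 0 < s.re)
    (hz : HasSum (fun I : FiniteIndexIdeal (𝓞 K) => zetaTerm index I s) z) :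
    HasSum (fun I : CoprimeIdeal (𝓞 K) N => zetaTerm index I.1 s)
      (z * ∏ P ∈ primeIdealsDividing K N, (1 - absNormCpow s P)) := by
  let F (I : CoprimeIdeal (𝓞 K) N) : ℂ := zetaTerm index I.1 s
  let G (I : FactoredIdeal (𝓞 K) N) : ℂ := zetaTerm index I.1 s
  have hF : Summable F := hz.summable.subtype _
  have hG : HasSum G _ := hasSum_factoredIdeal hN hs
  have hFG := HasSum.mul (f := F) (g := G) hF.hasSum hG
    (summable_mul_of_summable_norm (f := F) (g := G) hF.norm hG.summable.norm)
  rw [← (coprimeProdFactoredEquiv (𝓞 K) N).hasSum_iff] at hz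
  have hprod := hz.unique (hFG.congr_fun fun x => zetaTerm_coprimeProdFactoredEquiv x s)
  rw [hprod, Finset.prod_inv_distrib,
    inv_mul_cancel_right₀ (prod_one_sub_absNormCpow_ne_zero hN hs)]
  exact hF.hasSum

variable (K) in
theorem hasIdealZetaPole_ringOfIntegers : HasIdealZetaPole (𝓞 K) 1 := by
  intro N hN
  constructor
  · obtain ⟨δ, hδ, g, hg, hg₁, hgs⟩ := hasPoleAtOne_index_ringOfIntegers K
    refine ⟨δ, hδ, fun s => g s * ∏ P ∈ primeIdealsDividing K N, (1 - absNormCpow s P),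
      hg.mul ?_, mul_ne_zero hg₁ (prod_one_sub_absNormCpow_ne_zero hN (by simp)), fun s hs => ?_⟩
    · exact (Differentiable.fun_finsetProd fun P hP => (differentiable_const _).sub
        (differentiable_absNormCpow
          ((mem_primeIdealsDividing hN).mp hP).1.ne_zero)).differentiableOn
    · rw [mul_div_right_comm]
      exact hasSum_coprimeIdeal hN (one_pos.trans hs) (hgs s hs)
  · exact ⟨1, one_pos, fun σ hσ => (hasSum_factoredIdeal hN (by simpa using hσ)).summable⟩

end Dedekind

/-! ### Comparison with an overring -/

section Overring

open FiniteIndexIdeal (index)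

variable {R S : Type*} [CommRing R] [CommRing S] {φ : R →+* S} {N m : ℕ}

theorem exists_natCast_mul_sub_one_mem (hN : N ≠ 0) (I : CoprimeIdeal R N) :
    ∃ v : R, N * v - 1 ∈ I.1.1 := by
  obtain ⟨u, v, huv⟩ := ((Nat.disjoint_primeFactors (index I.1).ne_zero hN).mp I.2).cast (R := R)
  refine ⟨v, ?_⟩
  rw [show N * v - 1 = -u * (index I.1 : ℕ) by linear_combination huv]
  exact I.1.1.mul_mem_left _ (natCast_index_mem I.1)

theorem mem_of_natCast_mul_mem (hN : N ≠ 0) (I : CoprimeIdeal R N) {x : R}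
    (hx : (N : R) * x ∈ I.1.1) : x ∈ I.1.1 := by
  obtain ⟨v, hv⟩ := exists_natCast_mul_sub_one_mem hN I
  rw [show x = v * (N * x) - x * (N * v - 1) by ring]
  exact sub_mem (I.1.1.mul_mem_left v hx) (I.1.1.mul_mem_left x hv)

theorem exists_map_eq_natCast_mul_of_mem_map (hφN : ∀ y : S, (N : S) * y ∈ φ.range) {I : Ideal R}
    {y : S} (hy : y ∈ I.map φ) : ∃ x ∈ I, φ x = N * y := by
  suffices h : ∀ a : S, ∃ x ∈ I, φ x = N * (a * y) by simpa using h 1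
  induction hy using Submodule.span_induction with
  | mem _ h =>
    obtain ⟨x, hx, rfl⟩ := h
    intro a
    obtain ⟨r, hr⟩ := hφN a
    exact ⟨r * x, I.mul_mem_left r hx, by rw [map_mul, hr, mul_assoc]⟩
  | zero => exact fun _ => ⟨0, I.zero_mem, by simp⟩
  | add y z _ _ hy hz =>
    intro a
    obtain ⟨x, hx, hxy⟩ := hy a
    obtain ⟨w, hw, hwz⟩ := hz a
    exact ⟨x + w, I.add_mem hx hw, by rw [map_add, hxy, hwz, mul_add, mul_add]⟩
  | smul b y _ hy =>
    intro a
    obtain ⟨x, hx, hxy⟩ := hy (a * b)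
    exact ⟨x, hx, by rw [hxy, smul_eq_mul, mul_assoc]⟩

theorem cardQuot_comap_of_natCast_mul_sub_one_mem (hφN : ∀ y : S, (N : S) * y ∈ φ.range)
    {J : Ideal S} {v : S} (hv : N * v - 1 ∈ J) :
    Submodule.cardQuot (J.comap φ) = Submodule.cardQuot J := by
  have hsurj : Function.Surjective ((Ideal.Quotient.mk J).comp φ) := by
    intro y
    obtain ⟨y, rfl⟩ := Ideal.Quotient.mk_surjective y
    obtain ⟨r, hr⟩ := hφN (v * y)
    refine ⟨r, ?_⟩
    rw [RingHom.comp_apply, hr, Ideal.Quotient.eq,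
      show N * (v * y) - y = y * (N * v - 1) by ring]
    exact J.mul_mem_left y hv
  have hker : J.comap φ = RingHom.ker ((Ideal.Quotient.mk J).comp φ) := by
    rw [← RingHom.comap_ker, Ideal.mk_ker]
  rw [hker]
  exact Nat.card_congr (RingHom.quotientKerEquivOfSurjective hsurj).toEquiv

theorem cardQuot_comap (hN : N ≠ 0) (hφN : ∀ y : S, (N : S) * y ∈ φ.range)
    (J : CoprimeIdeal S N) : Submodule.cardQuot (J.1.1.comap φ) = index J.1 :=
  cardQuot_comap_of_natCast_mul_sub_one_mem hφN (exists_natCast_mul_sub_one_mem hN J).choose_spec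

/-- Contraction of ideals of index prime to `N` from `S` to a subring containing `N * S`. -/
noncomputable def coprimeComap (hN : N ≠ 0) (hφN : ∀ y : S, (N : S) * y ∈ φ.range)
    (J : CoprimeIdeal S N) : CoprimeIdeal R N :=
  ⟨⟨J.1.1.comap φ, cardQuot_comap hN hφN J ▸ (index J.1).ne_zero⟩,
    (congrArg (Disjoint ·.primeFactors N.primeFactors) (cardQuot_comap hN hφN J)).mpr J.2⟩

theorem index_coprimeComap (hN : N ≠ 0) (hφN : ∀ y : S, (N : S) * y ∈ φ.range)
    (J : CoprimeIdeal S N) : index (coprimeComap hN hφN J).1 = index J.1 :=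
  PNat.eq (cardQuot_comap hN hφN J)

theorem coprimeComap_injective (hN : N ≠ 0) (hφN : ∀ y : S, (N : S) * y ∈ φ.range) :
    Function.Injective (coprimeComap hN hφN) := by
  have hle (I J : CoprimeIdeal S N) (h : I.1.1.comap φ = J.1.1.comap φ) : I.1.1 ≤ J.1.1 := by
    intro y hy
    obtain ⟨r, hr⟩ := hφN y
    have hrI : r ∈ I.1.1.comap φ := Ideal.mem_comap.mpr (hr ▸ I.1.1.mul_mem_left _ hy)
    rw [h, Ideal.mem_comap, hr] at hrI
    exact mem_of_natCast_mul_mem hN J hrI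
  intro I J h
  have h : I.1.1.comap φ = J.1.1.comap φ := congrArg (fun I => I.1.1) h
  exact Subtype.ext (Subtype.ext (le_antisymm (hle I J h) (hle J I h.symm)))

theorem coprimeComap_surjective (hN : N ≠ 0) (hφ : Function.Injective φ)
    (hφN : ∀ y : S, (N : S) * y ∈ φ.range) : Function.Surjective (coprimeComap hN hφN) := by
  intro I
  have hcomap : (I.1.1.map φ).comap φ = I.1.1 := by
    refine le_antisymm (fun x hx => ?_) Ideal.le_comap_map
    obtain ⟨w, hw, hwx⟩ := exists_map_eq_natCast_mul_of_mem_map hφN hx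
    rw [← map_natCast φ, ← map_mul] at hwx
    exact mem_of_natCast_mul_mem hN I (hφ hwx ▸ hw)
  obtain ⟨v, hv⟩ := exists_natCast_mul_sub_one_mem hN I
  have hφv : N * φ v - 1 ∈ I.1.1.map φ := by simpa using Ideal.mem_map_of_mem φ hv
  have hcard : Submodule.cardQuot (I.1.1.map φ) = index I.1 := by
    rw [← cardQuot_comap_of_natCast_mul_sub_one_mem hφN hφv, hcomap]
    rfl
  exact ⟨⟨⟨I.1.1.map φ, hcard ▸ (index I.1).ne_zero⟩,
    (congrArg (Disjoint ·.primeFactors N.primeFactors) hcard).mpr I.2⟩,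
    Subtype.ext (Subtype.ext hcomap)⟩

theorem cardQuot_map_ne_zero_and_le [Finite (S ⧸ Ideal.span {(N : S)})]
    (hφN : ∀ y : S, (N : S) * y ∈ φ.range) (I : FiniteIndexIdeal R) :
    Submodule.cardQuot (I.1.map φ) ≠ 0 ∧ Submodule.cardQuot (I.1.map φ) ≤
      Submodule.cardQuot (Ideal.span {(N : S)}) * index I := by
  have : Finite (R ⧸ I.1) := Nat.finite_of_card_ne_zero I.2
  let ψ : R ⧸ I.1 →+* S ⧸ I.1.map φ := Ideal.quotientMap (I.1.map φ) φ Ideal.le_comap_map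
  let translate (x : (S ⧸ Ideal.span {(N : S)}) × (R ⧸ I.1)) : S ⧸ I.1.map φ :=
    Ideal.Quotient.mk _ x.1.out + ψ x.2
  have hsurj : Function.Surjective translate := by
    intro y
    obtain ⟨y, rfl⟩ := Ideal.Quotient.mk_surjective y
    have hrep : y - (Ideal.Quotient.mk (Ideal.span {(N : S)}) y).out ∈ Ideal.span {(N : S)} :=
      Ideal.Quotient.eq.mp (Quotient.out_eq _).symm
    obtain ⟨z, hz⟩ := Ideal.mem_span_singleton.mp hrep
    obtain ⟨r, hr⟩ := hφN z
    refine ⟨(Ideal.Quotient.mk _ y, Ideal.Quotient.mk _ r), ?_⟩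
    simp only [translate, ψ]
    rw [Ideal.quotientMap_mk, ← map_add, hr, ← hz, add_sub_cancel]
  have : Finite (S ⧸ I.1.map φ) := Finite.of_surjective _ hsurj
  exact ⟨cardQuot_ne_zero _, (Nat.card_le_card_of_surjective _ hsurj).trans_eq (Nat.card_prod _ _)⟩

/-- Extension to an overring, along `φ`, of ideals whose index is composed of primes
dividing `N`. -/
noncomputable def factoredMap [Finite (S ⧸ Ideal.span {(N : S)})]
    (hφN : ∀ y : S, (N : S) * y ∈ φ.range) (I : FactoredIdeal R N) : FactoredIdeal S N :=
  ⟨⟨I.1.1.map φ, (cardQuot_map_ne_zero_and_le hφN I.1).1⟩,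
    (cardQuot_primeFactors_subset (index I.1).ne_zero
      (by simpa using Ideal.mem_map_of_mem φ (natCast_index_mem I.1))).trans I.2⟩

/-- The subgroup `N * J` of an ideal `J`. -/
abbrev natCastMulSubgroup (N : ℕ) (J : Ideal S) : AddSubgroup J.toAddSubgroup :=
  (J.toAddSubgroup.map (AddMonoidHom.mulLeft (N : S))).addSubgroupOf J.toAddSubgroup

theorem index_natCastMulSubgroup (htor : ∀ y : S, (N : S) * y = 0 → y = 0)
    (J : FiniteIndexIdeal S) :
    (natCastMulSubgroup N J.1).index = Submodule.cardQuot (Ideal.span {(N : S)}) := by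
  let f : S →+ S := AddMonoidHom.mulLeft (N : S)
  have hf : Function.Injective f := (injective_iff_map_eq_zero f).mpr htor
  let A := J.1.toAddSubgroup
  have hle : A.map f ≤ A := by
    rintro _ ⟨x, hx, rfl⟩
    exact J.1.mul_mem_left _ hx
  have hA := AddSubgroup.relIndex_mul_index hle
  have hf_range := AddSubgroup.relIndex_mul_index (AddSubgroup.map_mono (f := f) (le_top : A ≤ ⊤))
  have htop : (⊤ : AddSubgroup S).map f = (Ideal.span {(N : S)}).toAddSubgroup := by
    ext x
    refine Iff.trans ?_ Ideal.mem_span_singleton'.symm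
    simp [f, mul_comm]
  rw [AddSubgroup.relIndex_map_map_of_injective _ _ hf, AddSubgroup.relIndex_top_right, htop,
    ← hA, mul_comm] at hf_range
  exact (Nat.eq_of_mul_eq_mul_right J.2.bot_lt hf_range).symm

/-- The classes modulo `N * J` of the elements of `J` coming from `I`. -/
def imageMod (φ : R →+* S) (N : ℕ) (J : Ideal S) (I : Ideal R) :
    Set (J.toAddSubgroup ⧸ natCastMulSubgroup N J) :=
  QuotientAddGroup.mk '' {y | ∃ x ∈ I, φ x = y}

theorem le_of_imageMod_eq (hφ : Function.Injective φ) (hφN : ∀ y : S, (N : S) * y ∈ φ.range)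
    {J : Ideal S} {I I' : Ideal R} (hI : I.map φ = J) (hI' : I'.map φ = J)
    (h : imageMod φ N J I = imageMod φ N J I') : I ≤ I' := by
  intro x hx
  have hxJ : φ x ∈ J := hI ▸ Ideal.mem_map_of_mem φ hx
  have hmem : QuotientAddGroup.mk ⟨φ x, hxJ⟩ ∈ imageMod φ N J I := ⟨_, ⟨x, hx, rfl⟩, rfl⟩
  rw [h] at hmem
  obtain ⟨y, ⟨x', hx', hy⟩, hmk⟩ := hmem
  obtain ⟨z, hz, hzy⟩ := AddSubgroup.mem_addSubgroupOf.mp (QuotientAddGroup.eq.mp hmk)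
  obtain ⟨w, hw, hwz⟩ := exists_map_eq_natCast_mul_of_mem_map hφN (hI' ▸ hz)
  have hzy : N * z = -(y : S) + φ x := hzy
  have hsum : x = x' + w := hφ (by rw [map_add, hwz, hzy, hy, add_neg_cancel_left])
  exact hsum ▸ add_mem hx' hw

theorem finite_and_natCard_factoredMap_fiber_le [Finite (S ⧸ Ideal.span {(N : S)})]
    (hφ : Function.Injective φ) (hφN : ∀ y : S, (N : S) * y ∈ φ.range)
    (htor : ∀ y : S, (N : S) * y = 0 → y = 0) (J : FactoredIdeal S N) :
    Finite {I : FactoredIdeal R N // factoredMap hφN I = J} ∧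
      Nat.card {I : FactoredIdeal R N // factoredMap hφN I = J} ≤
        2 ^ Submodule.cardQuot (Ideal.span {(N : S)}) := by
  have hcard := index_natCastMulSubgroup htor J.1
  have : Finite (J.1.1.toAddSubgroup ⧸ natCastMulSubgroup N J.1.1) :=
    Nat.finite_of_card_ne_zero (hcard.trans_ne (cardQuot_ne_zero _))
  have hinj : Function.Injective fun I : {I : FactoredIdeal R N // factoredMap hφN I = J} =>
      imageMod φ N J.1.1 I.1.1.1 := by
    intro I I' h
    have hmap (I : {I // factoredMap hφN I = J}) : I.1.1.1.map φ = J.1.1 :=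
      congrArg (fun J => J.1.1) I.2
    exact Subtype.ext (Subtype.ext (Subtype.ext (le_antisymm
      (le_of_imageMod_eq hφ hφN (hmap I) (hmap I') h)
      (le_of_imageMod_eq hφ hφN (hmap I') (hmap I) h.symm))))
  refine ⟨Finite.of_injective _ hinj, (Nat.card_le_card_of_injective _ hinj).trans_eq ?_⟩
  have := Fintype.ofFinite (J.1.1.toAddSubgroup ⧸ natCastMulSubgroup N J.1.1)
  rw [← hcard, AddSubgroup.index, Nat.card_eq_fintype_card, Nat.card_eq_fintype_card,
    Fintype.card_set]

theorem summableLeftOfOne_factoredIdeal_of_injective [Finite (S ⧸ Ideal.span {(N : S)})]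
    (hφ : Function.Injective φ) (hφN : ∀ y : S, (N : S) * y ∈ φ.range)
    (htor : ∀ y : S, (N : S) * y = 0 → y = 0)
    (h : SummableLeftOfOne fun I : FactoredIdeal S N => zetaTerm index I.1) :
    SummableLeftOfOne fun I : FactoredIdeal R N => zetaTerm index I.1 := by
  obtain ⟨δ, hδ, h⟩ := h
  refine ⟨min δ 1, lt_min hδ one_pos, fun σ hσ => ?_⟩
  have hσ₀ : 0 < σ := by linarith [min_le_right δ 1]
  let B := Submodule.cardQuot (Ideal.span {(N : S)})
  have hfiber := finite_and_natCard_factoredMap_fiber_le hφ hφN htor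
  have hmap : Summable fun I : FactoredIdeal R N => zetaTerm index (factoredMap hφN I).1 σ := by
    rw [summable_comp_iff_natCard_fiber_mul (fun J => (hfiber J).1)
      fun J : FactoredIdeal S N => zetaTerm index J.1 σ]
    refine Summable.of_norm_bounded
      ((h σ (by linarith [min_le_left δ 1])).norm.mul_left (2 ^ B)) fun J => ?_
    rw [norm_mul, Complex.norm_natCast]
    gcongr
    exact mod_cast (hfiber J).2
  refine Summable.of_norm_bounded (hmap.norm.mul_left ((B : ℝ) ^ σ)) fun I => ?_
  have hle : ((index (factoredMap hφN I).1 : ℕ) : ℝ) ≤ B * (index I.1 : ℕ) :=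
    mod_cast (cardQuot_map_ne_zero_and_le hφN I.1).2
  have hpos (n : ℕ+) : (0 : ℝ) < (n : ℕ) := Nat.cast_pos.mpr n.pos
  rw [norm_zetaTerm, norm_zetaTerm, Complex.ofReal_re, Real.rpow_neg (hpos _).le,
    Real.rpow_neg (hpos _).le, ← div_eq_mul_inv, inv_eq_one_div,
    div_le_div_iff₀ (Real.rpow_pos_of_pos (hpos _) _) (Real.rpow_pos_of_pos (hpos _) _), one_mul,
    ← Real.mul_rpow (Nat.cast_nonneg _) (hpos _).le]
  exact Real.rpow_le_rpow (hpos _).le hle hσ₀.le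

theorem HasSplitPole.of_injective_ringHom (hN : N ≠ 0) [Finite (S ⧸ Ideal.span {(N : S)})]
    (hφ : Function.Injective φ) (hφN : ∀ y : S, (N : S) * y ∈ φ.range)
    (htor : ∀ y : S, (N : S) * y = 0 → y = 0)
    (h : HasSplitPole N (index (R := S)) (zetaTerm index) m) :
    HasSplitPole N (index (R := R)) (zetaTerm index) m := by
  have hterm (J : CoprimeIdeal S N) :
      zetaTerm index (coprimeComap hN hφN J).1 = zetaTerm index J.1 := by
    ext s
    rw [zetaTerm, index_coprimeComap]
    rfl
  refine ⟨?_, summableLeftOfOne_factoredIdeal_of_injective hφ hφN htor h.2⟩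
  rw [← hasPoleAtOne_comp_equiv (Equiv.ofBijective _
    ⟨coprimeComap_injective hN hφN, coprimeComap_surjective hN hφ hφN⟩)]
  convert h.1 using 2 with J
  exact hterm J

end Overring

/-! ### Extensions of rings by `ℤ` -/

section IntExtension

open NumberField

open FiniteIndexIdeal (index)
open Submodule (cardQuot cardQuot_apply)

theorem index_eq_relIndex_ker_mul_index_map {A B : Type*} [AddCommGroup A] [AddCommGroup B]
    {f : A →+ B} (hf : Function.Surjective f) (H : AddSubgroup A) :
    H.index = H.relIndex f.ker * (H.map f).index := by
  rw [AddSubgroup.index_map, AddMonoidHom.range_eq_top.mpr hf, AddSubgroup.index_top, mul_one,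
    ← AddSubgroup.relIndex_sup_left, AddSubgroup.relIndex_mul_index le_sup_left]

variable {R R' : Type*} [CommRing R] [CommRing R']

theorem surjective_ringHom_int (π : R →+* ℤ) : Function.Surjective π := fun n => ⟨n, by simp⟩

/-- The nonnegative generator of the image of the ideal `I` under `π : R →+* ℤ`. -/
noncomputable def leadingIndex (π : R →+* ℤ) (I : Ideal R) : ℕ := cardQuot (I.map π)

theorem span_leadingIndex (π : R →+* ℤ) (I : Ideal R) :
    Ideal.span {(leadingIndex π I : ℤ)} = I.map π :=
  Int.ideal_span_absNorm_eq_self (I.map π)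

theorem exists_mem_apply_eq_leadingIndex (π : R →+* ℤ) (I : Ideal R) :
    ∃ r ∈ I, π r = leadingIndex π I :=
  (Ideal.mem_map_iff_of_surjective π (surjective_ringHom_int π)).mp
    (span_leadingIndex π I ▸ Ideal.mem_span_singleton_self _)

theorem leadingIndex_dvd (π : R →+* ℤ) {I : Ideal R} {r : R} (hr : r ∈ I) :
    (leadingIndex π I : ℤ) ∣ π r := by
  rw [← Ideal.mem_span_singleton, span_leadingIndex]
  exact Ideal.mem_map_of_mem π hr

theorem leadingIndex_eq_of_mem {π : R →+* ℤ} {I : Ideal R} {n : ℕ} {r : R} (hr : r ∈ I)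
    (hrn : π r = n) (hn : ∀ r ∈ I, (n : ℤ) ∣ π r) : leadingIndex π I = n := by
  obtain ⟨t, ht, htn⟩ := exists_mem_apply_eq_leadingIndex π I
  exact Nat.dvd_antisymm (Int.natCast_dvd_natCast.mp (hrn ▸ leadingIndex_dvd π hr))
    (Int.natCast_dvd_natCast.mp (htn ▸ hn t ht))

theorem leadingIndex_eq_index_map (π : R →+* ℤ) (I : Ideal R) :
    leadingIndex π I = (I.toAddSubgroup.map π.toAddMonoidHom).index := by
  change (I.map π).toAddSubgroup.index = _
  congr 1
  ext n
  exact Ideal.mem_map_iff_of_surjective π (surjective_ringHom_int π)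

theorem leadingIndex_dvd_cardQuot (π : R →+* ℤ) (I : Ideal R) : leadingIndex π I ∣ cardQuot I := by
  rw [leadingIndex_eq_index_map]
  exact AddSubgroup.index_map_dvd _ (surjective_ringHom_int π)

theorem leadingIndex_ne_zero (π : R →+* ℤ) {I : Ideal R} (hI : cardQuot I ≠ 0) :
    leadingIndex π I ≠ 0 :=
  ne_zero_of_dvd_ne_zero hI (leadingIndex_dvd_cardQuot π I)

theorem index_range_mulLeft_quotient {π : R →+* ℤ} {x : R} (hx : ∀ r, π r = 0 ↔ x ∣ r)
    (J : Ideal R) :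
    (AddMonoidHom.mulLeft (Ideal.Quotient.mk J x)).range.index = leadingIndex π J := by
  rw [← AddSubgroup.index_comap_of_surjective _ (f := (Ideal.Quotient.mk J).toAddMonoidHom)
    Ideal.Quotient.mk_surjective, leadingIndex_eq_index_map,
    ← AddSubgroup.index_comap_of_surjective _ (f := π.toAddMonoidHom) (surjective_ringHom_int π)]
  congr 1
  ext r
  change (∃ u, Ideal.Quotient.mk J x * u = Ideal.Quotient.mk J r) ↔ ∃ j ∈ J, π j = π r
  rw [Ideal.Quotient.mk_surjective.exists]
  simp only [← map_mul, Ideal.Quotient.eq]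
  constructor
  · rintro ⟨u, hu⟩
    refine ⟨r - x * u, J.neg_mem_iff.mp (by rwa [neg_sub]), ?_⟩
    rw [map_sub, (hx (x * u)).mpr ⟨u, rfl⟩, sub_zero]
  · rintro ⟨j, hj, hjr⟩
    obtain ⟨u, hu⟩ := (hx (r - j)).mp (by rw [map_sub, hjr, sub_self])
    exact ⟨u, by rwa [← hu, sub_sub_cancel_left, J.neg_mem_iff]⟩

theorem natCard_mulLeft_fiber {π : R →+* ℤ} {x : R} (hx : ∀ r, π r = 0 ↔ x ∣ r) {J : Ideal R}
    (hJ : cardQuot J ≠ 0) {n : ℕ} (hn : leadingIndex π J ∣ n) :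
    Nat.card {v : R ⧸ J // Ideal.Quotient.mk J x * v = n} = leadingIndex π J := by
  have : Finite (R ⧸ J) := Nat.finite_of_card_ne_zero hJ
  have hmem : (n : ℤ) ∈ J.map π := by
    rw [← span_leadingIndex, Ideal.mem_span_singleton]
    exact Int.natCast_dvd_natCast.mpr hn
  obtain ⟨j, hj, hjn⟩ := (Ideal.mem_map_iff_of_surjective π (surjective_ringHom_int π)).mp hmem
  obtain ⟨u, hu⟩ := (hx (n - j)).mp (by rw [map_sub, hjn, map_natCast, sub_self])
  have hun : Ideal.Quotient.mk J x * Ideal.Quotient.mk J u = n := by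
    rw [← map_mul, ← hu, map_sub, Ideal.Quotient.eq_zero_iff_mem.mpr hj, sub_zero, map_natCast]
  rw [← index_range_mulLeft_quotient hx, AddSubgroup.index_range, ← hun]
  exact Nat.card_congr (AddMonoidHom.fiberEquivKer (AddMonoidHom.mulLeft (Ideal.Quotient.mk J x)) _)

/-- `R` is an extension of `ℤ` by a copy of `R'`: the kernel of `π : R →+* ℤ` is `x R`, and
multiplication by `x` induces an isomorphism of `R'`, a quotient of `R` by `ρ`, with `x R`. The
homomorphism `π` is required to factor through `ρ`. -/
structure IsIntExtension (π : R →+* ℤ) (x : R) (ρ : R →+* R') (π' : R' →+* ℤ) : Prop where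
  apply_eq_zero_iff (r : R) : π r = 0 ↔ x ∣ r
  surjective : Function.Surjective ρ
  eq_zero_iff_mul_eq_zero (r : R) : ρ r = 0 ↔ x * r = 0
  comp_apply (r : R) : π' (ρ r) = π r

/-- The ideal of `R'` formed by the residues under `ρ` of the `u` with `x * u ∈ I`. -/
def colonImage (x : R) (ρ : R →+* R') (I : Ideal R) : Ideal R' :=
  Ideal.map ρ (Submodule.comap (LinearMap.mulLeft R x) I)

/-- The ideal with leading element `y` in which `x * u` lies if and only if `ρ u ∈ J`; this
description requires `ρ y ∈ J` and `π y ≠ 0`. -/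
def idealOfLeading (x : R) (ρ : R →+* R') (J : Ideal R') (y : R) : Ideal R :=
  Ideal.span {y} ⊔ Submodule.map (LinearMap.mulLeft R x) (J.comap ρ)

namespace IsIntExtension

variable {π : R →+* ℤ} {x : R} {ρ : R →+* R'} {π' : R' →+* ℤ} (h : IsIntExtension π x ρ π')

include h

theorem apply_mul_eq_zero (u : R) : π (x * u) = 0 := (h.apply_eq_zero_iff _).mpr ⟨u, rfl⟩

theorem exists_eq_add_mul (r : R) : ∃ u, r = (π r : R) + x * u := by
  obtain ⟨u, hu⟩ := (h.apply_eq_zero_iff (r - (π r : R))).mp (by simp)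
  exact ⟨u, by rw [← hu, add_sub_cancel]⟩

theorem apply_eq_zero_iff_dvd (r : R') : π' r = 0 ↔ ρ x ∣ r := by
  obtain ⟨r, rfl⟩ := h.surjective r
  rw [h.comp_apply]
  refine ⟨fun hr => map_dvd ρ ((h.apply_eq_zero_iff r).mp hr), fun hr => ?_⟩
  obtain ⟨u, hu⟩ := hr
  obtain ⟨u, rfl⟩ := h.surjective u
  rw [← h.comp_apply, hu, ← map_mul, h.comp_apply, h.apply_mul_eq_zero]

theorem mem_colonImage (I : Ideal R) (u : R) : ρ u ∈ colonImage x ρ I ↔ x * u ∈ I := by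
  rw [colonImage, Ideal.mem_map_iff_of_surjective ρ h.surjective]
  refine ⟨fun ⟨w, hw, hwu⟩ => ?_, fun hu => ⟨u, hu, rfl⟩⟩
  have hzero : x * (w - u) = 0 := (h.eq_zero_iff_mul_eq_zero _).mp (by rw [map_sub, hwu, sub_self])
  rw [mul_sub, sub_eq_zero] at hzero
  exact hzero ▸ hw

theorem leadingIndex_colonImage_dvd (I : Ideal R) :
    leadingIndex π' (colonImage x ρ I) ∣ leadingIndex π I := by
  obtain ⟨r, hr, hπr⟩ := exists_mem_apply_eq_leadingIndex π I
  have hdvd := leadingIndex_dvd π' ((h.mem_colonImage I r).mpr (I.mul_mem_left x hr))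
  rw [h.comp_apply, hπr] at hdvd
  exact Int.natCast_dvd_natCast.mp hdvd

theorem cardQuot_colonImage (I : Ideal R) :
    cardQuot (colonImage x ρ I) = I.toAddSubgroup.relIndex π.toAddMonoidHom.ker := by
  have hker : π.toAddMonoidHom.ker = (AddMonoidHom.mulLeft x).range := by
    ext r
    exact (h.apply_eq_zero_iff r).trans (exists_congr fun u => eq_comm)
  have hcomap : I.toAddSubgroup.comap (AddMonoidHom.mulLeft x) =
      (colonImage x ρ I).toAddSubgroup.comap ρ.toAddMonoidHom := by
    ext u
    exact (h.mem_colonImage I u).symm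
  rw [hker, ← AddSubgroup.index_comap, hcomap, AddSubgroup.index_comap_of_surjective _ h.surjective]
  rfl

theorem cardQuot_eq_leadingIndex_mul (I : Ideal R) :
    cardQuot I = leadingIndex π I * cardQuot (colonImage x ρ I) := by
  rw [h.cardQuot_colonImage, leadingIndex_eq_index_map, mul_comm]
  exact index_eq_relIndex_ker_mul_index_map (f := π.toAddMonoidHom) (surjective_ringHom_int π) _

theorem mul_mem_idealOfLeading {J : Ideal R'} {y : R} (hy : ρ y ∈ J) (hy₀ : π y ≠ 0) (u : R) :
    x * u ∈ idealOfLeading x ρ J y ↔ ρ u ∈ J := by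
  rw [idealOfLeading, Ideal.mem_span_singleton_sup]
  constructor
  · rintro ⟨a, b, ⟨v, hv, rfl⟩, hab⟩
    rw [LinearMap.mulLeft_apply] at hab
    have ha : π a * π y = 0 := by
      rw [← map_mul, eq_sub_of_add_eq hab, ← mul_sub, h.apply_mul_eq_zero]
    obtain ⟨w, rfl⟩ := (h.apply_eq_zero_iff a).mp (eq_zero_of_ne_zero_of_mul_right_eq_zero hy₀ ha)
    have hu : ρ (u - (w * y + v)) = 0 :=
      (h.eq_zero_iff_mul_eq_zero _).mpr (by linear_combination -hab)
    rw [map_sub, sub_eq_zero, map_add, map_mul] at hu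
    exact hu ▸ J.add_mem (J.mul_mem_left _ hy) hv
  · exact fun hu => ⟨0, x * u, ⟨u, hu, rfl⟩, by ring⟩

theorem colonImage_idealOfLeading {J : Ideal R'} {y : R} (hy : ρ y ∈ J) (hy₀ : π y ≠ 0) :
    colonImage x ρ (idealOfLeading x ρ J y) = J := by
  ext u
  obtain ⟨u, rfl⟩ := h.surjective u
  rw [h.mem_colonImage, h.mul_mem_idealOfLeading hy hy₀]

theorem leadingIndex_idealOfLeading (J : Ideal R') {y : R} {n : ℕ} (hy : π y = n) :
    leadingIndex π (idealOfLeading x ρ J y) = n := by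
  refine leadingIndex_eq_of_mem
    (Ideal.mem_sup_left (Ideal.mem_span_singleton_self y)) hy fun r hr => ?_
  obtain ⟨a, b, ⟨v, -, rfl⟩, rfl⟩ := Ideal.mem_span_singleton_sup.mp hr
  rw [map_add, LinearMap.mulLeft_apply, h.apply_mul_eq_zero, add_zero, map_mul, hy]
  exact dvd_mul_left _ _

theorem idealOfLeading_colonImage {I : Ideal R} {y : R} (hy : y ∈ I)
    (hyI : π y = leadingIndex π I) : idealOfLeading x ρ (colonImage x ρ I) y = I := by
  refine le_antisymm (sup_le ((Ideal.span_singleton_le_iff_mem I).mpr hy) ?_) fun r hr => ?_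
  · rintro - ⟨u, hu, rfl⟩
    exact (h.mem_colonImage I u).mp hu
  · obtain ⟨k, hk⟩ := leadingIndex_dvd π hr
    obtain ⟨u, hu⟩ := (h.apply_eq_zero_iff (r - k * y)).mp (by
      rw [map_sub, map_mul, hk, hyI, map_intCast, Int.cast_id, mul_comm, sub_self])
    refine Ideal.mem_span_singleton_sup.mpr ⟨k, x * u, ⟨u, ?_, rfl⟩, by rw [← hu]; ring⟩
    exact (h.mem_colonImage I u).mpr (hu ▸ I.sub_mem hr (I.mul_mem_left _ hy))

omit h in
theorem idealOfLeading_le {J : Ideal R'} {y z : R} {u : R} (hyz : y - z = x * u) (hu : ρ u ∈ J) :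
    idealOfLeading x ρ J y ≤ idealOfLeading x ρ J z := by
  refine sup_le ((Ideal.span_singleton_le_iff_mem _).mpr ?_) le_sup_right
  exact Ideal.mem_span_singleton_sup.mpr ⟨1, x * u, ⟨u, hu, rfl⟩, by rw [← hyz]; ring⟩

theorem idealOfLeading_sub_mul_eq_iff {J : Ideal R'} {c u v : R} (hv : ρ (c - x * v) ∈ J)
    (hc : π c ≠ 0) : idealOfLeading x ρ J (c - x * u) = idealOfLeading x ρ J (c - x * v) ↔
      ρ (v - u) ∈ J := by
  refine ⟨fun huv => ?_, fun huv => le_antisymm (idealOfLeading_le ?_ huv)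
    (idealOfLeading_le (u := u - v) ?_ ?_)⟩
  · have hself (w : R) : c - x * w ∈ idealOfLeading x ρ J (c - x * w) :=
      Ideal.mem_sup_left (Ideal.mem_span_singleton_self _)
    have hsub := Ideal.sub_mem _ (huv ▸ hself u) (hself v)
    rw [sub_sub_sub_cancel_left, ← mul_sub] at hsub
    refine (h.mul_mem_idealOfLeading hv ?_ _).mp hsub
    rwa [map_sub, h.apply_mul_eq_zero, sub_zero]
  · ring
  · ring
  · rwa [← neg_sub, map_neg, J.neg_mem_iff]

theorem natCard_leadingIndex_eq_and_colonImage_eq {J : Ideal R'} (hJ : cardQuot J ≠ 0) {n : ℕ}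
    (hn₀ : n ≠ 0) (hn : leadingIndex π' J ∣ n) :
    Nat.card {I : Ideal R // leadingIndex π I = n ∧ colonImage x ρ I = J} = leadingIndex π' J := by
  let θ : R →+* R' ⧸ J := (Ideal.Quotient.mk J).comp ρ
  have hθ_sub {u v : R} : ρ (u - v) ∈ J ↔ θ u = θ v := by
    rw [map_sub]
    exact Ideal.Quotient.eq.symm
  have hπ (u : R) : π (n - x * u) = n := by rw [map_sub, h.apply_mul_eq_zero, sub_zero, map_natCast]
  have hmem {u : R} : ρ (n - x * u) ∈ J ↔ Ideal.Quotient.mk J (ρ x) * θ u = n := by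
    rw [hθ_sub, map_natCast, map_mul, eq_comm]
    rfl
  have hθ : Function.Surjective θ := Ideal.Quotient.mk_surjective.comp h.surjective
  choose lift hlift using hθ
  have hlift_mem (v : {v : R' ⧸ J // Ideal.Quotient.mk J (ρ x) * v = n}) :
      ρ (n - x * lift v) ∈ J := hmem.mpr (by rw [hlift]; exact v.2)
  have hn_ne : π (n : R) ≠ 0 := by rwa [map_natCast, Nat.cast_ne_zero]
  rw [← natCard_mulLeft_fiber h.apply_eq_zero_iff_dvd hJ hn]
  refine (Nat.card_congr (Equiv.ofBijective (fun v => ⟨idealOfLeading x ρ J (n - x * lift v),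
    h.leadingIndex_idealOfLeading J (hπ _), h.colonImage_idealOfLeading (hlift_mem v)
      (hπ _ ▸ Nat.cast_ne_zero.mpr hn₀)⟩) ⟨fun v w hvw => ?_, ?_⟩)).symm
  · rw [Subtype.mk.injEq, h.idealOfLeading_sub_mul_eq_iff (hlift_mem w) hn_ne, hθ_sub, hlift,
      hlift] at hvw
    exact Subtype.ext hvw.symm
  · rintro ⟨I, rfl, rfl⟩
    obtain ⟨y, hy, hyI⟩ := exists_mem_apply_eq_leadingIndex π I
    obtain ⟨u, hu⟩ := h.exists_eq_add_mul y
    obtain rfl : (leadingIndex π I : R) - x * -u = y := by rw [hu, hyI]; simp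
    have hyJ := (h.mem_colonImage I _).mpr (I.mul_mem_left x hy)
    refine ⟨⟨θ (-u), hmem.mp hyJ⟩, Subtype.ext ?_⟩
    refine Eq.trans ?_ (h.idealOfLeading_colonImage hy hyI)
    exact (h.idealOfLeading_sub_mul_eq_iff hyJ hn_ne).mpr (hθ_sub.mpr (hlift _).symm)

/-- The ideal `I` is sent to its `colonImage` `J` together with the quotient of the leading indices
of `I` and `J`. -/
noncomputable def splitLeading (I : FiniteIndexIdeal R) : ℕ+ × FiniteIndexIdeal R' :=
  (⟨leadingIndex π I.1 / leadingIndex π' (colonImage x ρ I.1),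
    Nat.div_pos
      (Nat.le_of_dvd (leadingIndex_ne_zero π I.2).pos (h.leadingIndex_colonImage_dvd I.1))
      (Nat.pos_of_dvd_of_pos (h.leadingIndex_colonImage_dvd I.1)
        (leadingIndex_ne_zero π I.2).pos)⟩,
    ⟨colonImage x ρ I.1, right_ne_zero_of_mul (h.cardQuot_eq_leadingIndex_mul I.1 ▸ I.2)⟩)

theorem splitLeading_mul (I : FiniteIndexIdeal R) :
    (h.splitLeading I).1 * leadingIndex π' (h.splitLeading I).2.1 = leadingIndex π I.1 :=
  Nat.div_mul_cancel (h.leadingIndex_colonImage_dvd I.1)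

theorem index_eq_splitLeading (I : FiniteIndexIdeal R) : (index I : ℕ) =
    (h.splitLeading I).1 * leadingIndex π' (h.splitLeading I).2.1 * index (h.splitLeading I).2 := by
  rw [h.splitLeading_mul]
  exact h.cardQuot_eq_leadingIndex_mul I.1

theorem splitLeading_eq_iff (I : FiniteIndexIdeal R) (q : ℕ+) (J : FiniteIndexIdeal R') :
    h.splitLeading I = (q, J) ↔
      leadingIndex π I.1 = q * leadingIndex π' J.1 ∧ colonImage x ρ I.1 = J.1 := by
  constructor
  · intro hI
    rw [← h.splitLeading_mul I, hI]
    exact ⟨rfl, congrArg (fun z => z.2.1) hI⟩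
  · rintro ⟨hq, hJ⟩
    refine Prod.ext (PNat.eq ?_) (Subtype.ext hJ)
    change leadingIndex π I.1 / leadingIndex π' (colonImage x ρ I.1) = q
    rw [hq, hJ, Nat.mul_div_cancel _ (Nat.pos_of_ne_zero (leadingIndex_ne_zero π' J.2))]

theorem natCard_splitLeading_fiber (q : ℕ+) (J : FiniteIndexIdeal R') :
    Nat.card {I // h.splitLeading I = (q, J)} = leadingIndex π' J.1 := by
  have hn₀ : (q : ℕ) * leadingIndex π' J.1 ≠ 0 :=
    mul_ne_zero q.ne_zero (leadingIndex_ne_zero π' J.2)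
  have hfinite {I : Ideal R} (hI : leadingIndex π I = q * leadingIndex π' J.1 ∧
      colonImage x ρ I = J.1) : cardQuot I ≠ 0 := by
    rw [h.cardQuot_eq_leadingIndex_mul, hI.1, hI.2]
    exact mul_ne_zero hn₀ J.2
  rw [← h.natCard_leadingIndex_eq_and_colonImage_eq J.2 hn₀ (dvd_mul_left _ _)]
  exact Nat.card_congr ((Equiv.subtypeEquivRight fun I => h.splitLeading_eq_iff I q J).trans
    (Equiv.subtypeSubtypeEquivSubtype hfinite))

theorem primeFactors_index_eq (I : FiniteIndexIdeal R) : (index I : ℕ).primeFactors =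
    ((h.splitLeading I).1 * index (h.splitLeading I).2 : ℕ+).val.primeFactors := by
  set q := (h.splitLeading I).1
  set J := (h.splitLeading I).2
  have hJ := leadingIndex_ne_zero π' J.2
  have hsubset : (leadingIndex π' J.1).primeFactors ⊆ (index J : ℕ).primeFactors :=
    Nat.primeFactors_mono (leadingIndex_dvd_cardQuot π' J.1) (index J).ne_zero
  rw [h.index_eq_splitLeading, PNat.mul_coe, mul_assoc, Nat.primeFactors_mul q.ne_zero
    (mul_ne_zero hJ (index J).ne_zero), Nat.primeFactors_mul hJ (index J).ne_zero,
    Finset.union_eq_right.mpr hsubset, Nat.primeFactors_mul q.ne_zero (index J).ne_zero]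

end IsIntExtension

/-- The zeta term of `I` twisted by the `a`-th power of its leading index, both as a coefficient and
in the modulus. -/
noncomputable def leadingTerm (π : R →+* ℤ) (a : ℕ) (I : FiniteIndexIdeal R) (s : ℂ) : ℂ :=
  (leadingIndex π I.1 : ℂ) ^ a * ((leadingIndex π I.1 ^ a * index I : ℕ) : ℂ) ^ (-s)

theorem hasIdealZetaPole_int : HasIdealZetaPole ℤ 1 := by
  intro N hN
  let e := Rat.ringOfIntegersEquiv.symm
  have : Finite (𝓞 ℚ ⧸ Ideal.span {(N : 𝓞 ℚ)}) :=
    Ideal.finiteQuotientOfFreeOfNeBot _ (by simpa using hN)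
  exact (hasIdealZetaPole_ringOfIntegers ℚ N hN).of_injective_ringHom (φ := e.toRingHom) hN
    e.injective (fun y => e.surjective _)
    fun y hy => (mul_eq_zero.mp hy).resolve_left (Nat.cast_ne_zero.mpr hN)

theorem bijective_index_int : Function.Bijective (index (R := ℤ)) := by
  constructor
  · intro I J hIJ
    have hspan (I : FiniteIndexIdeal ℤ) : Ideal.span {(((index I : ℕ+) : ℕ) : ℤ)} = I.1 :=
      Int.ideal_span_absNorm_eq_self I.1
    exact Subtype.ext (by rw [← hspan I, ← hspan J, hIJ])
  · intro q
    have hq : cardQuot (Ideal.span {((q : ℕ) : ℤ)}) = q := by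
      rw [← Ideal.absNorm_apply]
      simp
    exact ⟨⟨Ideal.span {((q : ℕ) : ℤ)}, hq.trans_ne q.ne_zero⟩, PNat.eq hq⟩

theorem hasSplitPole_pnat {N : ℕ} (hN : N ≠ 0) (a : ℕ) : HasSplitPole N id
    (fun (q : ℕ+) s => ((q : ℕ) : ℂ) ^ a * (((q : ℕ) ^ (a + 1) : ℕ) : ℂ) ^ (-s)) 1 := by
  let e := (Equiv.ofBijective _ bijective_index_int).symm
  have he (q : ℕ+) : index (e q) = q := (Equiv.ofBijective _ bijective_index_int).apply_symm_apply q
  have hpos : (0 : ℝ) < a + 1 := by positivity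
  have hterm : (fun (q : ℕ+) s => ((q : ℕ) : ℂ) ^ a * (((q : ℕ) ^ (a + 1) : ℕ) : ℂ) ^ (-s)) =
      fun q s => zetaTerm index (e q) (1 + (a + 1 : ℝ) * (s - 1)) := by
    ext q s
    have hq : ((q : ℕ) : ℂ) ≠ 0 := Nat.cast_ne_zero.mpr q.ne_zero
    rw [zetaTerm, he, Nat.cast_pow, ← Complex.natCast_cpow_natCast_mul, ← Complex.cpow_natCast,
      ← Complex.cpow_add _ _ hq]
    push_cast
    ring_nf
  rw [hterm]
  exact ((hasIdealZetaPole_int N hN).of_equiv e fun q => (he q).symm).comp_affine hpos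

/-- All the series of the twisted terms `leadingTerm π a`, `a : ℕ`, split with a pole of order `m`
at `1`. -/
def HasLeadingTermPole (π : R →+* ℤ) (m : ℕ) : Prop :=
  ∀ N ≠ 0, ∀ a, HasSplitPole N index (leadingTerm π a) m

theorem HasLeadingTermPole.hasIdealZetaPole {π : R →+* ℤ} {m : ℕ} (h : HasLeadingTermPole π m) :
    HasIdealZetaPole R m := by
  intro N hN
  convert h N hN 0 using 2 with I
  ext s
  rw [zetaTerm, leadingTerm, pow_zero, pow_zero, one_mul, one_mul]

theorem hasLeadingTermPole_id : HasLeadingTermPole (RingHom.id ℤ) 1 := by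
  intro N hN a
  have hF : leadingTerm (RingHom.id ℤ) a = fun I s =>
      ((index I : ℕ) : ℂ) ^ a * (((index I : ℕ) ^ (a + 1) : ℕ) : ℂ) ^ (-s) := by
    ext I s
    have hI : leadingIndex (RingHom.id ℤ) I.1 = index I := congrArg cardQuot (Ideal.map_id I.1)
    rw [leadingTerm, hI, ← pow_succ]
  rw [hF]
  exact (hasSplitPole_pnat hN a).of_equiv (Equiv.ofBijective _ bijective_index_int) fun _ => rfl

theorem IsIntExtension.hasLeadingTermPole {π : R →+* ℤ} {x : R} {ρ : R →+* R'} {π' : R' →+* ℤ}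
    (h : IsIntExtension π x ρ π') {m : ℕ} (hm : HasLeadingTermPole π' m) :
    HasLeadingTermPole π (m + 1) := by
  intro N hN a
  let F (k : ℕ+ × FiniteIndexIdeal R') (s : ℂ) : ℂ :=
    ((k.1 * leadingIndex π' k.2.1 : ℕ) : ℂ) ^ a * (((k.1 * leadingIndex π' k.2.1) ^ a *
      (k.1 * leadingIndex π' k.2.1 * index k.2) : ℕ) : ℂ) ^ (-s)
  have hF : leadingTerm π a = fun I => F (h.splitLeading I) := by
    ext I s
    rw [leadingTerm, h.index_eq_splitLeading, ← h.splitLeading_mul]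
  have hfiber (k : ℕ+ × FiniteIndexIdeal R') : Finite {I // h.splitLeading I = k} :=
    Nat.finite_of_card_ne_zero (by
      rw [h.natCard_splitLeading_fiber]
      exact leadingIndex_ne_zero π' k.2.2)
  rw [hF, add_comm]
  refine HasSplitPole.of_fiber (w' := fun k => k.1 * index k.2) (F := F) hfiber
    h.primeFactors_index_eq ?_
  have hmodulus (q n i : ℕ) :
      (q * n) ^ a * (q * n * i) = q ^ (a + 1) * (n ^ (a + 1) * i) := by ring
  have hmul : (fun k s => (Nat.card {I // h.splitLeading I = k} : ℂ) * F k s) = fun k s =>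
      ((k.1 : ℕ) : ℂ) ^ a * (((k.1 : ℕ) ^ (a + 1) : ℕ) : ℂ) ^ (-s) *
        leadingTerm π' (a + 1) k.2 s := by
    ext k s
    rw [h.natCard_splitLeading_fiber, leadingTerm]
    simp only [F]
    rw [hmodulus, Nat.cast_mul (_ ^ (a + 1)), Complex.natCast_mul_natCast_cpow]
    push_cast
    ring
  rw [hmul]
  exact (hasSplitPole_pnat hN a).mul (hm N hN (a + 1))

end IntExtension

/-! ### Overorders of `ℤ[X] / (f)` -/

open Polynomial NumberField
open FiniteIndexIdeal (index)

section Polynomial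

theorem dvd_of_dvd_C_mul {R : Type*} [CommRing R] [IsDomain R] {g : R[X]} (hg : g.Monic) {k : R}
    (hk : k ≠ 0) {p : R[X]} (h : g ∣ C k * p) : g ∣ p := by
  rw [← modByMonic_eq_zero_iff_dvd hg] at h ⊢
  rw [← smul_eq_C_mul, smul_modByMonic, smul_eq_zero] at h
  exact h.resolve_left hk

theorem exists_map_eq_natCast_mul (q : ℚ[X]) :
    ∃ n : ℕ, n ≠ 0 ∧ ∃ p : ℤ[X], p.map (Int.castRingHom ℚ) = (n : ℚ[X]) * q := by
  obtain ⟨b, hb, hbq⟩ := IsLocalization.integerNormalization_spec (nonZeroDivisors ℤ) q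
  have hbq : (IsLocalization.integerNormalization (nonZeroDivisors ℤ) q).map (Int.castRingHom ℚ) =
      (b : ℚ[X]) * q := by
    rw [← zsmul_eq_mul]
    exact hbq
  have hb₀ : b ≠ 0 := nonZeroDivisors.ne_zero hb
  obtain ⟨n, rfl | rfl⟩ := b.eq_nat_or_neg
  · exact ⟨n, by simpa using hb₀, _, by simpa using hbq⟩
  · exact ⟨n, by simpa using hb₀, -IsLocalization.integerNormalization (nonZeroDivisors ℤ) q,
      by simp [hbq]⟩

theorem exists_mul_add_mul_eq_natCast {g h : ℤ[X]}
    (hgh : IsCoprime (g.map (Int.castRingHom ℚ)) (h.map (Int.castRingHom ℚ))) :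
    ∃ u v : ℤ[X], ∃ n : ℕ, n ≠ 0 ∧ u * g + v * h = (n : ℤ[X]) := by
  obtain ⟨a, b, hab⟩ := hgh
  obtain ⟨k, hk, u, hu⟩ := exists_map_eq_natCast_mul a
  obtain ⟨l, hl, v, hv⟩ := exists_map_eq_natCast_mul b
  refine ⟨l * u, k * v, k * l, mul_ne_zero hk hl, ?_⟩
  apply map_injective (Int.castRingHom ℚ) Int.cast_injective
  simp only [Polynomial.map_add, Polynomial.map_mul, Polynomial.map_natCast, hu, hv, Nat.cast_mul]
  linear_combination (k * l : ℚ[X]) * hab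

theorem isCoprime_map_of_monic_of_irreducible {g h : ℤ[X]} (hg : g.Monic) (hh : h.Monic)
    (hgi : Irreducible g) (hhi : Irreducible h) (hgh : g ≠ h) :
    IsCoprime (g.map (Int.castRingHom ℚ)) (h.map (Int.castRingHom ℚ)) := by
  have hgi' : Irreducible (g.map (Int.castRingHom ℚ)) :=
    (hg.irreducible_iff_irreducible_map_fraction_map (K := ℚ)).mp hgi
  have hhi' : Irreducible (h.map (Int.castRingHom ℚ)) :=
    (hh.irreducible_iff_irreducible_map_fraction_map (K := ℚ)).mp hhi
  refine (hgi'.isCoprime_or_dvd _).resolve_right fun hdvd => hgh ?_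
  have hassoc := (hgi'.dvd_irreducible_iff_associated hhi').mp hdvd
  exact map_injective (Int.castRingHom ℚ) Int.cast_injective
    (eq_of_monic_of_associated (hg.map _) (hh.map _) hassoc)

theorem monic_of_mem_normalizedFactors {f g : ℤ[X]} (hf : f.Monic)
    (hg : g ∈ UniqueFactorizationMonoid.normalizedFactors f) : g.Monic := by
  have hunit : IsUnit g.leadingCoeff :=
    hf.isUnit_leadingCoeff_of_dvd (UniqueFactorizationMonoid.dvd_of_mem_normalizedFactors hg)
  rw [Monic, ← UniqueFactorizationMonoid.normalize_normalized_factor g hg, leadingCoeff_normalize,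
    normalize_eq_one.mpr hunit]

end Polynomial

section Overorder

theorem finite_quotient_of_exists_nsmul_mem {R M : Type*} [Ring R] [AddCommGroup M] [Module R M]
    [Module.Finite ℤ M] (A : Submodule R M) (hA : ∀ y : M, ∃ n : ℕ, n ≠ 0 ∧ n • y ∈ A) :
    Finite (M ⧸ A) := by
  have : Module.Finite ℤ (M ⧸ A) :=
    Module.Finite.of_surjective A.mkQ.toAddMonoidHom.toIntLinearMap A.mkQ_surjective
  refine Module.finite_of_fg_torsion _ fun y => ?_
  obtain ⟨y, rfl⟩ := A.mkQ_surjective y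
  obtain ⟨n, hn, hny⟩ := hA y
  refine ⟨⟨n, mem_nonZeroDivisors_of_ne_zero (Nat.cast_ne_zero.mpr hn)⟩, ?_⟩
  change (n : ℤ) • A.mkQ y = 0
  rw [natCast_zsmul, ← map_nsmul]
  exact (Submodule.Quotient.mk_eq_zero A).mpr hny

theorem finite_quotient_span_natCast {O : Type*} [CommRing O] [Module.Finite ℤ O] {n : ℕ}
    (hn : n ≠ 0) : Finite (O ⧸ Ideal.span {(n : O)}) :=
  finite_quotient_of_exists_nsmul_mem (Ideal.span {(n : O)}) fun y => ⟨n, hn, by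
    rw [nsmul_eq_mul]
    exact Ideal.mul_mem_right y _ (Ideal.mem_span_singleton_self _)⟩

variable {O O' : Type*} [CommRing O] [CommRing O']

/-- The homomorphism `φ` embeds `ℤ[X] / (g)` into an order `O`, possibly not a domain, as a subring
containing `N O`. -/
structure IsOverorder (φ : ℤ[X] →+* O) (g : ℤ[X]) (N : ℕ) : Prop where
  finite : Module.Finite ℤ O
  isAddTorsionFree : IsAddTorsionFree O
  apply_eq_zero_iff (p : ℤ[X]) : φ p = 0 ↔ g ∣ p
  ne_zero : N ≠ 0
  exists_apply_eq_mul (y : O) : ∃ p, φ p = N * y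

theorem isOverorder_of_surjective {φ : ℤ[X] →+* O} (hφ : Function.Surjective φ) {g : ℤ[X]}
    (hg : g.Monic) (hφg : ∀ p, φ p = 0 ↔ g ∣ p) : IsOverorder φ g 1 where
  finite := by
    have : Module.Finite ℤ (ℤ[X] ⧸ Ideal.span {g}) := hg.finite_quotient
    have hker (p : ℤ[X]) (hp : p ∈ Ideal.span {g}) : φ p = 0 :=
      (hφg p).mpr (Ideal.mem_span_singleton.mp hp)
    exact Module.Finite.of_surjective
      (Ideal.Quotient.lift (Ideal.span {g}) φ hker).toAddMonoidHom.toIntLinearMap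
      (Ideal.Quotient.lift_surjective_of_surjective _ hker hφ)
  isAddTorsionFree := by
    refine ⟨fun n hn => (injective_iff_map_eq_zero (nsmulAddMonoidHom n : O →+ O)).mpr
      fun y hy => ?_⟩
    obtain ⟨p, rfl⟩ := hφ y
    rw [nsmulAddMonoidHom_apply, ← map_nsmul, hφg, nsmul_eq_mul] at hy
    exact (hφg p).mpr (dvd_of_dvd_C_mul hg (Int.natCast_ne_zero.mpr hn) (by simpa using hy))
  apply_eq_zero_iff := hφg
  ne_zero := one_ne_zero
  exists_apply_eq_mul y := by simpa using hφ y

theorem IsOverorder.prod {φ : ℤ[X] →+* O} {φ' : ℤ[X] →+* O'} {g h u v : ℤ[X]} {N N' n : ℕ}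
    (hφ : IsOverorder φ g N) (hφ' : IsOverorder φ' h N') (hg : g.Monic) (hh : h.Monic)
    (hn : n ≠ 0) (huv : u * g + v * h = (n : ℤ[X])) :
    IsOverorder (φ.prod φ') (g * h) (n * N * N') where
  finite := have := hφ.finite; have := hφ'.finite; inferInstance
  isAddTorsionFree := ⟨fun k hk _ _ hxy => Prod.ext
    (hφ.isAddTorsionFree.nsmul_right_injective hk (congrArg Prod.fst hxy))
    (hφ'.isAddTorsionFree.nsmul_right_injective hk (congrArg Prod.snd hxy))⟩
  apply_eq_zero_iff p := by
    rw [RingHom.prod_apply, Prod.mk_eq_zero, hφ.apply_eq_zero_iff, hφ'.apply_eq_zero_iff]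
    refine ⟨?_, fun hdvd => ⟨dvd_of_mul_right_dvd hdvd, dvd_of_mul_left_dvd hdvd⟩⟩
    rintro ⟨⟨a, ha⟩, ⟨b, hb⟩⟩
    refine dvd_of_dvd_C_mul (hg.mul hh) (Int.natCast_ne_zero.mpr hn) ⟨u * b + v * a, ?_⟩
    rw [eq_intCast, Int.cast_natCast, ← huv]
    linear_combination u * g * hb + v * h * ha
  ne_zero := mul_ne_zero (mul_ne_zero hn hφ.ne_zero) hφ'.ne_zero
  exists_apply_eq_mul := by
    rintro ⟨a, b⟩
    obtain ⟨p, hp⟩ := hφ.exists_apply_eq_mul a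
    obtain ⟨q, hq⟩ := hφ'.exists_apply_eq_mul b
    have hφg := (hφ.apply_eq_zero_iff g).mpr dvd_rfl
    have hφh := (hφ'.apply_eq_zero_iff h).mpr dvd_rfl
    have hv : φ v * φ h = n := by simpa [hφg] using congrArg φ huv
    have hu : φ' u * φ' g = n := by simpa [hφh] using congrArg φ' huv
    refine ⟨v * h * (N' * p) + u * g * (N * q), ?_⟩
    rw [RingHom.prod_apply]
    refine Prod.ext ?_ ?_
    · simp only [map_add, map_mul, map_natCast, hφg, hv, hp, Prod.fst_mul, Prod.fst_natCast,
        Nat.cast_mul]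
      ring
    · simp only [map_add, map_mul, map_natCast, hφh, hu, hq, Prod.snd_mul, Prod.snd_natCast,
        Nat.cast_mul]
      ring

theorem IsOverorder.hasSplitPole {φ : ℤ[X] →+* O} {g : ℤ[X]} {N m : ℕ} (hφ : IsOverorder φ g N)
    (h : HasIdealZetaPole O m) :
    HasSplitPole N (index (R := ℤ[X] ⧸ Ideal.span {g})) (zetaTerm index) m := by
  have := hφ.finite
  have := hφ.isAddTorsionFree
  have : Finite (O ⧸ Ideal.span {(N : O)}) := finite_quotient_span_natCast hφ.ne_zero
  have hker (p : ℤ[X]) (hp : p ∈ Ideal.span {g}) : φ p = 0 :=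
    (hφ.apply_eq_zero_iff p).mpr (Ideal.mem_span_singleton.mp hp)
  refine (h N hφ.ne_zero).of_injective_ringHom (φ := Ideal.Quotient.lift (Ideal.span {g}) φ hker)
    hφ.ne_zero ?_ (fun y => ?_) fun y hy => ?_
  · refine RingHom.lift_injective_of_ker_le_ideal _ hker fun p hp => ?_
    exact Ideal.mem_span_singleton.mpr ((hφ.apply_eq_zero_iff p).mp hp)
  · obtain ⟨p, hp⟩ := hφ.exists_apply_eq_mul y
    exact ⟨Ideal.Quotient.mk _ p, hp⟩
  · rw [← nsmul_eq_mul] at hy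
    exact (nsmul_eq_zero_iff_right hφ.ne_zero).mp hy

end Overorder

section PowLinear

variable {R R' : Type*} [CommRing R] [CommRing R']

theorem isIntExtension_of_pow_succ {a : ℤ} {e : ℕ} {φ : ℤ[X] →+* R} {φ' : ℤ[X] →+* R'}
    {ρ : R →+* R'} {π : R →+* ℤ} {π' : R' →+* ℤ} (hφ : Function.Surjective φ)
    (hφ' : Function.Surjective φ') (hφe : ∀ p, φ p = 0 ↔ (X - C a) ^ (e + 2) ∣ p)
    (hφe' : ∀ p, φ' p = 0 ↔ (X - C a) ^ (e + 1) ∣ p) (hρ : ∀ p, ρ (φ p) = φ' p)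
    (hπ : ∀ p, π (φ p) = p.eval a) (hπ' : ∀ p, π' (φ' p) = p.eval a) :
    IsIntExtension π (φ (X - C a)) ρ π' where
  apply_eq_zero_iff r := by
    obtain ⟨p, rfl⟩ := hφ r
    rw [hπ]
    refine ⟨fun hp => map_dvd φ (dvd_iff_isRoot.mpr hp), ?_⟩
    rintro ⟨q, hq⟩
    obtain ⟨q, rfl⟩ := hφ q
    rw [← hπ, hq, ← map_mul, hπ]
    simp
  surjective y := by
    obtain ⟨p, rfl⟩ := hφ' y
    exact ⟨φ p, hρ p⟩
  eq_zero_iff_mul_eq_zero r := by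
    obtain ⟨p, rfl⟩ := hφ r
    rw [hρ, hφe', ← map_mul, hφe, pow_succ' _ (e + 1), mul_dvd_mul_iff_left (X_sub_C_ne_zero a)]
  comp_apply r := by
    obtain ⟨p, rfl⟩ := hφ r
    rw [hρ, hπ, hπ']

theorem exists_hasLeadingTermPole (a : ℤ) (e : ℕ) : ∃ (R : Type) (_ : CommRing R) (φ : ℤ[X] →+* R)
    (π : R →+* ℤ), Function.Surjective φ ∧ (∀ p, φ p = 0 ↔ (X - C a) ^ (e + 1) ∣ p) ∧
      (∀ p, π (φ p) = p.eval a) ∧ HasLeadingTermPole π (e + 1) := by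
  induction e with
  | zero =>
    refine ⟨ℤ, inferInstance, evalRingHom a, RingHom.id ℤ, fun n => ⟨C n, by simp⟩, fun p => ?_,
      fun _ => rfl, hasLeadingTermPole_id⟩
    rw [zero_add, pow_one, dvd_iff_isRoot]
    rfl
  | succ e ih =>
    obtain ⟨R', _, φ', π', hφ', hφe', hπ', hpole⟩ := ih
    let I := Ideal.span {(X - C a : ℤ[X]) ^ (e + 2)}
    have hφ (p : ℤ[X]) : Ideal.Quotient.mk I p = 0 ↔ (X - C a) ^ (e + 2) ∣ p := by
      rw [Ideal.Quotient.eq_zero_iff_mem, Ideal.mem_span_singleton]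
    let ρ : ℤ[X] ⧸ I →+* R' := Ideal.Quotient.lift I φ' fun p hp =>
      (hφe' p).mpr ((pow_dvd_pow _ (Nat.le_succ _)).trans (Ideal.mem_span_singleton.mp hp))
    have hext : IsIntExtension (π'.comp ρ) (Ideal.Quotient.mk I (X - C a)) ρ π' :=
      isIntExtension_of_pow_succ Ideal.Quotient.mk_surjective hφ' hφ hφe' (fun _ => rfl) hπ' hπ'
    exact ⟨_, inferInstance, Ideal.Quotient.mk I, π'.comp ρ, Ideal.Quotient.mk_surjective, hφ, hπ',
      hext.hasLeadingTermPole hpole⟩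

end PowLinear

section HasPoleOverorder

/-- Some overorder of `ℤ[X] / (g)` has an ideal zeta function with a pole of order `m` at `1`. -/
def HasPoleOverorder (g : ℤ[X]) (m : ℕ) : Prop :=
  ∃ (O : Type) (_ : CommRing O) (φ : ℤ[X] →+* O) (N : ℕ),
    IsOverorder φ g N ∧ HasIdealZetaPole O m

theorem hasPoleOverorder_one : HasPoleOverorder 1 0 := by
  let φ : ℤ[X] →+* PUnit := ⟨⟨⟨fun _ => ⟨⟩, rfl⟩, fun _ _ => rfl⟩, rfl, fun _ _ => rfl⟩
  exact ⟨PUnit, inferInstance, φ, 1, isOverorder_of_surjective (fun _ => ⟨0, rfl⟩) monic_one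
    fun p => ⟨fun _ => one_dvd p, fun _ => rfl⟩, HasIdealZetaPole.of_subsingleton⟩

theorem HasPoleOverorder.mul {g h : ℤ[X]} {m n : ℕ} (hgm : HasPoleOverorder g m)
    (hhn : HasPoleOverorder h n) (hg : g.Monic) (hh : h.Monic)
    (hgh : IsCoprime (g.map (Int.castRingHom ℚ)) (h.map (Int.castRingHom ℚ))) :
    HasPoleOverorder (g * h) (m + n) := by
  obtain ⟨u, v, k, hk, huv⟩ := exists_mul_add_mul_eq_natCast hgh
  obtain ⟨O, _, φ, N, hφ, hO⟩ := hgm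
  obtain ⟨O', _, φ', N', hφ', hO'⟩ := hhn
  exact ⟨O × O', inferInstance, _, _, hφ.prod hφ' hg hh hk huv, hO.prod hO'⟩

theorem hasPoleOverorder_X_sub_C_pow (a : ℤ) (e : ℕ) : HasPoleOverorder ((X - C a) ^ e) e := by
  rcases e with - | e
  · rw [pow_zero]
    exact hasPoleOverorder_one
  · obtain ⟨R, _, φ, π, hφ, hφe, -, hpole⟩ := exists_hasLeadingTermPole a e
    exact ⟨R, inferInstance, φ, 1,
      isOverorder_of_surjective hφ ((monic_X_sub_C a).pow _) hφe, hpole.hasIdealZetaPole⟩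

theorem exists_isOverorder_minpoly {K : Type*} [Field K] [NumberField K] (α : 𝓞 K)
    (hα : Algebra.adjoin ℚ {(α : K)} = ⊤) :
    ∃ N, IsOverorder (aeval α : ℤ[X] →ₐ[ℤ] 𝓞 K).toRingHom (minpoly ℤ α) N := by
  let A : Submodule ℤ (𝓞 K) := LinearMap.range (aeval α : ℤ[X] →ₐ[ℤ] 𝓞 K).toLinearMap
  have hA (y : 𝓞 K) : ∃ n : ℕ, n ≠ 0 ∧ n • y ∈ A := by
    have hy : (y : K) ∈ Algebra.adjoin ℚ {(α : K)} := hα ▸ Algebra.mem_top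
    obtain ⟨q, hq⟩ := Algebra.adjoin_singleton_eq_range_aeval ℚ (α : K) ▸ hy
    obtain ⟨n, hn, p, hp⟩ := exists_map_eq_natCast_mul q
    refine ⟨n, hn, p, RingOfIntegers.coe_injective ?_⟩
    have hpα : aeval (α : K) p = n * y := by
      rw [← aeval_map_algebraMap ℚ, algebraMap_int_eq, hp, map_mul, map_natCast]
      exact congrArg _ hq
    change algebraMap (𝓞 K) K (aeval α p) = algebraMap (𝓞 K) K (n • y)
    rw [← aeval_algebraMap_apply, hpα, map_nsmul, nsmul_eq_mul]
  have := finite_quotient_of_exists_nsmul_mem A hA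
  exact ⟨Nat.card (𝓞 K ⧸ A),
    { finite := inferInstance
      isAddTorsionFree := inferInstance
      apply_eq_zero_iff := minpoly.isIntegrallyClosed_dvd_iff (Algebra.IsIntegral.isIntegral α)
      ne_zero := Nat.card_pos.ne'
      exists_apply_eq_mul := fun y => by
        have hy : A.mkQ (Nat.card (𝓞 K ⧸ A) • y) = 0 := by
          rw [map_nsmul, card_nsmul_eq_zero']
        obtain ⟨p, hp⟩ := (Submodule.Quotient.mk_eq_zero A).mp hy
        exact ⟨p, hp.trans (nsmul_eq_mul _ _)⟩ }⟩

theorem hasPoleOverorder_of_irreducible {g : ℤ[X]} (hg : g.Monic) (hgi : Irreducible g) :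
    HasPoleOverorder g 1 := by
  have hgQ : (g.map (Int.castRingHom ℚ)).Monic := hg.map _
  have : Fact (Irreducible (g.map (Int.castRingHom ℚ))) :=
    ⟨(hg.irreducible_iff_irreducible_map_fraction_map (K := ℚ)).mp hgi⟩
  let K := AdjoinRoot (g.map (Int.castRingHom ℚ))
  have : FiniteDimensional ℚ K := hgQ.finite_adjoinRoot
  have : CharZero K := algebraRat.charZero K
  have : NumberField K := ⟨⟩
  let r : K := AdjoinRoot.root _
  have hr : aeval r g = 0 := by
    rw [← aeval_map_algebraMap ℚ]
    exact (AdjoinRoot.aeval_eq _).trans AdjoinRoot.mk_self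
  let α : 𝓞 K := ⟨r, g, hg, hr⟩
  have hα : IsIntegral ℤ α := Algebra.IsIntegral.isIntegral α
  obtain ⟨N, hN⟩ := exists_isOverorder_minpoly α AdjoinRoot.adjoinRoot_eq_top
  have hαg : aeval α g = 0 := RingOfIntegers.coe_injective
    ((aeval_algebraMap_apply K α g).symm.trans (hr.trans (map_zero _).symm))
  have hassoc : Associated (minpoly ℤ α) g :=
    (minpoly.irreducible hα).associated_of_dvd hgi (minpoly.isIntegrallyClosed_dvd hα hαg)
  rw [← eq_of_monic_of_associated (minpoly.monic hα) hg hassoc]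
  exact ⟨𝓞 K, inferInstance, _, N, hN, hasIdealZetaPole_ringOfIntegers K⟩

theorem hasPoleOverorder_pow {g : ℤ[X]} (hg : g.Monic) (hgi : Irreducible g) {e : ℕ}
    (he : g.natDegree = 1 ∨ e = 1) : HasPoleOverorder (g ^ e) e := by
  rcases he with hdeg | rfl
  · rw [hg.eq_X_add_C hdeg, ← sub_neg_eq_add, ← C_neg]
    exact hasPoleOverorder_X_sub_C_pow _ e
  · rw [pow_one]
    exact hasPoleOverorder_of_irreducible hg hgi

theorem hasPoleOverorder_prod_pow (T : Finset ℤ[X]) (e : ℤ[X] → ℕ)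
    (hT : ∀ g ∈ T, g.Monic ∧ Irreducible g ∧ (g.natDegree = 1 ∨ e g = 1)) :
    HasPoleOverorder (∏ g ∈ T, g ^ e g) (∑ g ∈ T, e g) := by
  induction T using Finset.cons_induction with
  | empty => exact hasPoleOverorder_one
  | cons g T hgT ih =>
    rw [Finset.prod_cons, Finset.sum_cons]
    obtain ⟨⟨hg, hgi, he⟩, hT⟩ := Finset.forall_mem_cons hgT _ |>.mp hT
    refine (hasPoleOverorder_pow hg hgi he).mul (ih hT) (hg.pow _)
      (monic_prod_of_monic _ _ fun h hh => (hT h hh).1.pow _) ?_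
    simp only [Polynomial.map_prod, Polynomial.map_pow]
    refine IsCoprime.prod_right fun h hh => IsCoprime.pow ?_
    exact isCoprime_map_of_monic_of_irreducible hg (hT h hh).1 hgi (hT h hh).2.1
      (ne_of_mem_of_not_mem hh hgT).symm

theorem hasPoleOverorder_card_factors {f : ℤ[X]} (hf : f.Monic)
    (hsq : ∀ g, Irreducible g → g ^ 2 ∣ f → g.natDegree = 1) :
    HasPoleOverorder f (UniqueFactorizationMonoid.factors f).card := by
  classical
  set S := UniqueFactorizationMonoid.normalizedFactors f with hS
  have hcard : S.card = (UniqueFactorizationMonoid.factors f).card := by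
    rw [hS, UniqueFactorizationMonoid.normalizedFactors, Multiset.card_map]
  have hmonic (g : ℤ[X]) (hg : g ∈ S) : g.Monic := monic_of_mem_normalizedFactors hf hg
  have hirr (g : ℤ[X]) (hg : g ∈ S) : Irreducible g :=
    UniqueFactorizationMonoid.irreducible_of_normalized_factor g hg
  have hprod : S.prod = f := by
    have hSmonic : S.prod.Monic := by simpa using monic_multiset_prod_of_monic S id hmonic
    exact eq_of_monic_of_associated hSmonic hf
      (UniqueFactorizationMonoid.prod_normalizedFactors hf.ne_zero)
  have hpole := hasPoleOverorder_prod_pow S.toFinset (S.count ·) fun g hg => by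
    rw [Multiset.mem_toFinset] at hg
    refine ⟨hmonic g hg, hirr g hg, or_iff_not_imp_right.mpr fun hne => hsq g (hirr g hg) ?_⟩
    have htwo : 2 ≤ S.count g := by
      have := Multiset.one_le_count_iff_mem.mpr hg
      lia
    rw [← hprod, Finset.prod_multiset_count]
    exact (pow_dvd_pow g htwo).trans
      (Finset.dvd_prod_of_mem (fun g => g ^ S.count g) (Multiset.mem_toFinset.mpr hg))
  rwa [← Finset.prod_multiset_count, Multiset.toFinset_sum_count_eq, hprod, hcard] at hpole

theorem HasPoleOverorder.hasPoleAtOne_idealCount {f : ℤ[X]} {m : ℕ} (h : HasPoleOverorder f m)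
    (hf : f.Monic) : HasPoleAtOne
      (fun (k : ℕ+) s => (idealCount (ℤ[X] ⧸ Ideal.span {f}) k : ℂ) / (k : ℂ) ^ s) m := by
  obtain ⟨O, _, φ, N, hφ, hO⟩ := h
  have : Module.Finite ℤ (ℤ[X] ⧸ Ideal.span {f}) := hf.finite_quotient
  exact (hφ.hasSplitPole hO).hasPoleAtOne_index.idealCount fun k =>
    finite_quotient_span_natCast k.ne_zero

theorem natDegree_eq_one_of_sq_dvd {f g : ℤ[X]} (hf : f.Monic) (hdeg : f.natDegree ≤ 3)
    (hg : Irreducible g) (hgf : g ^ 2 ∣ f) : g.natDegree = 1 := by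
  have hpos : 0 < g.natDegree :=
    natDegree_pos_of_not_isUnit_of_dvd_monic hf hg.not_isUnit (dvd_of_mul_right_dvd (sq g ▸ hgf))
  have hle := natDegree_le_of_dvd hgf hf.ne_zero
  rw [natDegree_pow] at hle
  lia

end HasPoleOverorder

end IdealZeta

theorem ideal_zeta_cubic_pole_order_general (f : Polynomial ℤ) (hmonic : f.Monic)
    (hsq : ∀ g, Irreducible g → g ^ 2 ∣ f → g.natDegree = 1) (m : ℕ)
    (hm : m = Multiset.card (UniqueFactorizationMonoid.factors f)) :
    ∃ δ > (0 : ℝ), ∃ g : ℂ → ℂ,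
      DifferentiableOn ℂ g {s : ℂ | 1 - δ < s.re} ∧ g 1 ≠ 0 ∧
      ∀ s : ℂ, 1 < s.re →
        HasSum
          (fun k : ℕ+ =>
            (idealCount (Polynomial ℤ ⧸ Ideal.span {f}) k : ℂ) / (k : ℂ) ^ s)
          (g s / (s - 1) ^ m) :=
  hm ▸ (IdealZeta.hasPoleOverorder_card_factors hmonic hsq).hasPoleAtOne_idealCount hmonic

/-- For a monic cubic `f ∈ ℤ[X]`, the ideal zeta function of `ℤ[X]/(f)` converges for
`Re s > 1` and has a pole at `s = 1` of order equal to the number of irreducible factors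
of `f` counted with multiplicity. -/
theorem ideal_zeta_cubic_pole_order (f : Polynomial ℤ) (hmonic : f.Monic)
    (hdeg : f.natDegree = 3) (m : ℕ)
    (hm : m = Multiset.card (UniqueFactorizationMonoid.factors f)) :
    ∃ δ > (0 : ℝ), ∃ g : ℂ → ℂ,
      DifferentiableOn ℂ g {s : ℂ | 1 - δ < s.re} ∧ g 1 ≠ 0 ∧
      ∀ s : ℂ, 1 < s.re →
        HasSum
          (fun k : ℕ+ =>
            (idealCount (Polynomial ℤ ⧸ Ideal.span {f}) k : ℂ) / (k : ℂ) ^ s)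
          (g s / (s - 1) ^ m) :=
  ideal_zeta_cubic_pole_order_general f hmonic
    (fun _ => IdealZeta.natDegree_eq_one_of_sq_dvd hmonic hdeg.le) m hm
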